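/- arXiv:0811.1023 — 3 statements merged into one kernel-verified Lean document; each statement's English description precedes it below -/
import Mathlib

section
/- Let K be an algebraically closed field of characteristic zero and R = K[x,y,z]. Let I = (x^a, y^b, z^c, x^α y^β z^γ) with 0 ≤ α < a, 0 ≤ β < b, 0 ≤ γ < c, and assume I is not a complete intersection. If R/I fails to have the WLP, then a + b + c + α + β + γ ≡ 0 (mod 3). -/
section
open MvPolynomial

noncomputable def component (r : ℕ) (K : Type*) [Field K]
    (I : Ideal (MvPolynomial (Fin r) K)) (d : ℕ) :
    Submodule K (MvPolynomial (Fin r) K ⧸ I) :=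
  (MvPolynomial.homogeneousSubmodule (Fin r) K d).map
    (Ideal.Quotient.mkₐ K I).toLinearMap

noncomputable def hilb (r : ℕ) (K : Type*) [Field K]
    (I : Ideal (MvPolynomial (Fin r) K)) (d : ℕ) : ℕ :=
  Module.finrank K (component r K I d)

/-- Injectivity of the multiplication map `×L : (R/I)_d → (R/I)_{d+1}`. -/
def mulMapInj (r : ℕ) (K : Type*) [Field K]
    (I : Ideal (MvPolynomial (Fin r) K)) (L : MvPolynomial (Fin r) K) (d : ℕ) : Prop :=
  ∀ a ∈ component r K I d, Ideal.Quotient.mk I L * a = 0 → a = 0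

/-- Surjectivity of the multiplication map `×L : (R/I)_d → (R/I)_{d+1}`. -/
def mulMapSurj (r : ℕ) (K : Type*) [Field K]
    (I : Ideal (MvPolynomial (Fin r) K)) (L : MvPolynomial (Fin r) K) (d : ℕ) : Prop :=
  ∀ b ∈ component r K I (d + 1), ∃ a ∈ component r K I d, Ideal.Quotient.mk I L * a = b

/-- `L` is a Lefschetz element: a linear form for which every multiplication map
`×L : (R/I)_d → (R/I)_{d+1}` has maximal rank (is injective or surjective). -/
def isLefschetzElem (r : ℕ) (K : Type*) [Field K]
    (I : Ideal (MvPolynomial (Fin r) K)) (L : MvPolynomial (Fin r) K) : Prop :=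
  L ∈ MvPolynomial.homogeneousSubmodule (Fin r) K 1 ∧
    ∀ d : ℕ, mulMapInj r K I L d ∨ mulMapSurj r K I L d

/-- The Weak Lefschetz Property. -/
def hasWLP (r : ℕ) (K : Type*) [Field K] (I : Ideal (MvPolynomial (Fin r) K)) : Prop :=
  ∃ L, isLefschetzElem r K I L

end

open Polynomial in
theorem aux_dep2 {K : Type*} [Field K] [CharZero K] (p q : K[X])
    (h : p * derivative q = derivative p * q) :
    ∃ u v : K, (u ≠ 0 ∨ v ≠ 0) ∧ C u * p + C v * q = 0 := by
  classical
  by_cases hq : q = 0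
  · exact ⟨0, 1, by simp, by simp [hq]⟩
  obtain ⟨p1, q1, hp, hq', hc⟩ : ∃ p1 q1, p = EuclideanDomain.gcd p q * p1 ∧
      q = EuclideanDomain.gcd p q * q1 ∧ IsCoprime p1 q1 := by
    have hg0 : EuclideanDomain.gcd p q ≠ 0 := by
      intro h0; exact hq (EuclideanDomain.gcd_eq_zero_iff.1 h0).2
    obtain ⟨p1, hp1⟩ := EuclideanDomain.gcd_dvd_left p q
    obtain ⟨q1, hq1⟩ := EuclideanDomain.gcd_dvd_right p q
    refine ⟨p1, q1, hp1, hq1, EuclideanDomain.gcdA p q, EuclideanDomain.gcdB p q, ?_⟩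
    apply mul_left_cancel₀ hg0
    have := EuclideanDomain.gcd_eq_gcd_ab p q
    linear_combination -this - EuclideanDomain.gcdA p q * hp1 - EuclideanDomain.gcdB p q * hq1
  set g := EuclideanDomain.gcd p q with hg
  have hg0 : g ≠ 0 := by
    intro h0; apply hq; rw [hq', h0, zero_mul]
  have hw : wronskian p1 q1 = 0 := by
    have : g ^ 2 * wronskian p1 q1 = 0 := by
      rw [hp, hq'] at h
      simp only [derivative_mul] at h
      unfold wronskian
      linear_combination h
    simpa [hg0] using this
  rw [hc.wronskian_eq_zero_iff] at hw
  obtain ⟨u, hu⟩ := natDegree_eq_zero.1 (derivative_eq_zero.1 hw.1)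
  obtain ⟨v, hv⟩ := natDegree_eq_zero.1 (derivative_eq_zero.1 hw.2)
  refine ⟨v, -u, Or.inl ?_, ?_⟩
  · rintro rfl
    apply hq; rw [hq', ← hv]; simp
  · rw [hp, hq', ← hu, ← hv]
    simp only [map_neg]; ring

open Polynomial in
/-- Three solutions of a nontrivial second order linear ODE are linearly dependent. -/
theorem aux_dep3 {K : Type*} [Field K] [CharZero K] (Q0 Q1 Q2 s r u : K[X])
    (hne : s ≠ 0 ∨ r ≠ 0 ∨ u ≠ 0)
    (h0 : s * Q0 + r * derivative Q0 + u * derivative (derivative Q0) = 0)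
    (h1 : s * Q1 + r * derivative Q1 + u * derivative (derivative Q1) = 0)
    (h2 : s * Q2 + r * derivative Q2 + u * derivative (derivative Q2) = 0) :
    ∃ c0 c1 c2 : K, (c0 ≠ 0 ∨ c1 ≠ 0 ∨ c2 ≠ 0) ∧ C c0 * Q0 + C c1 * Q1 + C c2 * Q2 = 0 := by
  by_cases hu : u = 0
  · subst hu
    by_cases hr : r = 0
    · subst hr
      have hs : s ≠ 0 := by simpa using hne
      have : Q0 = 0 := by simpa [hs] using h0
      exact ⟨1, 0, 0, by simp, by simp [this]⟩
    · have : r * (Q0 * derivative Q1 - derivative Q0 * Q1) = 0 := by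
        linear_combination Q0 * h1 - Q1 * h0
      have h := sub_eq_zero.1 ((mul_eq_zero.1 this).resolve_left hr)
      obtain ⟨a, b, hab, h⟩ := aux_dep2 _ _ h
      exact ⟨a, b, 0, by tauto, by simpa using h⟩
  · have e1 : u * (Q0 * derivative (derivative Q1) - derivative (derivative Q0) * Q1)
        = - r * (Q0 * derivative Q1 - derivative Q0 * Q1) := by
      linear_combination Q0 * h1 - Q1 * h0
    have e2 : u * (Q0 * derivative (derivative Q2) - derivative (derivative Q0) * Q2)
        = - r * (Q0 * derivative Q2 - derivative Q0 * Q2) := by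
      linear_combination Q0 * h2 - Q2 * h0
    have hw : (Q0 * derivative Q1 - derivative Q0 * Q1) *
        derivative (Q0 * derivative Q2 - derivative Q0 * Q2) =
        derivative (Q0 * derivative Q1 - derivative Q0 * Q1) *
        (Q0 * derivative Q2 - derivative Q0 * Q2) := by
      apply mul_left_cancel₀ hu
      simp only [derivative_sub, derivative_mul]
      linear_combination (Q0 * derivative Q1 - derivative Q0 * Q1) * e2 -
        (Q0 * derivative Q2 - derivative Q0 * Q2) * e1
    obtain ⟨a, b, hab, h⟩ := aux_dep2 _ _ hw
    have hw2 : Q0 * derivative (C a * Q1 + C b * Q2) = derivative Q0 * (C a * Q1 + C b * Q2) := by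
      simp only [derivative_add, derivative_mul, derivative_C, zero_mul, zero_add]
      linear_combination h
    obtain ⟨x, y, hxy, h⟩ := aux_dep2 _ _ hw2
    by_cases hy : y = 0
    · subst hy
      refine ⟨x, 0, 0, by simpa using hxy, by simpa using h⟩
    · refine ⟨x, y * a, y * b, ?_, ?_⟩
      · rcases hab with h | h
        · right; left; exact mul_ne_zero hy h
        · right; right; exact mul_ne_zero hy h
      · simp only [C_mul]; linear_combination h

open Polynomial in
/-- Four vectors in a syzygy module of rank three are linearly dependent. -/
theorem aux_rel {K : Type*} [Field K] (f : Fin 4 → K[X]) (hf : f ≠ 0)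
    (v : Fin 4 → Fin 4 → K[X]) (hv : ∀ m, ∑ k, f k * v m k = 0) :
    ∃ g : Fin 4 → K[X], g ≠ 0 ∧ ∀ k, ∑ m, g m * v m k = 0 := by
  have h1 : Matrix.det (Matrix.of fun k m => v m k) = 0 := by
    apply Matrix.exists_vecMul_eq_zero_iff.1
    refine ⟨f, hf, ?_⟩
    ext1 m
    simpa [Matrix.vecMul, dotProduct] using hv m
  obtain ⟨g, hg, h⟩ := Matrix.exists_mulVec_eq_zero_iff.2 h1
  refine ⟨g, hg, fun k => ?_⟩
  have := congrFun h k
  simpa [Matrix.mulVec, dotProduct, mul_comm] using this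

open Polynomial in
/-- `auxU ψ f` is the polynomial part of `f * ∑ ψ(X^n) X^(-n-1)`. -/
noncomputable def auxU {K : Type*} [Field K] (ψ : K[X] →ₗ[K] K) : K[X] →ₗ[K] K[X] :=
  (Polynomial.basisMonomials K).constr K
    (fun n => ∑ i ∈ Finset.range n, C (ψ (X ^ (n - 1 - i))) * X ^ i)

open Polynomial in
theorem auxU_X_pow {K : Type*} [Field K] (ψ : K[X] →ₗ[K] K) (n : ℕ) :
    auxU ψ (X ^ n) = ∑ i ∈ Finset.range n, C (ψ (X ^ (n - 1 - i))) * X ^ i := by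
  have := (Polynomial.basisMonomials K).constr_basis K
    (fun n => ∑ i ∈ Finset.range n, C (ψ (X ^ (n - 1 - i))) * X ^ i) n
  rw [← this, auxU]; simp [X_pow_eq_monomial]

open Polynomial in
theorem auxU_one {K : Type*} [Field K] (ψ : K[X] →ₗ[K] K) : auxU ψ 1 = 0 := by
  have := auxU_X_pow ψ 0
  simpa using this

open Polynomial in
theorem aux_lin_ext {K V : Type*} [Field K] [AddCommGroup V] [Module K V] (A B : K[X] →ₗ[K] V)
    (h : ∀ n, A (X ^ n) = B (X ^ n)) (f : K[X]) : A f = B f := by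
  have : A = B := by
    apply Polynomial.lhom_ext'
    intro n
    ext
    simp only [LinearMap.comp_apply]
    rw [← C_mul_X_pow_eq_monomial, ← smul_eq_C_mul, map_smul, map_smul, h]
  rw [this]

open Polynomial in
theorem auxU_X_mul {K : Type*} [Field K] (ψ : K[X] →ₗ[K] K) (f : K[X]) :
    auxU ψ (X * f) = X * auxU ψ f + C (ψ f) := by
  refine aux_lin_ext ((auxU ψ).comp (LinearMap.mulLeft K X))
    ((LinearMap.mulLeft K X).comp (auxU ψ) + (Algebra.linearMap K K[X]).comp ψ) ?_ f
  intro n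
  simp only [LinearMap.comp_apply, LinearMap.mulLeft_apply, LinearMap.add_apply,
    Algebra.linearMap_apply]
  rw [← pow_succ', auxU_X_pow, auxU_X_pow, Finset.sum_range_succ', Finset.mul_sum]
  congr 1
  · apply Finset.sum_congr rfl
    intro i hi
    rw [show n + 1 - 1 - (i + 1) = n - 1 - i by omega]; ring
  · simp

open Polynomial in
theorem auxU_sub_smul {K : Type*} [Field K] (ψ ψprime : K[X] →ₗ[K] K) (c : K) (f : K[X]) :
    auxU (ψ - c • ψprime) f = auxU ψ f - C c * auxU ψprime f := by
  refine aux_lin_ext (auxU (ψ - c • ψprime)) (auxU ψ - (LinearMap.mulLeft K (C c)).comp (auxU ψprime)) ?_ f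
  intro n
  simp only [LinearMap.comp_apply, LinearMap.mulLeft_apply, LinearMap.sub_apply, auxU_X_pow,
    Finset.mul_sum, LinearMap.smul_apply, smul_eq_mul, C_sub, C_mul]
  rw [← Finset.sum_sub_distrib]
  apply Finset.sum_congr rfl
  intros; ring

open Polynomial in
theorem aux_mem_degreeLT_succ {K : Type*} [Field K] {n : ℕ} {p : K[X]}
    (hp : p ∈ degreeLT K (n + 1)) : ∃ (c : K) (q : K[X]), q ∈ degreeLT K n ∧
      p = q + C c * X ^ n := by
  refine ⟨p.coeff n, p - C (p.coeff n) * X ^ n, ?_, by ring⟩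
  rw [mem_degreeLT, degree_lt_iff_coeff_zero] at *
  intro m hm
  rcases hm.eq_or_lt with rfl | hm
  · simp
  · simp [coeff_X_pow, hp m hm, hm.ne']

open Polynomial in
theorem auxU_mul_pow {K : Type*} [Field K] (ψ : K[X] →ₗ[K] K) (f : K[X]) (N : ℕ)
    (hf : ∀ i < N, ψ (X ^ i * f) = 0) : ∀ n ≤ N, X ^ n * auxU ψ f = auxU ψ (X ^ n * f) := by
  intro n
  induction n with
  | zero => simp
  | succ n ih =>
    intro hn
    rw [pow_succ', mul_assoc, mul_assoc, auxU_X_mul, ih (by omega), hf n (by omega)]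
    simp

open Polynomial in
theorem auxU_mul {K : Type*} [Field K] (ψ : K[X] →ₗ[K] K) (f : K[X]) (N : ℕ)
    (hf : ∀ i < N, ψ (X ^ i * f) = 0) (n : ℕ) (hn : n ≤ N + 1) (p : K[X])
    (hp : p ∈ degreeLT K n) : p * auxU ψ f = auxU ψ (p * f) := by
  induction n generalizing p with
  | zero =>
    have : p = 0 := by simpa [mem_degreeLT] using hp
    simp [this]
  | succ n ih =>
    obtain ⟨c, q, hq, rfl⟩ := aux_mem_degreeLT_succ hp
    have e : C c * X ^ n * f = c • (X ^ n * f) := by rw [smul_eq_C_mul]; ring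
    rw [add_mul, add_mul, map_add, ih (by omega) q hq, e, map_smul, mul_assoc,
      auxU_mul_pow ψ f N hf n (by omega), smul_eq_C_mul]

open Polynomial in
theorem auxU_mul' {K : Type*} [Field K] (ψ : K[X] →ₗ[K] K) (f : K[X]) (N : ℕ)
    (hf : ∀ i < N, ψ (X ^ i * f) = 0) (p : K[X])
    (hp : p ∈ degreeLT K (N + 2)) : ∃ κ : K, p * auxU ψ f = auxU ψ (p * f) + C κ := by
  obtain ⟨c, q, hq, rfl⟩ := aux_mem_degreeLT_succ hp
  have e : C c * X ^ (N + 1) * f = c • (X * (X ^ N * f)) := by rw [smul_eq_C_mul]; ring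
  refine ⟨-(c * ψ (X ^ N * f)), ?_⟩
  rw [add_mul, add_mul, map_add, auxU_mul ψ f N hf (N + 1) le_rfl q hq, e, map_smul, auxU_X_mul,
    ← auxU_mul_pow ψ f N hf N le_rfl, smul_eq_C_mul]
  simp only [C_neg, C_mul]; ring

open Polynomial in
theorem aux_kill_step {K : Type*} [Field K] (ψ : K[X] →ₗ[K] K) (g : K[X]) (n : ℕ)
    (hg : g.Monic) (hn : g.natDegree = n) (h0 : ψ g = 0) (h : ∀ p ∈ degreeLT K n, ψ p = 0) :
    ∀ p ∈ degreeLT K (n + 1), ψ p = 0 := by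
  intro p hp
  have hq : p - C (p.coeff n) * g ∈ degreeLT K n := by
    rw [mem_degreeLT, degree_lt_iff_coeff_zero] at *
    intro m hm
    rcases hm.eq_or_lt with rfl | hm
    · have : g.coeff n = 1 := by rw [← hn]; exact hg
      simp [this]
    · simp [hp m hm, coeff_eq_zero_of_natDegree_lt (hn ▸ hm)]
  have := h _ hq
  rw [← smul_eq_C_mul, map_sub, map_smul, h0] at this
  simpa using this

open Polynomial in
theorem aux_kill {K : Type*} [Field K] (ψ : K[X] →ₗ[K] K) (n : ℕ) (f : K[X])
    (hf : f.Monic) (hn : f.natDegree = n) (h0 : auxU ψ f = 0) :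
    ∀ p ∈ degreeLT K n, ψ p = 0 := by
  induction n generalizing f with
  | zero =>
    intro p hp
    have : p = 0 := by simpa [mem_degreeLT] using hp
    simp [this]
  | succ n ih =>
    have e : auxU ψ f = X * auxU ψ f.divX + C (ψ f.divX) := by
      conv_lhs => rw [← X_mul_divX_add f, map_add, auxU_X_mul]
      have : auxU ψ (C (f.coeff 0)) = 0 := by
        rw [← mul_one (C (f.coeff 0)), ← smul_eq_C_mul, map_smul, auxU_one, smul_zero]
      rw [this, add_zero]
    rw [h0] at e
    have e0 : ψ f.divX = 0 := by
      have := congrArg (fun q => coeff q 0) e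
      simpa using this.symm
    have e1 : auxU ψ f.divX = 0 := by
      rw [e0] at e
      simpa using e.symm
    have hd : f.divX.natDegree = n := by rw [natDegree_divX_eq_natDegree_tsub_one, hn]; rfl
    have hm : f.divX.Monic := by
      rw [Monic, leadingCoeff, hd, coeff_divX, ← hn]; exact hf
    exact aux_kill_step ψ f.divX n hm hd e0 (ih _ hm hd e1)

open Polynomial in
theorem aux_kill_all {K : Type*} [Field K] (ψ : K[X] →ₗ[K] K) (n J : ℕ) (f : K[X])
    (hf : f.Monic) (hn : f.natDegree = n) (h0 : auxU ψ f = 0)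
    (h : ∀ i < J - n, ψ (X ^ i * f) = 0) : ∀ p ∈ degreeLT K J, ψ p = 0 := by
  have key : ∀ i ≤ J - n, ∀ p ∈ degreeLT K (n + i), ψ p = 0 := by
    intro i
    induction i with
    | zero => intro _; exact aux_kill ψ n f hf hn h0
    | succ i ih =>
      intro hi
      refine aux_kill_step ψ (X ^ i * f) (n + i) ((monic_X_pow i).mul hf) ?_ (h i (by omega))
        (ih (by omega))
      rw [(monic_X_pow i).natDegree_mul hf, hn, natDegree_X_pow, add_comm]
  intro p hp
  exact key _ le_rfl p (degreeLT_mono (by omega) hp)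

open Polynomial in
/-- Restriction of a monomial to the line (infinity is handled by degrees). -/
noncomputable def auxf (K : Type*) [Field K] (x z : ℕ) : K[X] := X ^ x * (X + 1) ^ z

open Polynomial in
noncomputable def auxD {K : Type*} [Field K] (q : K[X]) : K[X] := X * (X + 1) * derivative q

open Polynomial in
noncomputable def auxNab {K : Type*} [Field K] (x z : ℕ) (p : K[X]) : K[X] :=
  auxD p + (C (x : K) * (X + 1) + C (z : K) * X) * p

open Polynomial in
theorem auxf_monic (K : Type*) [Field K] (x z : ℕ) : (auxf K x z).Monic := by
  unfold auxf
  exact (monic_X_pow x).mul ((monic_X_add_C (1 : K)).pow z)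

open Polynomial in
theorem auxf_natDegree (K : Type*) [Field K] (x z : ℕ) : (auxf K x z).natDegree = x + z := by
  unfold auxf
  have h := (monic_X_add_C (1 : K))
  rw [C_1] at h
  rw [(monic_X_pow x).natDegree_mul (h.pow z), h.natDegree_pow, natDegree_X_pow]
  have := natDegree_X_add_C (1 : K)
  rw [C_1] at this
  rw [this, mul_one]

open Polynomial in
theorem auxNab_mul {K : Type*} [Field K] (x z : ℕ) (p : K[X]) :
    auxNab x z p * auxf K x z = auxD (p * auxf K x z) := by
  unfold auxNab auxD auxf
  have h1 : X * derivative ((X : K[X]) ^ x) = C (x : K) * X ^ x := by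
    cases x <;> simp; ring
  have h2 : (X + 1) * derivative ((X + 1 : K[X]) ^ z) = C (z : K) * (X + 1) ^ z := by
    cases z <;> simp [derivative_pow]; ring
  simp only [derivative_mul]
  linear_combination (-(p * (X + 1) * (X + 1) ^ z)) * h1 - (p * X * X ^ x) * h2

open Polynomial in
theorem auxNab_mem {K : Type*} [Field K] (x z n : ℕ) (p : K[X]) (hp : p ∈ degreeLT K n) :
    auxNab x z p ∈ degreeLT K (n + 1) := by
  by_cases h0 : p = 0
  · subst h0; simp [auxNab, auxD]
  have hlt : p.natDegree < n := by
    rwa [mem_degreeLT, ← natDegree_lt_iff_degree_lt h0] at hp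
  have hle : (auxNab x z p).natDegree ≤ n := by
    unfold auxNab auxD
    have hX1 : (X + 1 : K[X]).natDegree ≤ 1 := by
      rw [← C_1, natDegree_X_add_C]
    refine natDegree_add_le_of_degree_le ?_ ?_
    · by_cases hd : p.natDegree = 0
      · rw [derivative_of_natDegree_zero hd]; simp
      · have := natDegree_derivative_lt hd
        refine natDegree_mul_le.trans ?_
        have h2 : (X * (X + 1) : K[X]).natDegree ≤ 2 := by
          refine natDegree_mul_le.trans ?_
          have := natDegree_X_le (R := K)
          omega
        omega
    · refine natDegree_mul_le.trans ?_
      have : (C (x : K) * (X + 1) + C (z : K) * X).natDegree ≤ 1 := by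
        refine natDegree_add_le_of_degree_le ?_ ?_
        · exact (natDegree_C_mul_le _ _).trans hX1
        · exact (natDegree_C_mul_le _ _).trans natDegree_X_le
      omega
  rw [mem_degreeLT]
  exact (degree_le_of_natDegree_le hle).trans_lt (by exact_mod_cast Nat.lt_succ_self n)

open Polynomial in
structure AuxE (K : Type*) [Field K] (ex ey ez : Fin 4 → ℕ) (i : ℕ) (P : Fin 4 → K[X]) : Prop where
  deg : ∀ k, P k ∈ degreeLT K (i + 1 - (ex k + ey k + ez k))
  sum : ∑ k, P k * auxf K (ex k) (ez k) = 0

open Polynomial in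
theorem AuxE.mono {K : Type*} [Field K] {ex ey ez : Fin 4 → ℕ} {i : ℕ} {P : Fin 4 → K[X]}
    (h : AuxE K ex ey ez i P) : AuxE K ex ey ez (i + 1) P :=
  ⟨fun k => degreeLT_mono (by omega) (h.deg k), h.sum⟩

open Polynomial in
theorem auxD_sum {K : Type*} [Field K] (g : Fin 4 → K[X]) :
    ∑ k, auxD (g k) = auxD (∑ k, g k) := by
  simp [auxD, Finset.mul_sum]

open Polynomial in
theorem AuxE.nab {K : Type*} [Field K] {ex ey ez : Fin 4 → ℕ} {i : ℕ} {P : Fin 4 → K[X]}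
    (h : AuxE K ex ey ez i P) :
    AuxE K ex ey ez (i + 1) (fun k => auxNab (ex k) (ez k) (P k)) := by
  refine ⟨fun k => ?_, ?_⟩
  · by_cases hd : ex k + ey k + ez k ≤ i
    · have := auxNab_mem (ex k) (ez k) _ _ (h.deg k)
      rwa [show i + 1 - (ex k + ey k + ez k) + 1 = i + 1 + 1 - (ex k + ey k + ez k) by omega] at this
    · have := h.deg k
      rw [show i + 1 - (ex k + ey k + ez k) = 0 by omega] at this
      have h0 : P k = 0 := by simpa [mem_degreeLT] using this
      simp [h0, auxNab, auxD]
  · simp only [auxNab_mul, auxD_sum, h.sum]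
    simp [auxD]

open Polynomial in
/-- The functional `ψ` kills the degree `j` part of the ideal. -/
def AuxKill (K : Type*) [Field K] (ex ey ez : Fin 4 → ℕ) (j : ℕ) (ψ : K[X] →ₗ[K] K) : Prop :=
  ∀ k, ∀ i < j + 1 - (ex k + ey k + ez k), ψ (X ^ i * auxf K (ex k) (ez k)) = 0

open Polynomial in
noncomputable def auxEta {K : Type*} [Field K] (ex ez : Fin 4 → ℕ) (ψ : K[X] →ₗ[K] K)
    (P : Fin 4 → K[X]) : K[X] := ∑ k, P k * auxU ψ (auxf K (ex k) (ez k))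

open Polynomial in
theorem auxEta_zero {K : Type*} [Field K] {ex ey ez : Fin 4 → ℕ} {j : ℕ} {ψ : K[X] →ₗ[K] K}
    (hψ : AuxKill K ex ey ez j ψ) {P : Fin 4 → K[X]} (hP : AuxE K ex ey ez (j + 1) P) :
    auxEta ex ez ψ P = 0 := by
  have : ∀ k, P k * auxU ψ (auxf K (ex k) (ez k)) = auxU ψ (P k * auxf K (ex k) (ez k)) := by
    intro k
    exact auxU_mul ψ _ _ (hψ k) (j + 1 + 1 - (ex k + ey k + ez k)) (by omega) _ (hP.deg k)
  rw [auxEta]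
  simp only [this]
  rw [← map_sum, hP.sum, map_zero]

open Polynomial in
theorem auxEta_const {K : Type*} [Field K] {ex ey ez : Fin 4 → ℕ} {j : ℕ} {ψ : K[X] →ₗ[K] K}
    (hψ : AuxKill K ex ey ez j ψ) {P : Fin 4 → K[X]} (hP : AuxE K ex ey ez (j + 2) P) :
    ∃ κ, auxEta ex ez ψ P = C κ := by
  have : ∀ k, ∃ κ : K, P k * auxU ψ (auxf K (ex k) (ez k)) =
      auxU ψ (P k * auxf K (ex k) (ez k)) + C κ := by
    intro k
    exact auxU_mul' ψ _ _ (hψ k) _ (degreeLT_mono (by omega) (hP.deg k))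
  choose κ hκ using this
  refine ⟨∑ k, κ k, ?_⟩
  rw [auxEta]
  simp only [hκ]
  rw [Finset.sum_add_distrib, ← map_sum, hP.sum, map_zero, map_sum, zero_add]

open Polynomial in
theorem aux_rank1 {K : Type*} [Field K] [CharZero K] (Q : Fin 4 → K[X])
    (h : ∀ k l, Q k * derivative (Q l) = derivative (Q k) * Q l) :
    ∃ q : K[X], ∀ k, ∃ w : K, Q k = w • q := by
  by_cases h0 : ∃ k, Q k ≠ 0
  · obtain ⟨k, hk⟩ := h0
    refine ⟨Q k, fun l => ?_⟩
    obtain ⟨u, v, huv, e⟩ := aux_dep2 _ _ (h k l)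
    have hv : v ≠ 0 := by
      rintro rfl
      have hu : u ≠ 0 := by simpa using huv
      simp [hu, hk] at e
    refine ⟨- (u / v), ?_⟩
    have : C v * Q l = C v * ((-(u / v)) • Q k) := by
      rw [smul_eq_C_mul, ← mul_assoc, ← C_mul]
      rw [show v * -(u / v) = -u by field_simp, C_neg]
      linear_combination e
    exact mul_left_cancel₀ (by simpa using hv) this
  · push Not at h0
    exact ⟨0, fun k => ⟨0, by simp [h0 k]⟩⟩

open Polynomial in
theorem auxEta_relation {K : Type*} [Field K] {ex ez : Fin 4 → ℕ} (ψ : K[X] →ₗ[K] K)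
    (v : Fin 4 → Fin 4 → K[X]) (g : Fin 4 → K[X]) (h : ∀ k, ∑ m, g m * v m k = 0) :
    ∑ m, g m * auxEta ex ez ψ (v m) = 0 := by
  unfold auxEta
  simp only [Finset.mul_sum]
  rw [Finset.sum_comm]
  apply Finset.sum_eq_zero
  intro k _
  have := congrArg (· * auxU ψ (auxf K (ex k) (ez k))) (h k)
  simpa [Finset.sum_mul, mul_assoc] using this

open Polynomial in
/-- The triple lemma. -/
theorem aux_triple {K : Type*} [Field K] {ex ey ez : Fin 4 → ℕ} {j : ℕ}
    {ψ : K[X] →ₗ[K] K} (hψ : AuxKill K ex ey ez j ψ) {P : Fin 4 → K[X]}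
    (hP : AuxE K ex ey ez j P) (m : Fin 4) (hm : P m = 0) (T : Fin 4 → K[X]) (hTm : T m = 0)
    (hT : ∑ k, T k * auxf K (ex k) (ez k) = 0) (hη : auxEta ex ez ψ T ≠ 0) (k l : Fin 4) :
    (P k * auxf K (ex k) (ez k)) * derivative (P l * auxf K (ex l) (ez l)) =
    derivative (P k * auxf K (ex k) (ez k)) * (P l * auxf K (ex l) (ez l)) := by
  set f : Fin 4 → K[X] := fun k => auxf K (ex k) (ez k) with hf
  have hN := hP.nab
  set N : Fin 4 → K[X] := (fun k => auxNab (ex k) (ez k) (P k)) with hNdef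
  have hNm : N m = 0 := by simp [hNdef, hm, auxNab, auxD]
  have hf' : Function.update f m 0 ≠ 0 := by
    obtain ⟨k, hk⟩ := exists_ne m
    intro h0
    have := congrFun h0 k
    rw [Function.update_of_ne hk] at this
    exact (auxf_monic K _ _).ne_zero this
  have hsum : ∀ v : Fin 4 → K[X], v m = 0 → ∑ k, v k * f k = 0 →
      ∑ k, Function.update f m 0 k * v k = 0 := by
    intro v hv h
    rw [← h]
    apply Finset.sum_congr rfl
    intro k _
    by_cases hk : k = m
    · subst hk; simp [hv]
    · rw [Function.update_of_ne hk, mul_comm]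
  obtain ⟨g, hg, hrel⟩ := aux_rel (Function.update f m 0) hf' ![P, N, T, Pi.single m 1] (by
    intro n
    fin_cases n
    · exact hsum P hm hP.sum
    · exact hsum N hNm hN.sum
    · exact hsum T hTm hT
    · simp only [Fin.reduceFinMk, Matrix.cons_val]
      apply Finset.sum_eq_zero
      intro k _
      by_cases hk : k = m
      · subst hk; simp
      · simp [hk])
  have hg3 : g 3 = 0 := by
    have := hrel m
    simpa [Fin.sum_univ_four, hm, hNm, hTm] using this
  have hg2 : g 2 = 0 := by
    have := auxEta_relation (ex := ex) (ez := ez) ψ _ g hrel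
    simp only [Fin.sum_univ_four, hg3] at this
    simp only [Matrix.cons_val] at this
    rw [auxEta_zero hψ hP.mono, auxEta_zero hψ hN] at this
    simpa [hη] using this
  have hr : ∀ k, g 0 * (P k * f k) + g 1 * (X * (X + 1) * derivative (P k * f k)) = 0 := by
    intro k
    have := hrel k
    simp only [Fin.sum_univ_four, hg3, hg2, Matrix.cons_val] at this
    have e := auxNab_mul (ex k) (ez k) (P k)
    unfold auxD at e
    simp only [hf]
    rw [← e]
    linear_combination (auxf K (ex k) (ez k)) * this
  by_cases h1 : g 1 = 0
  · have h0 : g 0 ≠ 0 := by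
      intro h0
      apply hg
      ext1 n
      fin_cases n <;> simp [h0, h1, hg2, hg3]
    have : ∀ k, P k * f k = 0 := by
      intro k
      have := hr k
      rw [h1] at this
      simpa [h0] using this
    rw [show P k * auxf K (ex k) (ez k) = 0 from this k]; simp
  · have hX : (X * (X + 1) : K[X]) ≠ 0 := by
      rw [← C_1]
      exact mul_ne_zero X_ne_zero (X_add_C_ne_zero 1)
    apply mul_left_cancel₀ (mul_ne_zero h1 hX)
    linear_combination (P k * f k) * hr l - (P l * f l) * hr k

theorem aux_comb_two {K V : Type*} [Field K] [AddCommGroup V] [Module K V] (Q : Fin 4 → V)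
    (H : ∀ c : Fin 4 → K, (∃ m, c m = 0) → ∑ k, c k • Q k = 0 →
      ∃ q, ∀ k, ∃ w : K, c k • Q k = w • q)
    (i j k l : Fin 4) (hne : i ≠ j ∧ i ≠ k ∧ i ≠ l ∧ j ≠ k ∧ j ≠ l ∧ k ≠ l)
    (hall : ∀ n, n = i ∨ n = j ∨ n = k ∨ n = l)
    (hs : Q i + Q j + Q k + Q l = 0)
    (t : K) (ht : Q i = t • Q j) :
    (∃ q, ∀ k, ∃ w : K, Q k = w • q) ∨ (Q i + Q j = 0 ∧ Q k + Q l = 0) := by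
  obtain ⟨h1, h2, h3, h4, h5, h6⟩ := hne
  have hu : (Finset.univ : Finset (Fin 4)) = {i, j, k, l} := by
    ext n; simpa using hall n
  by_cases h : 1 + t = 0
  · right
    have : Q i + Q j = 0 := by
      rw [ht]
      have : t • Q j + Q j = (1 + t) • Q j := by module
      rw [this, h, zero_smul]
    exact ⟨this, by rw [← hs, this, zero_add]⟩
  · left
    obtain ⟨q, hq⟩ := H (fun n => if n = i then 0 else if n = j then 1 + t else 1) ⟨i, by simp⟩ (by
      rw [hu, Finset.sum_insert (by simp [*]), Finset.sum_insert (by simp [*]),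
        Finset.sum_insert (by simp [*]), Finset.sum_singleton]
      simp only [h1.symm, h2.symm, h3.symm, h4.symm, h5.symm, if_true, if_false]
      rw [← hs, ht]
      module)
    have hj : ∃ w : K, Q j = w • q := by
      obtain ⟨w, hw⟩ := hq j
      simp only [h1.symm, if_true, if_false] at hw
      exact ⟨(1 + t)⁻¹ * w, by rw [mul_smul, ← hw, smul_smul, inv_mul_cancel₀ h, one_smul]⟩
    refine ⟨q, fun n => ?_⟩
    rcases hall n with rfl | rfl | rfl | rfl
    · obtain ⟨w, hw⟩ := hj
      exact ⟨t * w, by rw [ht, hw, smul_smul]⟩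
    · exact hj
    · obtain ⟨w, hw⟩ := hq n
      simp only [h2.symm, h4.symm, if_false, one_smul] at hw
      exact ⟨w, hw⟩
    · obtain ⟨w, hw⟩ := hq n
      simp only [h3.symm, h5.symm, if_false, one_smul] at hw
      exact ⟨w, hw⟩

theorem aux_comb {K V : Type*} [Field K] [AddCommGroup V] [Module K V] (Q : Fin 4 → V)
    (H : ∀ c : Fin 4 → K, (∃ m, c m = 0) → ∑ k, c k • Q k = 0 →
      ∃ q, ∀ k, ∃ w : K, c k • Q k = w • q)
    (hs : ∑ k, Q k = 0) (c0 c1 c2 : K) (hc : c0 ≠ 0 ∨ c1 ≠ 0 ∨ c2 ≠ 0)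
    (h : c0 • Q 0 + c1 • Q 1 + c2 • Q 2 = 0) :
    (∃ q, ∀ k, ∃ w : K, Q k = w • q) ∨ ∃ i j k l : Fin 4,
      (i ≠ j ∧ i ≠ k ∧ i ≠ l ∧ j ≠ k ∧ j ≠ l ∧ k ≠ l) ∧ Q i + Q j = 0 ∧ Q k + Q l = 0 := by
  have hs' : Q 0 + Q 1 + Q 2 + Q 3 = 0 := by rw [← hs, Fin.sum_univ_four]
  have key : ∀ i j k l : Fin 4, (i ≠ j ∧ i ≠ k ∧ i ≠ l ∧ j ≠ k ∧ j ≠ l ∧ k ≠ l) →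
      (∀ n, n = i ∨ n = j ∨ n = k ∨ n = l) → Q i + Q j + Q k + Q l = 0 →
      ∀ u v : K, u ≠ 0 → u • Q i + v • Q j = 0 →
      (∃ q, ∀ k, ∃ w : K, Q k = w • q) ∨ ∃ i j k l : Fin 4,
      (i ≠ j ∧ i ≠ k ∧ i ≠ l ∧ j ≠ k ∧ j ≠ l ∧ k ≠ l) ∧ Q i + Q j = 0 ∧ Q k + Q l = 0 := by
    intro i j k l hne hall hs u v hu e
    rcases aux_comb_two Q H i j k l hne hall hs (-(u⁻¹ * v)) (by
      have e2 : u • Q i = u • ((-(u⁻¹ * v)) • Q j) := by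
        rw [smul_smul, show u * -(u⁻¹ * v) = -v by field_simp, neg_smul]
        exact eq_neg_of_add_eq_zero_left e
      exact smul_right_injective V hu e2) with h | h
    · exact Or.inl h
    · exact Or.inr ⟨i, j, k, l, hne, h⟩
  by_cases h0 : c0 = 0
  · subst h0
    by_cases h1 : c1 = 0
    · subst h1
      refine key 2 1 0 3 (by decide) (by decide) (by rw [← hs']; abel) c2 0 (by simpa using hc) ?_
      rw [← h]; module
    · refine key 1 2 0 3 (by decide) (by decide) (by rw [← hs']; abel) c1 c2 h1 ?_
      rw [← h]; module
  by_cases h1 : c1 = 0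
  · subst h1
    refine key 0 2 1 3 (by decide) (by decide) (by rw [← hs']; abel) c0 c2 h0 ?_
    rw [← h]; module
  by_cases h2 : c2 = 0
  · subst h2
    refine key 0 1 2 3 (by decide) (by decide) (by rw [← hs']) c0 c1 h0 ?_
    rw [← h]; module
  left
  obtain ⟨q, hq⟩ := H ![c0, c1, c2, 0] ⟨3, rfl⟩ (by simpa [Fin.sum_univ_four] using h)
  have inv : ∀ (c : K) (v : V), c ≠ 0 → (∃ w : K, c • v = w • q) → ∃ w : K, v = w • q := by
    rintro c v hc ⟨w, hw⟩
    exact ⟨c⁻¹ * w, by rw [mul_smul, ← hw, smul_smul, inv_mul_cancel₀ hc, one_smul]⟩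
  obtain ⟨w0, e0⟩ := inv _ _ h0 (hq 0)
  obtain ⟨w1, e1⟩ := inv _ _ h1 (hq 1)
  obtain ⟨w2, e2⟩ := inv _ _ h2 (hq 2)
  refine ⟨q, fun k => ?_⟩
  fin_cases k
  · exact ⟨w0, e0⟩
  · exact ⟨w1, e1⟩
  · exact ⟨w2, e2⟩
  · refine ⟨-(w0 + w1 + w2), ?_⟩
    have := eq_neg_of_add_eq_zero_right hs'
    simp only [Fin.reduceFinMk]
    rw [this, e0, e1, e2]; module

open Polynomial in
/-- Non-triviality of `η` on the syzygies of any three of the four generators. -/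
theorem aux_nontriv {K : Type*} [Field K] (a b c α β γ j : ℕ) (ψ : K[X] →ₗ[K] K)
    (hψ : AuxKill K ![a, 0, 0, α] ![0, b, 0, β] ![0, 0, c, γ] j ψ)
    (p : K[X]) (hp : p ∈ degreeLT K (j + 1)) (hne : ψ p ≠ 0) (m : Fin 4) :
    ∃ T : Fin 4 → K[X], T m = 0 ∧
      ∑ k, T k * auxf K (![a, 0, 0, α] k) (![0, 0, c, γ] k) = 0 ∧
      auxEta ![a, 0, 0, α] ![0, 0, c, γ] ψ T ≠ 0 := by
  by_contra hcon
  push Not at hcon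
  set ex : Fin 4 → ℕ := ![a, 0, 0, α] with hex
  set ez : Fin 4 → ℕ := ![0, 0, c, γ] with hez
  have kz : ∀ k l : Fin 4, k ≠ l → k ≠ m → l ≠ m →
      auxf K (ex l) (ez l) * auxU ψ (auxf K (ex k) (ez k)) =
      auxf K (ex k) (ez k) * auxU ψ (auxf K (ex l) (ez l)) := by
    intro k l hkl hk hl
    have h1 := hcon (Pi.single k (auxf K (ex l) (ez l)) - Pi.single l (auxf K (ex k) (ez k)))
      (by simp [hk.symm, hl.symm]) (by
        simp only [Pi.sub_apply, sub_mul, Finset.sum_sub_distrib]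
        rw [Finset.sum_eq_single k (by intro n _ hn; simp [hn]) (by simp),
          Finset.sum_eq_single l (by intro n _ hn; simp [hn]) (by simp)]
        simp only [Pi.single_eq_same]; ring)
    unfold auxEta at h1
    simp only [Pi.sub_apply, sub_mul, Finset.sum_sub_distrib] at h1
    rw [Finset.sum_eq_single k (by intro n _ hn; simp [hn]) (by simp),
          Finset.sum_eq_single l (by intro n _ hn; simp [hn]) (by simp)] at h1
    simp only [Pi.single_eq_same] at h1
    linear_combination h1
  have f1 : auxf K (ex 1) (ez 1) = 1 := by simp [hex, hez, auxf]
  -- from index 0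
  have k0 : auxU ψ (auxf K (ex 0) (ez 0)) = 0 → False := by
    intro h
    refine hne (aux_kill_all ψ a (j + 1) _ (auxf_monic K (ex 0) (ez 0)) ?_ h ?_ p hp)
    · rw [auxf_natDegree]; simp [hex, hez]
    · have := hψ 0
      simpa [hex, hez] using this
  have k2 : auxU ψ (auxf K (ex 2) (ez 2)) = 0 → False := by
    intro h
    refine hne (aux_kill_all ψ c (j + 1) _ (auxf_monic K (ex 2) (ez 2)) ?_ h ?_ p hp)
    · rw [auxf_natDegree]; simp [hex, hez]
    · have := hψ 2
      simpa [hex, hez] using this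
  by_cases hm1 : m = 1
  · subst hm1
    have h := kz 0 2 (by decide) (by decide) (by decide)
    apply k0
    by_contra h0
    -- X^a divides U_0, which has degree < a
    have hdvd : (X : K[X]) ^ a ∣ auxU ψ (auxf K (ex 0) (ez 0)) := by
      have hc : IsCoprime ((X : K[X]) ^ a) (auxf K (ex 2) (ez 2)) := by
        simp only [hex, hez, auxf]
        simp only [Matrix.cons_val, pow_zero, one_mul]
        apply IsCoprime.pow
        exact ⟨-1, 1, by ring⟩
      apply hc.dvd_of_dvd_mul_left
      rw [h]
      refine Dvd.dvd.mul_right ?_ _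
      simp [hex, hez, auxf]
    have hlt : (auxU ψ (auxf K (ex 0) (ez 0))).degree < a := by
      have : auxf K (ex 0) (ez 0) = X ^ a := by simp [hex, hez, auxf]
      rw [this, auxU_X_pow]
      rw [← mem_degreeLT]
      apply Submodule.sum_mem
      intro i hi
      rw [mem_degreeLT]
      refine (degree_C_mul_X_pow_le _ _).trans_lt ?_
      exact_mod_cast Finset.mem_range.1 hi
    have := degree_le_of_dvd hdvd h0
    rw [degree_X_pow] at this
    exact absurd hlt (not_lt.2 this)
  · by_cases hm0 : m = 0
    · subst hm0
      have h := kz 2 1 (by decide) (by decide) (by decide)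
      rw [f1, auxU_one] at h
      exact k2 (by simpa using h)
    · have h := kz 0 1 (by decide) (Ne.symm hm0) (Ne.symm hm1)
      rw [f1, auxU_one] at h
      exact k0 (by simpa using h)

open Polynomial in
/-- Rank one syzygies are sums of two-term syzygies. -/
theorem aux_lift_rank1 {K : Type*} [Field K] {ex ey ez : Fin 4 → ℕ} {j : ℕ}
    (Lf : Submodule K (Fin 4 → K[X]))
    (hLf : ∀ k l : Fin 4, k ≠ l → ∀ p p' : K[X], p ∈ degreeLT K (j + 1 - (ex k + ey k + ez k)) →
      p' ∈ degreeLT K (j + 1 - (ex l + ey l + ez l)) →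
      p * auxf K (ex k) (ez k) + p' * auxf K (ex l) (ez l) = 0 →
      Pi.single k p + Pi.single l p' ∈ Lf)
    {P : Fin 4 → K[X]} (hP : AuxE K ex ey ez j P) (q : K[X])
    (h : ∀ k, ∃ w : K, P k * auxf K (ex k) (ez k) = w • q) : P ∈ Lf := by
  choose w hw using h
  have hf : ∀ k, auxf K (ex k) (ez k) ≠ 0 := fun k => (auxf_monic K _ _).ne_zero
  have hPz : ∀ k, P k * auxf K (ex k) (ez k) = 0 → P k = 0 := by
    intro k hk
    exact (mul_eq_zero.1 hk).resolve_right (hf k)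
  by_cases hq : q = 0
  · have : P = 0 := by
      ext1 k
      apply hPz
      rw [hw, hq, smul_zero]
    rw [this]; exact Lf.zero_mem
  have hs : ∑ k, w k = 0 := by
    have := hP.sum
    simp only [hw] at this
    rw [← Finset.sum_smul] at this
    exact (smul_eq_zero.1 this).resolve_right hq
  by_cases h0 : ∀ k, w k = 0
  · have : P = 0 := by
      ext1 k
      apply hPz
      rw [hw, h0, zero_smul]
    rw [this]; exact Lf.zero_mem
  push Not at h0
  obtain ⟨k0, hk0⟩ := h0
  have e : P = ∑ k, (Pi.single k (P k) + Pi.single k0 ((-(w k / w k0)) • P k0)) := by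
    rw [Finset.sum_add_distrib, Finset.univ_sum_single]
    have h2 : ∑ k, (Pi.single k0 ((-(w k / w k0)) • P k0) : Fin 4 → K[X]) =
        Pi.single k0 ((∑ k, (-(w k / w k0))) • P k0) := by
      rw [Finset.sum_smul]
      exact (map_sum (AddMonoidHom.single (fun _ : Fin 4 => K[X]) k0) _ _).symm
    rw [h2, Finset.sum_neg_distrib, ← Finset.sum_div, hs]
    simp
  rw [e]
  apply Submodule.sum_mem
  intro k _
  by_cases hk : k = k0
  · subst hk
    rw [div_self hk0, ← Pi.single_add]
    simp
  · apply hLf k k0 hk _ _ (hP.deg k) (Submodule.smul_mem _ _ (hP.deg k0))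
    rw [smul_mul_assoc, hw, hw, smul_smul, ← add_smul]
    rw [show w k + -(w k / w k0) * w k0 = 0 by field_simp; ring, zero_smul]

open Polynomial in
theorem aux_lift_pairs {K : Type*} [Field K] {ex ey ez : Fin 4 → ℕ} {j : ℕ}
    (Lf : Submodule K (Fin 4 → K[X]))
    (hLf : ∀ k l : Fin 4, k ≠ l → ∀ p p' : K[X], p ∈ degreeLT K (j + 1 - (ex k + ey k + ez k)) →
      p' ∈ degreeLT K (j + 1 - (ex l + ey l + ez l)) →
      p * auxf K (ex k) (ez k) + p' * auxf K (ex l) (ez l) = 0 →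
      Pi.single k p + Pi.single l p' ∈ Lf)
    {P : Fin 4 → K[X]} (hP : AuxE K ex ey ez j P) (i k l m : Fin 4)
    (hne : i ≠ k ∧ i ≠ l ∧ i ≠ m ∧ k ≠ l ∧ k ≠ m ∧ l ≠ m)
    (h1 : P i * auxf K (ex i) (ez i) + P k * auxf K (ex k) (ez k) = 0)
    (h2 : P l * auxf K (ex l) (ez l) + P m * auxf K (ex m) (ez m) = 0) : P ∈ Lf := by
  have hu : (Finset.univ : Finset (Fin 4)) = {i, k, l, m} := by
    clear h1 h2; revert i k l m; decide
  obtain ⟨n1, n2, n3, n4, n5, n6⟩ := hne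
  have e : P = (Pi.single i (P i) + Pi.single k (P k)) + (Pi.single l (P l) + Pi.single m (P m)) := by
    conv_lhs => rw [← Finset.univ_sum_single P]
    rw [hu, Finset.sum_insert (by simp [*]), Finset.sum_insert (by simp [*]),
        Finset.sum_insert (by simp [*]), Finset.sum_singleton]
    abel
  rw [e]
  exact Lf.add_mem (hLf i k n1 _ _ (hP.deg _) (hP.deg _) h1)
    (hLf l m n6 _ _ (hP.deg _) (hP.deg _) h2)

open Polynomial in
/-- The multiplication map whose image is the degree `j` part of the ideal on the line. -/
noncomputable def auxPhi (K : Type*) [Field K] (ex ey ez : Fin 4 → ℕ) (j : ℕ) :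
    ((k : Fin 4) → degreeLT K (j + 1 - (ex k + ey k + ez k))) →ₗ[K] K[X] :=
  ∑ k, (LinearMap.mulRight K (auxf K (ex k) (ez k))).comp
    ((degreeLT K (j + 1 - (ex k + ey k + ez k))).subtype.comp (LinearMap.proj k))

open Polynomial in
theorem auxPhi_apply (K : Type*) [Field K] (ex ey ez : Fin 4 → ℕ) (j : ℕ)
    (v : (k : Fin 4) → degreeLT K (j + 1 - (ex k + ey k + ez k))) :
    auxPhi K ex ey ez j v = ∑ k, (v k : K[X]) * auxf K (ex k) (ez k) := by
  simp [auxPhi]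

open Polynomial in
theorem auxPhi_kill {K : Type*} [Field K] {ex ey ez : Fin 4 → ℕ} {j : ℕ} {ψ : K[X] →ₗ[K] K}
    (h : LinearMap.range (auxPhi K ex ey ez j) ≤ LinearMap.ker ψ) : AuxKill K ex ey ez j ψ := by
  intro k i hi
  have hX : (X : K[X]) ^ i ∈ degreeLT K (j + 1 - (ex k + ey k + ez k)) := by
    rw [mem_degreeLT, degree_X_pow]; exact_mod_cast hi
  have := h ⟨Pi.single k ⟨X ^ i, hX⟩, rfl⟩
  rw [LinearMap.mem_ker, auxPhi_apply] at this
  rw [Finset.sum_eq_single k (by intro n _ hn; simp [hn]) (by simp)] at this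
  simpa using this

open Polynomial in
theorem auxPhi_range_le (K : Type*) [Field K] (ex ey ez : Fin 4 → ℕ) (j : ℕ) :
    LinearMap.range (auxPhi K ex ey ez j) ≤ degreeLT K (j + 1) := by
  rintro _ ⟨v, rfl⟩
  rw [auxPhi_apply]
  apply Submodule.sum_mem
  intro k _
  by_cases h0 : (v k : K[X]) = 0
  · rw [h0, zero_mul]; exact Submodule.zero_mem _
  have hv := (v k).2
  rw [mem_degreeLT, ← natDegree_lt_iff_degree_lt h0] at hv
  rw [mem_degreeLT, ← natDegree_lt_iff_degree_lt (mul_ne_zero h0 (auxf_monic K _ _).ne_zero),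
    natDegree_mul h0 (auxf_monic K _ _).ne_zero, auxf_natDegree]
  omega

open Polynomial in
theorem aux_main {K : Type*} [Field K] [CharZero K] (a b c α β γ j : ℕ)
    (ex ey ez : Fin 4 → ℕ)
    (hex : ex = ![a, 0, 0, α]) (hey : ey = ![0, b, 0, β]) (hez : ez = ![0, 0, c, γ])
    (Lf : Submodule K (Fin 4 → K[X]))
    (hLf : ∀ k l : Fin 4, k ≠ l → ∀ p p' : K[X], p ∈ degreeLT K (j + 1 - (ex k + ey k + ez k)) →
      p' ∈ degreeLT K (j + 1 - (ex l + ey l + ez l)) →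
      p * auxf K (ex k) (ez k) + p' * auxf K (ex l) (ez l) = 0 →
      Pi.single k p + Pi.single l p' ∈ Lf)
    (P : Fin 4 → K[X]) (hP : AuxE K ex ey ez j P) (hPL : P ∉ Lf)
    (b0 : K[X]) (hb0 : b0 ∈ degreeLT K (j + 1))
    (hb : b0 ∉ LinearMap.range (auxPhi K ex ey ez j)) :
    a + b + c + α + β + γ = 3 * (j + 1) := by
  have hnt : ∀ ψ : K[X] →ₗ[K] K, AuxKill K ex ey ez j ψ → ∀ p ∈ degreeLT K (j + 1), ψ p ≠ 0 →
      ∀ m, ∃ T : Fin 4 → K[X], T m = 0 ∧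
      ∑ k, T k * auxf K (ex k) (ez k) = 0 ∧ auxEta ex ez ψ T ≠ 0 := by
    subst hex hey hez
    intro ψ h1 p h2 h3 m
    exact aux_nontriv a b c α β γ j ψ h1 p h2 h3 m
  obtain ⟨ψ, hψb, hψprime⟩ := Submodule.exists_le_ker_of_notMem hb
  have hψ := auxPhi_kill hψprime
  have hf0 : (fun k => auxf K (ex k) (ez k)) ≠ 0 := by
    intro h; exact (auxf_monic K (ex 0) (ez 0)).ne_zero (congrFun h 0)
  -- Step 1: the first three entries are linearly independent
  have step1 : ¬ ∃ c0 c1 c2 : K, (c0 ≠ 0 ∨ c1 ≠ 0 ∨ c2 ≠ 0) ∧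
      C c0 * (P 0 * auxf K (ex 0) (ez 0)) + C c1 * (P 1 * auxf K (ex 1) (ez 1)) +
        C c2 * (P 2 * auxf K (ex 2) (ez 2)) = 0 := by
    rintro ⟨c0, c1, c2, hc, hrel⟩
    simp only [← smul_eq_C_mul] at hrel
    rcases aux_comb (K := K) (fun k => P k * auxf K (ex k) (ez k)) (by
        rintro cc ⟨m, hm⟩ hsum
        obtain ⟨T, hT1, hT2, hT3⟩ := hnt ψ hψ b0 hb0 hψb m
        have hP' : AuxE K ex ey ez j (fun k => cc k • P k) := by
          refine ⟨fun k => Submodule.smul_mem _ _ (hP.deg k), ?_⟩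
          simpa only [smul_mul_assoc] using hsum
        obtain ⟨q, hq⟩ := aux_rank1 (fun k => (cc k • P k) * auxf K (ex k) (ez k))
          (aux_triple hψ hP' m (by simp [hm]) T hT1 hT2 hT3)
        refine ⟨q, fun k => ?_⟩
        obtain ⟨w, hw⟩ := hq k
        exact ⟨w, by rw [← hw]; simp only [smul_mul_assoc]⟩) hP.sum c0 c1 c2 hc hrel with
      ⟨q, hq⟩ | ⟨i, k, l, m, hne, h1, h2⟩
    · exact hPL (aux_lift_rank1 Lf hLf hP q hq)
    · exact hPL (aux_lift_pairs Lf hLf hP i k l m hne h1 h2)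
  have hN := hP.nab
  set N : Fin 4 → K[X] := (fun k => auxNab (ex k) (ez k) (P k)) with hNdef
  have hN2 := hN.nab
  set N2 : Fin 4 → K[X] := (fun k => auxNab (ex k) (ez k) (N k)) with hN2def
  -- no relation between P, N, N2
  have indep : ∀ s r u : K[X], (∀ k, s * P k + r * N k + u * N2 k = 0) → s = 0 ∧ r = 0 ∧ u = 0 := by
    intro s r u h
    by_contra hne
    apply step1
    have hrho : (X * (X + 1) : K[X]) ≠ 0 := by
      rw [← C_1]
      exact mul_ne_zero X_ne_zero (X_add_C_ne_zero 1)
    set ρ : K[X] := X * (X + 1) with hρ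
    have h' : ∀ k, s * (P k * auxf K (ex k) (ez k)) +
        (r * ρ + u * ρ * derivative ρ) * derivative (P k * auxf K (ex k) (ez k)) +
        (u * ρ ^ 2) * derivative (derivative (P k * auxf K (ex k) (ez k))) = 0 := by
      intro k
      have e1 : N k * auxf K (ex k) (ez k) = ρ * derivative (P k * auxf K (ex k) (ez k)) :=
        auxNab_mul (ex k) (ez k) (P k)
      have e2 : N2 k * auxf K (ex k) (ez k) = ρ * derivative (N k * auxf K (ex k) (ez k)) :=
        auxNab_mul (ex k) (ez k) (N k)
      rw [e1, derivative_mul] at e2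
      linear_combination (auxf K (ex k) (ez k)) * h k - r * e1 - u * e2
    refine aux_dep3 _ _ _ s (r * ρ + u * ρ * derivative ρ) (u * ρ ^ 2) ?_ (h' 0) (h' 1) (h' 2)
    by_contra hcon
    push Not at hcon
    obtain ⟨h1, h2, h3⟩ := hcon
    have hu : u = 0 := by simpa [hrho] using h3
    subst hu
    have hr : r = 0 := by simpa [hrho] using h2
    exact hne ⟨h1, hr, rfl⟩
  -- Step 2
  have step2 : ∀ φ : K[X] →ₗ[K] K, AuxKill K ex ey ez j φ → auxEta ex ez φ N2 = 0 →
      ∀ p ∈ degreeLT K (j + 1), φ p = 0 := by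
    intro φ hφ h0 p hp
    by_contra hne
    obtain ⟨T, -, hT2, hT3⟩ := hnt φ hφ p hp hne 0
    obtain ⟨g, hg, hrel⟩ := aux_rel _ hf0 ![P, N, N2, T] (by
      intro n
      fin_cases n
      · simpa [mul_comm] using hP.sum
      · simpa [mul_comm] using hN.sum
      · simpa [mul_comm] using hN2.sum
      · simpa [mul_comm] using hT2)
    have hg3 : g 3 = 0 := by
      have := auxEta_relation (ex := ex) (ez := ez) φ _ g hrel
      simp only [Fin.sum_univ_four] at this
      simp only [Matrix.cons_val] at this
      rw [auxEta_zero hφ hP.mono, auxEta_zero hφ hN, h0] at this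
      simpa [hT3] using this
    obtain ⟨z0, z1, z2⟩ := indep (g 0) (g 1) (g 2) (by
      intro k
      have := hrel k
      simpa [Fin.sum_univ_four, hg3] using this)
    apply hg
    ext1 n
    fin_cases n <;> simp [z0, z1, z2, hg3]
  obtain ⟨κ, hκ⟩ := auxEta_const hψ hN2
  have hκ0 : κ ≠ 0 := by
    rintro rfl
    exact hψb (step2 ψ hψ (by simpa using hκ) b0 hb0)
  -- Step 2 continued: the image is the kernel of ψ
  have hrange : ∀ p ∈ degreeLT K (j + 1), ψ p = 0 → p ∈ LinearMap.range (auxPhi K ex ey ez j) := by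
    intro p hp hp0
    by_contra hcon
    obtain ⟨φ, hφp, hφprime⟩ := Submodule.exists_le_ker_of_notMem hcon
    have hφ := auxPhi_kill hφprime
    obtain ⟨κprime, hκprime⟩ := auxEta_const hφ hN2
    have hk : AuxKill K ex ey ez j (φ - (κprime / κ) • ψ) := by
      intro k i hi
      simp [hφ k i hi, hψ k i hi]
    have := step2 _ hk (by
      have : auxEta ex ez (φ - (κprime / κ) • ψ) N2 =
          auxEta ex ez φ N2 - C (κprime / κ) * auxEta ex ez ψ N2 := by
        unfold auxEta
        rw [Finset.mul_sum, ← Finset.sum_sub_distrib]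
        apply Finset.sum_congr rfl
        intro k _
        rw [auxU_sub_smul]; ring
      rw [this, hκ, hκprime, ← C_mul, div_mul_cancel₀ _ hκ0, sub_self]) p hp
    simp [hp0] at this
    exact hφp this
  -- Step 3: the kernel of Φ is one-dimensional
  have step3 : ∀ P' : Fin 4 → K[X], AuxE K ex ey ez j P' → ∃ t : K, P' = t • P := by
    intro P' hP'
    have hM := hP'.nab
    set M : Fin 4 → K[X] := (fun k => auxNab (ex k) (ez k) (P' k)) with hMdef
    have hM2 := hM.nab
    set M2 : Fin 4 → K[X] := (fun k => auxNab (ex k) (ez k) (M k)) with hM2def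
    obtain ⟨g, hg, hrel⟩ := aux_rel _ hf0 ![P, N, N2, P'] (by
      intro n
      fin_cases n
      · simpa [mul_comm] using hP.sum
      · simpa [mul_comm] using hN.sum
      · simpa [mul_comm] using hN2.sum
      · simpa [mul_comm] using hP'.sum)
    have hCκ : (C κ : K[X]) ≠ 0 := by simpa using hκ0
    have nabmul : ∀ (k : Fin 4) (s p : K[X]), auxNab (ex k) (ez k) (s * p) =
        auxD s * p + s * auxNab (ex k) (ez k) p := by
      intro k s p
      simp only [auxNab, auxD, derivative_mul]; ring
    have nabadd : ∀ (k : Fin 4) (s p : K[X]), auxNab (ex k) (ez k) (s + p) =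
        auxNab (ex k) (ez k) s + auxNab (ex k) (ez k) p := by
      intro k s p
      simp only [auxNab, auxD, derivative_add]; ring
    have nabzero : ∀ (k : Fin 4), auxNab (ex k) (ez k) (0 : K[X]) = 0 := by
      intro k
      simp [auxNab, auxD]
    have eP := auxEta_zero hψ hP.mono
    have eN := auxEta_zero hψ hN
    have eP' := auxEta_zero hψ hP'.mono
    have eM := auxEta_zero hψ hM
    have hg2 : g 2 = 0 := by
      have := auxEta_relation (ex := ex) (ez := ez) ψ _ g hrel
      simp only [Fin.sum_univ_four] at this
      simp only [Matrix.cons_val] at this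
      rw [eP, eN, hκ, eP'] at this
      simpa [hκ0] using this
    have rel1 : ∀ k, g 0 * P k + g 1 * N k + g 3 * P' k = 0 := by
      intro k
      have := hrel k
      simpa [Fin.sum_univ_four, hg2] using this
    have rel1' : ∀ k, auxD (g 0) * P k + g 0 * N k + (auxD (g 1) * N k + g 1 * N2 k) +
        (auxD (g 3) * P' k + g 3 * M k) = 0 := by
      intro k
      have := congrArg (auxNab (ex k) (ez k)) (rel1 k)
      rw [nabadd, nabadd, nabmul, nabmul, nabmul, nabzero] at this
      exact this
    have etalin : ∀ (w : Fin 4 → K[X]), (∀ k, w k = 0) → auxEta ex ez ψ w = 0 := by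
      intro w hw; simp [auxEta, hw]
    have hg1 : g 1 = 0 := by
      have h := etalin _ rel1'
      have h2 : auxEta ex ez ψ (fun k => auxD (g 0) * P k + g 0 * N k +
          (auxD (g 1) * N k + g 1 * N2 k) + (auxD (g 3) * P' k + g 3 * M k)) =
          auxD (g 0) * auxEta ex ez ψ P + g 0 * auxEta ex ez ψ N +
          (auxD (g 1) * auxEta ex ez ψ N + g 1 * auxEta ex ez ψ N2) +
          (auxD (g 3) * auxEta ex ez ψ P' + g 3 * auxEta ex ez ψ M) := by
        simp only [auxEta, Finset.mul_sum, ← Finset.sum_add_distrib]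
        apply Finset.sum_congr rfl
        intro k _; ring
      rw [h2, eP, eN, hκ, eP', eM] at h
      simpa [hκ0] using h
    have rel2 : ∀ k, g 0 * P k + g 3 * P' k = 0 := by
      intro k
      have := rel1 k
      simpa [hg1] using this
    have rel2' : ∀ k, auxD (auxD (g 0)) * P k + auxD (g 0) * N k + (auxD (g 0) * N k + g 0 * N2 k) +
        (auxD (auxD (g 3)) * P' k + auxD (g 3) * M k + (auxD (g 3) * M k + g 3 * M2 k)) = 0 := by
      intro k
      have := congrArg (fun q => auxNab (ex k) (ez k) (auxNab (ex k) (ez k) q)) (rel2 k)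
      simp only [nabadd, nabmul, nabzero] at this
      exact this
    obtain ⟨κprime, hκprime⟩ := auxEta_const hψ hM2
    have hkk : g 0 * C κ + g 3 * C κprime = 0 := by
      have h := etalin _ rel2'
      have h2 : auxEta ex ez ψ (fun k => auxD (auxD (g 0)) * P k + auxD (g 0) * N k +
            (auxD (g 0) * N k + g 0 * N2 k) +
          (auxD (auxD (g 3)) * P' k + auxD (g 3) * M k + (auxD (g 3) * M k + g 3 * M2 k))) =
          auxD (auxD (g 0)) * auxEta ex ez ψ P + auxD (g 0) * auxEta ex ez ψ N +
            (auxD (g 0) * auxEta ex ez ψ N + g 0 * auxEta ex ez ψ N2) +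
          (auxD (auxD (g 3)) * auxEta ex ez ψ P' + auxD (g 3) * auxEta ex ez ψ M +
            (auxD (g 3) * auxEta ex ez ψ M + g 3 * auxEta ex ez ψ M2)) := by
        simp only [auxEta, Finset.mul_sum, ← Finset.sum_add_distrib]
        apply Finset.sum_congr rfl
        intro k _; ring
      rw [h2, eP, eN, hκ, eP', eM, hκprime] at h
      simpa using h
    have hg3 : g 3 ≠ 0 := by
      intro h3
      rw [h3, zero_mul, add_zero] at hkk
      have h0 : g 0 = 0 := (mul_eq_zero.1 hkk).resolve_right hCκ
      apply hg
      ext1 n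
      fin_cases n <;> simp [h0, hg1, hg2, h3]
    refine ⟨κprime / κ, ?_⟩
    ext1 k
    apply mul_left_cancel₀ (mul_ne_zero hg3 hCκ)
    rw [Pi.smul_apply, smul_eq_C_mul]
    have : (C κ : K[X]) * C (κprime / κ) = C κprime := by
      rw [← C_mul, mul_div_cancel₀ _ hκ0]
    linear_combination C κ * rel2 k - P k * hkk - g 3 * P k * this
  -- all degrees at most j
  have hPne : ∀ k, P k ≠ 0 := by
    intro k hk
    apply step1
    have hs := hP.sum
    rw [Fin.sum_univ_four] at hs
    fin_cases k
    · simp only [Fin.zero_eta] at hk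
      exact ⟨1, 0, 0, by simp, by simp [hk]⟩
    · simp only [Fin.mk_one] at hk
      exact ⟨0, 1, 0, by simp, by simp [hk]⟩
    · simp only [Fin.reduceFinMk] at hk
      exact ⟨0, 0, 1, by simp, by simp [hk]⟩
    · simp only [Fin.reduceFinMk] at hk
      exact ⟨1, 1, 1, by simp, by simpa [hk] using hs⟩
  have hdeg : ∀ k, ex k + ey k + ez k ≤ j := by
    intro k
    by_contra hcon
    have := hP.deg k
    rw [show j + 1 - (ex k + ey k + ez k) = 0 by omega] at this
    exact hPne k (by simpa [mem_degreeLT] using this)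
  -- dimension count
  have fin : ∀ n, FiniteDimensional K (degreeLT K n) := fun n =>
    LinearEquiv.finiteDimensional (degreeLTEquiv K n).symm
  have frk : ∀ n, Module.finrank K (degreeLT K n) = n := fun n => by
    rw [(degreeLTEquiv K n).finrank_eq]; simp
  have hker : Module.finrank K (LinearMap.ker (auxPhi K ex ey ez j)) = 1 := by
    have hmem : (fun k => (⟨P k, hP.deg k⟩ : degreeLT K (j + 1 - (ex k + ey k + ez k)))) ∈
        LinearMap.ker (auxPhi K ex ey ez j) := by
      rw [LinearMap.mem_ker, auxPhi_apply]; exact hP.sum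
    refine finrank_eq_one (⟨_, hmem⟩ : LinearMap.ker (auxPhi K ex ey ez j)) ?_ ?_
    · intro h0
      have := congrArg (fun v : LinearMap.ker (auxPhi K ex ey ez j) => ((v.1 0 : _) : K[X])) h0
      exact hPne 0 (by simpa using this)
    · rintro ⟨v, hv⟩
      obtain ⟨t, ht⟩ := step3 (fun k => (v k : K[X])) ⟨fun k => (v k).2, by
        rwa [LinearMap.mem_ker, auxPhi_apply] at hv⟩
      refine ⟨t, ?_⟩
      ext k : 3
      have := congrFun ht k
      simp [this]
  have hrn := LinearMap.finrank_range_add_finrank_ker (auxPhi K ex ey ez j)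
  rw [hker, Module.finrank_pi_fintype] at hrn
  simp only [frk] at hrn
  have hψr : Module.finrank K (LinearMap.range (auxPhi K ex ey ez j)) + 1 = j + 1 := by
    set ψr := ψ.comp (degreeLT K (j + 1)).subtype with hψr
    have hmap : (LinearMap.ker ψr).map (degreeLT K (j + 1)).subtype =
        LinearMap.range (auxPhi K ex ey ez j) := by
      ext p
      constructor
      · rintro ⟨⟨p, hp⟩, hp0, rfl⟩
        exact hrange p hp hp0
      · intro hp
        exact ⟨⟨p, auxPhi_range_le K ex ey ez j hp⟩, hψprime hp, rfl⟩
    have h1 := LinearMap.finrank_range_add_finrank_ker ψr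
    have hsurj : LinearMap.range ψr = ⊤ := by
      rw [LinearMap.range_eq_top]
      apply LinearMap.surjective
      intro h0
      exact hψb (LinearMap.congr_fun h0 ⟨b0, hb0⟩)
    rw [hsurj, finrank_top, Module.finrank_self, frk] at h1
    rw [← hmap, Submodule.finrank_map_subtype_eq]
    omega
  rw [Fin.sum_univ_four] at hrn
  have d0 := hdeg 0
  have d1 := hdeg 1
  have d2 := hdeg 2
  have d3 := hdeg 3
  subst hex hey hez
  simp at hrn d0 d1 d2 d3
  omega

/-- Restriction to the line, dehomogenized. -/
noncomputable def auxphi (K : Type*) [Field K] : MvPolynomial (Fin 3) K →ₐ[K] Polynomial K :=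
  MvPolynomial.aeval ![Polynomial.X, 1, Polynomial.X + 1]

noncomputable def auxMon (K : Type*) [Field K] (x y z : ℕ) : MvPolynomial (Fin 3) K :=
  MvPolynomial.X 0 ^ x * MvPolynomial.X 1 ^ y * MvPolynomial.X 2 ^ z

noncomputable def auxL (K : Type*) [Field K] : MvPolynomial (Fin 3) K :=
  MvPolynomial.X 0 + MvPolynomial.X 1 - MvPolynomial.X 2

noncomputable def auxHG (K : Type*) [Field K] (n d : ℕ) : Submodule K (MvPolynomial (Fin 3) K) :=
  if d ≤ n then MvPolynomial.homogeneousSubmodule (Fin 3) K (n - d) else ⊥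

theorem auxHG_mem {K : Type*} [Field K] {n d : ℕ} (h : d ≤ n) {G : MvPolynomial (Fin 3) K} :
    G ∈ auxHG K n d ↔ G.IsHomogeneous (n - d) := by
  simp [auxHG, h, MvPolynomial.mem_homogeneousSubmodule]

theorem auxHG_mem_not {K : Type*} [Field K] {n d : ℕ} (h : ¬ d ≤ n) {G : MvPolynomial (Fin 3) K} :
    G ∈ auxHG K n d ↔ G = 0 := by
  simp [auxHG, h]

theorem auxMon_hom (K : Type*) [Field K] (x y z : ℕ) :
    (auxMon K x y z).IsHomogeneous (x + y + z) := by
  unfold auxMon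
  exact ((MvPolynomial.isHomogeneous_X_pow 0 x).mul (MvPolynomial.isHomogeneous_X_pow 1 y)).mul
    (MvPolynomial.isHomogeneous_X_pow 2 z)

theorem auxMon_phi (K : Type*) [Field K] (x y z : ℕ) :
    auxphi K (auxMon K x y z) = auxf K x z := by
  simp [auxphi, auxMon, auxf]

theorem auxMon_mul (K : Type*) [Field K] (x y z x' y' z' : ℕ) :
    auxMon K x y z * auxMon K x' y' z' = auxMon K (x + x') (y + y') (z + z') := by
  unfold auxMon; ring

theorem auxL_hom (K : Type*) [Field K] : (auxL K).IsHomogeneous 1 := by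
  unfold auxL
  exact ((MvPolynomial.isHomogeneous_X _ 0).add (MvPolynomial.isHomogeneous_X _ 1)).sub
    (MvPolynomial.isHomogeneous_X _ 2)

theorem auxL_phi (K : Type*) [Field K] : auxphi K (auxL K) = 0 := by
  simp [auxphi, auxL]

theorem auxL_ne (K : Type*) [Field K] : auxL K ≠ 0 := by
  intro h
  have := congrArg (MvPolynomial.eval ![1, 0, 0]) h
  simp [auxL] at this

theorem auxphi_deg {K : Type*} [Field K] {n : ℕ} {G : MvPolynomial (Fin 3) K}
    (hG : G.IsHomogeneous n) : auxphi K G ∈ Polynomial.degreeLT K (n + 1) := by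
  rw [Polynomial.mem_degreeLT]
  have h := MvPolynomial.aeval_natDegree_le (n := 1) G hG.totalDegree_le
    ![(Polynomial.X : Polynomial K), 1, Polynomial.X + 1] (by
      intro i
      fin_cases i
      · simp
      · simp
      · simpa using (Polynomial.natDegree_X_add_C (1 : K)).le)
  rw [mul_one] at h
  refine lt_of_le_of_lt Polynomial.degree_le_natDegree ?_
  have : (MvPolynomial.aeval ![(Polynomial.X : Polynomial K), 1, Polynomial.X + 1] G).natDegree
    < n + 1 := by omega
  exact_mod_cast this

theorem auxphi_HG {K : Type*} [Field K] {n d : ℕ} {G : MvPolynomial (Fin 3) K}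
    (hG : G ∈ auxHG K n d) : auxphi K G ∈ Polynomial.degreeLT K (n + 1 - d) := by
  by_cases h : d ≤ n
  · rw [auxHG_mem h] at hG
    have := auxphi_deg hG
    rwa [show n - d + 1 = n + 1 - d by omega] at this
  · rw [auxHG_mem_not h] at hG
    rw [hG, map_zero]; exact Submodule.zero_mem _

theorem aux_lift {K : Type*} [Field K] {n : ℕ} {p : Polynomial K} (hp : p.natDegree ≤ n) :
    ∃ G : MvPolynomial (Fin 3) K, G.IsHomogeneous n ∧ auxphi K G = p := by
  refine ⟨MvPolynomial.aeval ![MvPolynomial.X 0, MvPolynomial.X 1] (p.homogenize n), ?_, ?_⟩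
  · have := (Polynomial.isHomogeneous_homogenize (n := n) p).aeval
      ![(MvPolynomial.X 0 : MvPolynomial (Fin 3) K), MvPolynomial.X 1] (n := 1) (by
        intro i
        fin_cases i
        · exact MvPolynomial.isHomogeneous_X _ 0
        · exact MvPolynomial.isHomogeneous_X _ 1)
    rwa [one_mul] at this
  · rw [← AlgHom.comp_apply, MvPolynomial.comp_aeval]
    conv_rhs => rw [← Polynomial.aeval_homogenize_X_one p hp]
    congr 2
    funext i
    fin_cases i <;> simp [auxphi]

theorem aux_lift_HG {K : Type*} [Field K] {n d : ℕ} {p : Polynomial K}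
    (hp : p ∈ Polynomial.degreeLT K (n + 1 - d)) :
    ∃ G ∈ auxHG K n d, auxphi K G = p := by
  by_cases h : d ≤ n
  · obtain ⟨G, hG, e⟩ := aux_lift (K := K) (n := n - d) (p := p) (by
      rw [Polynomial.mem_degreeLT] at hp
      by_cases h0 : p = 0
      · simp [h0]
      · have := (Polynomial.natDegree_lt_iff_degree_lt h0).2 hp
        omega)
    exact ⟨G, (auxHG_mem h).2 hG, e⟩
  · rw [Polynomial.mem_degreeLT, show n + 1 - d = 0 by omega] at hp
    have : p = 0 := by
      by_contra h0
      have := (Polynomial.natDegree_lt_iff_degree_lt h0).2 hp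
      omega
    exact ⟨0, Submodule.zero_mem _, by simp [this]⟩

theorem aux_ker {K : Type*} [Field K] {n : ℕ} {G : MvPolynomial (Fin 3) K}
    (hG : G.IsHomogeneous n) (h : auxphi K G = 0) : ∃ H, G = auxL K * H := by
  set G2 : MvPolynomial (Fin 2) K :=
    MvPolynomial.aeval ![MvPolynomial.X 0, MvPolynomial.X 1,
      MvPolynomial.X 0 + MvPolynomial.X 1] G with hG2
  have h2 : G2.IsHomogeneous n := by
    have := hG.aeval ![(MvPolynomial.X 0 : MvPolynomial (Fin 2) K), MvPolynomial.X 1,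
      MvPolynomial.X 0 + MvPolynomial.X 1] (n := 1) (by
        intro i
        fin_cases i
        · exact MvPolynomial.isHomogeneous_X _ 0
        · exact MvPolynomial.isHomogeneous_X _ 1
        · exact (MvPolynomial.isHomogeneous_X _ 0).add (MvPolynomial.isHomogeneous_X _ 1))
    rwa [one_mul] at this
  have h3 : MvPolynomial.aeval ![Polynomial.X, 1] G2 = (0 : Polynomial K) := by
    rw [← h, hG2, ← AlgHom.comp_apply, MvPolynomial.comp_aeval, auxphi]
    congr 2
    funext i
    fin_cases i <;> simp
  have h4 := Polynomial.homogenize_eq_of_isHomogeneous h2 h3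
  rw [Polynomial.homogenize_zero] at h4
  have h5 : (MvPolynomial.aeval ![(MvPolynomial.X 0 : MvPolynomial (Fin 3) K), MvPolynomial.X 1]) G2
      = 0 := by rw [← h4, map_zero]
  have h6 : Ideal.Quotient.mkₐ K (Ideal.span {auxL K}) G = 0 := by
    rw [← map_zero (Ideal.Quotient.mkₐ K (Ideal.span {auxL K})), ← h5, hG2]
    conv_rhs => rw [← AlgHom.comp_apply, ← AlgHom.comp_apply]
    congr 1
    apply MvPolynomial.algHom_ext
    intro i
    fin_cases i
    · simp
    · simp
    · have h8 : Ideal.Quotient.mkₐ K (Ideal.span {auxL K}) (MvPolynomial.X 2) =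
          Ideal.Quotient.mkₐ K (Ideal.span {auxL K}) (MvPolynomial.X 0 + MvPolynomial.X 1) := by
        refine Ideal.Quotient.eq.2 ?_
        rw [Ideal.mem_span_singleton]
        exact ⟨-1, by unfold auxL; ring⟩
      simpa [-Ideal.Quotient.mkₐ_eq_mk] using h8
  have h7 := Ideal.Quotient.eq_zero_iff_mem.1 h6
  exact Ideal.mem_span_singleton.1 h7

theorem aux_comp {K : Type*} [Field K] {n d : ℕ} {F : MvPolynomial (Fin 3) K}
    (hF : F.IsHomogeneous d) (G : MvPolynomial (Fin 3) K) :
    ∃ G' ∈ auxHG K n d, MvPolynomial.homogeneousComponent n (G * F) = G' * F := by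
  classical
  let _ := MvPolynomial.gradedAlgebra (σ := Fin 3) (R := K)
  have h1 := DirectSum.coe_decompose_mul_of_right_mem
    (MvPolynomial.homogeneousSubmodule (Fin 3) K) n (a := G) (b := F) (i := d) hF
  have h2 : MvPolynomial.homogeneousComponent n (G * F) =
    (DirectSum.decompose (MvPolynomial.homogeneousSubmodule (Fin 3) K) (G * F) n : _) :=
    (MvPolynomial.decomposition.decompose'_apply (G * F) n).symm
  rw [h2, h1]
  by_cases h : d ≤ n
  · rw [if_pos h]
    exact ⟨_, (auxHG_mem h).2 ((MvPolynomial.mem_homogeneousSubmodule _ _).1 (SetLike.coe_mem _)), rfl⟩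
  · rw [if_neg h]
    exact ⟨0, Submodule.zero_mem _, by simp⟩

theorem auxf_coprime {K : Type*} [Field K] {x1 z1 x2 z2 : ℕ} (hx : x1 = 0 ∨ x2 = 0)
    (hz : z1 = 0 ∨ z2 = 0) : IsCoprime (auxf K x1 z1) (auxf K x2 z2) := by
  have hc : IsCoprime (Polynomial.X : Polynomial K) (Polynomial.X + 1) := ⟨-1, 1, by ring⟩
  unfold auxf
  rcases hx with rfl | rfl <;> rcases hz with rfl | rfl <;> simp
  · exact isCoprime_one_left
  · exact hc.symm.pow
  · exact hc.pow
  · exact isCoprime_one_right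

theorem auxf_mul {K : Type*} [Field K] (x z x' z' : ℕ) :
    auxf K x z * auxf K x' z' = auxf K (x + x') (z + z') := by
  unfold auxf; ring

theorem aux_pair {K : Type*} [Field K] (xk yk zk xl yl zl j : ℕ) (p p' : Polynomial K)
    (hp : p ∈ Polynomial.degreeLT K (j + 1 - (xk + yk + zk)))
    (hp' : p' ∈ Polynomial.degreeLT K (j + 1 - (xl + yl + zl)))
    (h : p * auxf K xk zk + p' * auxf K xl zl = 0) :
    ∃ G ∈ auxHG K j (xk + yk + zk), ∃ G' ∈ auxHG K j (xl + yl + zl),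
      G * auxMon K xk yk zk + G' * auxMon K xl yl zl = 0 ∧ auxphi K G = p ∧ auxphi K G' = p' := by
  obtain ⟨x1, x2, xm, rfl, rfl, hx⟩ : ∃ x1 x2 xm, xk = xm + x2 ∧ xl = xm + x1 ∧ (x1 = 0 ∨ x2 = 0) :=
    ⟨xl - xk, xk - xl, min xk xl, by omega, by omega, by omega⟩
  obtain ⟨y1, y2, ym, rfl, rfl, hy⟩ : ∃ x1 x2 xm, yk = xm + x2 ∧ yl = xm + x1 ∧ (x1 = 0 ∨ x2 = 0) :=
    ⟨yl - yk, yk - yl, min yk yl, by omega, by omega, by omega⟩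
  obtain ⟨z1, z2, zm, rfl, rfl, hz⟩ : ∃ x1 x2 xm, zk = xm + x2 ∧ zl = xm + x1 ∧ (x1 = 0 ∨ x2 = 0) :=
    ⟨zl - zk, zk - zl, min zk zl, by omega, by omega, by omega⟩
  have hcop := auxf_coprime (K := K) hx hz
  have h1 : p * auxf K x2 z2 + p' * auxf K x1 z1 = 0 := by
    apply mul_left_cancel₀ (auxf_monic K xm zm).ne_zero
    rw [← auxf_mul, ← auxf_mul] at h
    linear_combination h
  obtain ⟨s, rfl⟩ : auxf K x1 z1 ∣ p := by
    refine hcop.dvd_of_dvd_mul_right ⟨-p', ?_⟩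
    linear_combination h1
  have h2 : p' = - (auxf K x2 z2 * s) := by
    apply mul_left_cancel₀ (auxf_monic K x1 z1).ne_zero
    linear_combination h1
  subst h2
  by_cases hs : s = 0
  · subst hs
    exact ⟨0, Submodule.zero_mem _, 0, Submodule.zero_mem _, by simp, by simp, by simp⟩
  have d1 : x1 + z1 + s.natDegree < j + 1 - (xm + x2 + (ym + y2) + (zm + z2)) := by
    rw [Polynomial.mem_degreeLT, ← Polynomial.natDegree_lt_iff_degree_lt
      (mul_ne_zero (auxf_monic K x1 z1).ne_zero hs), (auxf_monic K x1 z1).natDegree_mul' hs,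
      auxf_natDegree] at hp
    exact hp
  have d2 : x2 + z2 + s.natDegree < j + 1 - (xm + x1 + (ym + y1) + (zm + z1)) := by
    rw [Polynomial.mem_degreeLT, Polynomial.degree_neg, ← Polynomial.natDegree_lt_iff_degree_lt
      (mul_ne_zero (auxf_monic K x2 z2).ne_zero hs), (auxf_monic K x2 z2).natDegree_mul' hs,
      auxf_natDegree] at hp'
    exact hp'
  obtain ⟨S, hS, rfl⟩ := aux_lift (K := K)
    (n := j - (xm + x1 + x2 + (ym + y1 + y2) + (zm + z1 + z2))) (p := s) (by omega)
  refine ⟨auxMon K x1 y1 z1 * S, ?_, -(auxMon K x2 y2 z2 * S), ?_, ?_, ?_, ?_⟩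
  · rw [auxHG_mem (by omega)]
    have := (auxMon_hom K x1 y1 z1).mul hS
    have e : ∀ n m : ℕ, n = m → ∀ T : MvPolynomial (Fin 3) K, T.IsHomogeneous n →
      T.IsHomogeneous m := by rintro n m rfl T hT; exact hT
    refine e _ _ ?_ _ this
    omega
  · rw [auxHG_mem (by omega)]
    have := ((auxMon_hom K x2 y2 z2).mul hS).neg
    have e : ∀ n m : ℕ, n = m → ∀ T : MvPolynomial (Fin 3) K, T.IsHomogeneous n →
      T.IsHomogeneous m := by rintro n m rfl T hT; exact hT
    refine e _ _ ?_ _ this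
    omega
  · rw [← auxMon_mul, ← auxMon_mul]; ring
  · rw [map_mul, auxMon_phi]
  · rw [map_neg, map_mul, auxMon_phi]


theorem aux_final {K : Type*} [Field K] [CharZero K] (a b c α β γ d : ℕ)
    (ex ey ez : Fin 4 → ℕ) (hex : ex = ![a, 0, 0, α]) (hey : ey = ![0, b, 0, β])
    (hez : ez = ![0, 0, c, γ]) (I : Ideal (MvPolynomial (Fin 3) K))
    (hI : I = Ideal.span (Set.range fun k => auxMon K (ex k) (ey k) (ez k)))
    (h1 : ¬ mulMapInj 3 K I (auxL K) d) (h2 : ¬ mulMapSurj 3 K I (auxL K) d) :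
    a + b + c + α + β + γ = 3 * (d + 2) := by
  classical
  have hFI : ∀ k, auxMon K (ex k) (ey k) (ez k) ∈ I := fun k => by
    rw [hI]; exact Ideal.subset_span ⟨k, rfl⟩
  have hsumI : ∀ H : Fin 4 → MvPolynomial (Fin 3) K,
      ∑ k, H k * auxMon K (ex k) (ey k) (ez k) ∈ I := fun H =>
    Ideal.sum_mem _ fun k _ => Ideal.mul_mem_left _ _ (hFI k)
  let Lf : Submodule K (Fin 4 → Polynomial K) :=
    { carrier := {P | ∃ G : Fin 4 → MvPolynomial (Fin 3) K,
        (∀ k, G k ∈ auxHG K (d + 1) (ex k + ey k + ez k)) ∧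
        ∑ k, G k * auxMon K (ex k) (ey k) (ez k) = 0 ∧ ∀ k, auxphi K (G k) = P k}
      zero_mem' := ⟨0, fun k => Submodule.zero_mem _, by simp, by simp⟩
      add_mem' := by
        rintro P Q ⟨G, g1, g2, g3⟩ ⟨H, h1, h2, h3⟩
        refine ⟨G + H, fun k => Submodule.add_mem _ (g1 k) (h1 k), ?_, fun k => ?_⟩
        · simp only [Pi.add_apply, add_mul, Finset.sum_add_distrib, g2, h2, add_zero]
        · simp [g3, h3]
      smul_mem' := by
        rintro r P ⟨G, g1, g2, g3⟩
        refine ⟨r • G, fun k => Submodule.smul_mem _ _ (g1 k), ?_, fun k => ?_⟩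
        · simp only [Pi.smul_apply, smul_mul_assoc, ← Finset.smul_sum, g2, smul_zero]
        · simp [g3] }
  have hLf : ∀ k l : Fin 4, k ≠ l → ∀ p p' : Polynomial K,
      p ∈ Polynomial.degreeLT K (d + 1 + 1 - (ex k + ey k + ez k)) →
      p' ∈ Polynomial.degreeLT K (d + 1 + 1 - (ex l + ey l + ez l)) →
      p * auxf K (ex k) (ez k) + p' * auxf K (ex l) (ez l) = 0 →
      Pi.single k p + Pi.single l p' ∈ Lf := by
    intro k l hkl p p' hp hp' h
    obtain ⟨G, hG, G', hG', e, eG, eG'⟩ := aux_pair _ _ _ _ _ _ _ p p' hp hp' h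
    refine ⟨Pi.single k G + Pi.single l G', fun m => ?_, ?_, fun m => ?_⟩
    · refine Submodule.add_mem _ ?_ ?_
      · by_cases hm : m = k
        · subst hm; simpa using hG
        · simp [hm]
      · by_cases hm : m = l
        · subst hm; simpa using hG'
        · simp [hm]
    · rw [← e]
      simp [add_mul, Finset.sum_add_distrib, Pi.single_apply, ite_mul]
    · rw [← eG, ← eG']
      simp only [Pi.add_apply, map_add, Pi.single_apply]
      split_ifs <;> simp
  -- the syzygy
  unfold mulMapInj at h1
  push Not at h1
  obtain ⟨x, hx, hLx, hx0⟩ := h1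
  obtain ⟨g, hg, rfl⟩ := hx
  have hg : g.IsHomogeneous d := hg
  have hLg : auxL K * g ∈ I := by
    rw [← Ideal.Quotient.eq_zero_iff_mem, map_mul]; exact hLx
  have hgI : g ∉ I := fun h => hx0 (Ideal.Quotient.eq_zero_iff_mem.2 h)
  have hLgh : (auxL K * g).IsHomogeneous (d + 1) := by
    rw [add_comm]; exact (auxL_hom K).mul hg
  obtain ⟨G, hG, eG⟩ : ∃ G : Fin 4 → MvPolynomial (Fin 3) K,
      (∀ k, G k ∈ auxHG K (d + 1) (ex k + ey k + ez k)) ∧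
      auxL K * g = ∑ k, G k * auxMon K (ex k) (ey k) (ez k) := by
    rw [hI] at hLg
    obtain ⟨G0, e0⟩ := (Ideal.mem_span_range_iff_exists_fun).1 hLg
    choose G hG eG using fun k =>
      aux_comp (n := d + 1) (auxMon_hom K (ex k) (ey k) (ez k)) (G0 k)
    refine ⟨G, hG, ?_⟩
    rw [← MvPolynomial.homogeneousComponent_eq_self hLgh, ← e0, map_sum]
    exact Finset.sum_congr rfl fun k _ => eG k
  have hP : AuxE K ex ey ez (d + 1) (fun k => auxphi K (G k)) := by
    refine ⟨fun k => auxphi_HG (hG k), ?_⟩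
    have := congrArg (auxphi K) eG
    rw [map_mul, auxL_phi, zero_mul, map_sum] at this
    simp only [map_mul, auxMon_phi] at this
    exact this.symm
  have hPL : (fun k => auxphi K (G k)) ∉ Lf := by
    rintro ⟨G', hG', e', ep⟩
    have : ∀ k, ∃ H, G k - G' k = auxL K * H := by
      intro k
      have hm := Submodule.sub_mem _ (hG k) (hG' k)
      by_cases hd : ex k + ey k + ez k ≤ d + 1
      · exact aux_ker ((auxHG_mem hd).1 hm) (by rw [map_sub, ep, sub_self])
      · exact ⟨0, by rw [(auxHG_mem_not hd).1 hm, mul_zero]⟩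
    choose H hH using this
    apply hgI
    have : g = ∑ k, H k * auxMon K (ex k) (ey k) (ez k) := by
      apply mul_left_cancel₀ (auxL_ne K)
      rw [eG, ← sub_zero (∑ k, G k * _), ← e', ← Finset.sum_sub_distrib, Finset.mul_sum]
      refine Finset.sum_congr rfl fun k _ => ?_
      rw [← sub_mul, hH, mul_assoc]
    rw [this]
    exact hsumI H
  -- the missing form
  unfold mulMapSurj at h2
  push Not at h2
  obtain ⟨y, hy, hyn⟩ := h2
  obtain ⟨B, hB, rfl⟩ := hy
  have hB : B.IsHomogeneous (d + 1) := hB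
  have hb : auxphi K B ∉ LinearMap.range (auxPhi K ex ey ez (d + 1)) := by
    rintro ⟨v, hv⟩
    rw [auxPhi_apply] at hv
    choose S hS eS using fun k => aux_lift_HG (v k).2
    have hSh : ∀ k, (S k * auxMon K (ex k) (ey k) (ez k)).IsHomogeneous (d + 1) := by
      intro k
      have hm := hS k
      by_cases hd : ex k + ey k + ez k ≤ d + 1
      · have := ((auxHG_mem hd).1 hm).mul (auxMon_hom K (ex k) (ey k) (ez k))
        rwa [Nat.sub_add_cancel hd] at this
      · rw [(auxHG_mem_not hd).1 hm, zero_mul]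
        exact MvPolynomial.isHomogeneous_zero _ _ _
    obtain ⟨H, hH⟩ := aux_ker (n := d + 1)
      (G := B - ∑ k, S k * auxMon K (ex k) (ey k) (ez k))
      (hB.sub (MvPolynomial.IsHomogeneous.sum _ _ _ fun k _ => hSh k)) (by
        rw [map_sub, map_sum, ← hv]
        simp only [map_mul, auxMon_phi, eS, sub_self])
    obtain ⟨H', hH', eH'⟩ := aux_comp (n := d + 1) (auxL_hom K) H
    rw [mul_comm, ← hH, MvPolynomial.homogeneousComponent_eq_self
      (hB.sub (MvPolynomial.IsHomogeneous.sum _ _ _ fun k _ => hSh k))] at eH'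
    rw [auxHG_mem (by omega), Nat.add_sub_cancel] at hH'
    refine hyn (Ideal.Quotient.mk I H') ⟨H', hH', rfl⟩ ?_
    rw [← map_mul]
    refine Ideal.Quotient.eq.2 ?_
    have : auxL K * H' - B = - ∑ k, S k * auxMon K (ex k) (ey k) (ez k) := by
      linear_combination -eH'
    change auxL K * H' - B ∈ I
    rw [this]
    exact I.neg_mem (hsumI S)
  exact aux_main a b c α β γ (d + 1) ex ey ez hex hey hez Lf hLf _ hP hPL _ (auxphi_deg hB) hb

open MvPolynomial

/-- Over an algebraically closed field of characteristic zero, if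
`I = (x^a, y^b, z^c, x^α y^β z^γ)` is not a complete intersection and `R/I` fails
to have the WLP, then `a+b+c+α+β+γ ≡ 0 (mod 3)`. -/
theorem stmt_13 {K : Type*} [Field K] [IsAlgClosed K] [CharZero K]
    (a b c α β γ : ℕ) (hα : α < a) (hβ : β < b) (hγ : γ < c) :
    letI I : Ideal (MvPolynomial (Fin 3) K) :=
      Ideal.span {X 0 ^ a, X 1 ^ b, X 2 ^ c, X 0 ^ α * X 1 ^ β * X 2 ^ γ}
    (¬ ∃ f g h : MvPolynomial (Fin 3) K, I = Ideal.span {f, g, h}) →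
    ¬ hasWLP 3 K I → (a + b + c + α + β + γ) % 3 = 0 := by
  intro _ hW
  by_contra hne
  apply hW
  refine ⟨auxL K, auxL_hom K, fun d => ?_⟩
  by_contra hd
  rw [not_or] at hd
  have := aux_final a b c α β γ d ![a, 0, 0, α] ![0, b, 0, β] ![0, 0, c, γ] rfl rfl rfl _ (by
    congr 1
    ext F
    simp only [Set.mem_insert_iff, Set.mem_singleton_iff, Set.mem_range]
    constructor
    · rintro (rfl | rfl | rfl | rfl)
      · exact ⟨0, by simp [auxMon]⟩
      · exact ⟨1, by simp [auxMon]⟩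
      · exact ⟨2, by simp [auxMon]⟩
      · exact ⟨3, by simp [auxMon]⟩
    · rintro ⟨k, rfl⟩
      fin_cases k <;> simp [auxMon]) hd.1 hd.2
  omega
end

section
/- Let K be an algebraically closed field of characteristic zero and R = K[x,y,z]. Let I = (x^a, y^b, z^c, x^α y^β z^γ) with 0 < α < a, 0 < β < b, 0 < γ < c, and assume R/I is level, i.e. a − α = b − β = c − γ. If R/I fails to have the WLP, then a + b + c ≡ 0 (mod 3) and α + β + γ ≡ 0 (mod 3). -/
open MvPolynomial

namespace WLPaux

variable {K : Type*} [Field K] {a b c α β γ : ℕ}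

/-- Dehomogenised forms of degree `j` divisible by `x^p y^q z^r`. -/
noncomputable def Cs (K : Type*) [Field K] (j p q r : ℕ) : Submodule K (Polynomial K) where
  carrier := {P | (Polynomial.X : Polynomial K) ^ p ∣ P ∧ (Polynomial.X + 1 : Polynomial K) ^ r ∣ P ∧
    P ∈ Polynomial.degreeLT K (j + 1 - q)}
  add_mem' := fun ha hb => ⟨dvd_add ha.1 hb.1, dvd_add ha.2.1 hb.2.1, Submodule.add_mem _ ha.2.2 hb.2.2⟩
  zero_mem' := ⟨dvd_zero _, dvd_zero _, Submodule.zero_mem _⟩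
  smul_mem' := fun c _ h => ⟨by rw [Polynomial.smul_eq_C_mul]; exact Dvd.dvd.mul_left h.1 _,
    by rw [Polynomial.smul_eq_C_mul]; exact Dvd.dvd.mul_left h.2.1 _,
    Submodule.smul_mem _ c h.2.2⟩

theorem mem_Cs {j p q r : ℕ} {P : Polynomial K} : P ∈ Cs K j p q r ↔
    (Polynomial.X : Polynomial K) ^ p ∣ P ∧ (Polynomial.X + 1 : Polynomial K) ^ r ∣ P ∧
    (P = 0 ∨ P.natDegree + q ≤ j) := by
  have : P ∈ Polynomial.degreeLT K (j + 1 - q) ↔ (P = 0 ∨ P.natDegree + q ≤ j) := by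
    rw [Polynomial.mem_degreeLT]
    by_cases h : P = 0
    · simp [h]
    · rw [Polynomial.degree_eq_natDegree h, Nat.cast_lt]
      simp only [h, false_or]
      omega
  rw [← this]
  rfl

theorem X1_ne : (Polynomial.X + 1 : Polynomial K) ≠ 0 := by
  have := Polynomial.X_add_C_ne_zero (1 : K)
  simpa using this

theorem cop : IsCoprime (Polynomial.X : Polynomial K) (Polynomial.X + 1) :=
  ⟨-1, 1, by ring⟩

theorem Cs_mul {j p q r j' p' q' r' : ℕ} {P Q : Polynomial K} (hP : P ∈ Cs K j p q r)
    (hQ : Q ∈ Cs K j' p' q' r') : P * Q ∈ Cs K (j + j') (p + p') (q + q') (r + r') := by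
  rw [mem_Cs] at *
  refine ⟨by rw [pow_add]; exact mul_dvd_mul hP.1 hQ.1,
    by rw [pow_add]; exact mul_dvd_mul hP.2.1 hQ.2.1, ?_⟩
  rcases hP.2.2 with h | h
  · simp [h]
  rcases hQ.2.2 with h' | h'
  · simp [h']
  right
  have := Polynomial.natDegree_mul_le (p := P) (q := Q)
  omega

theorem Cs_sup {j p q r p' q' r' : ℕ} {P : Polynomial K} (hP : P ∈ Cs K j p q r)
    (hQ : P ∈ Cs K j p' q' r') : P ∈ Cs K j (max p p') (max q q') (max r r') := by
  rw [mem_Cs] at *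
  refine ⟨?_, ?_, ?_⟩
  · rcases max_choice p p' with h | h <;> rw [h]
    exacts [hP.1, hQ.1]
  · rcases max_choice r r' with h | h <;> rw [h]
    exacts [hP.2.1, hQ.2.1]
  · rcases hP.2.2 with h | h
    · exact Or.inl h
    rcases hQ.2.2 with h' | h'
    · exact Or.inl h'
    right; omega

theorem Cs_mono {j p q r j' p' q' r' : ℕ} {P : Polynomial K} (hP : P ∈ Cs K j p q r)
    (hj : j ≤ j') (hp : p' ≤ p) (hq : q' ≤ q) (hr : r' ≤ r) : P ∈ Cs K j' p' q' r' := by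
  rw [mem_Cs] at *
  refine ⟨(pow_dvd_pow _ hp).trans hP.1, (pow_dvd_pow _ hr).trans hP.2.1, ?_⟩
  rcases hP.2.2 with h | h
  · exact Or.inl h
  · right; omega

/-- The derivation `t (t+1) d/dt`. -/
noncomputable def D (P : Polynomial K) : Polynomial K :=
  Polynomial.X * (Polynomial.X + 1) * Polynomial.derivative P

theorem D_mul (P Q : Polynomial K) : D (P * Q) = D P * Q + P * D Q := by
  simp only [D, Polynomial.derivative_mul]; ring
theorem D_add (P Q : Polynomial K) : D (P + Q) = D P + D Q := by
  simp only [D, Polynomial.derivative_add]; ring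
theorem D_sub (P Q : Polynomial K) : D (P - Q) = D P - D Q := by
  simp only [D, Polynomial.derivative_sub]; ring
theorem D_neg (P : Polynomial K) : D (-P) = - D P := by simp [D]
theorem D_zero : D (0 : Polynomial K) = 0 := by simp [D]
theorem D_C (a : K) : D (Polynomial.C a) = 0 := by simp [D]

theorem dvd_D_pow (f P : Polynomial K) (n : ℕ)
    (h1 : f ∣ Polynomial.X * (Polynomial.X + 1)) (h : f ^ n ∣ P) : f ^ n ∣ D P := by
  obtain ⟨Q, rfl⟩ := h
  rw [D_mul]
  refine dvd_add (Dvd.dvd.mul_right ?_ _) (dvd_mul_right _ _)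
  unfold D
  rcases n with _ | n
  · simp
  rw [Polynomial.derivative_pow, Nat.add_sub_cancel]
  obtain ⟨g, hg⟩ := h1
  rw [hg]
  exact ⟨g * Polynomial.C ((n + 1 : ℕ) : K) * Polynomial.derivative f, by ring⟩

theorem Cs_D {j p q r : ℕ} {P : Polynomial K} (hP : P ∈ Cs K j p q r) :
    D P ∈ Cs K (j + 1) p q r := by
  rw [mem_Cs] at *
  refine ⟨dvd_D_pow _ _ _ (dvd_mul_right _ _) hP.1, dvd_D_pow _ _ _ (dvd_mul_left _ _) hP.2.1, ?_⟩
  rcases hP.2.2 with h | h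
  · left; simp [h, D]
  by_cases h0 : P.natDegree = 0
  · left
    rw [Polynomial.eq_C_of_natDegree_eq_zero h0, D_C]
  right
  have h1 := Polynomial.natDegree_derivative_lt h0
  have h2 : (D P).natDegree ≤ 2 + (Polynomial.derivative P).natDegree := by
    unfold D
    refine Polynomial.natDegree_mul_le.trans ?_
    gcongr
    compute_degree
  omega

theorem Cs_param {j p q r : ℕ} {P : Polynomial K} (hP : P ∈ Cs K j p q r) (h0 : P ≠ 0) :
    ∃ Q : Polynomial K, P = Polynomial.X ^ p * (Polynomial.X + 1) ^ r * Q ∧ Q ≠ 0 ∧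
      Q.natDegree + (p + q + r) ≤ j := by
  rw [mem_Cs] at hP
  obtain ⟨h1, h2, h3⟩ := hP
  obtain ⟨Q, rfl⟩ := (cop.pow (m := p) (n := r)).mul_dvd h1 h2
  have hQ : Q ≠ 0 := right_ne_zero_of_mul h0
  refine ⟨Q, rfl, hQ, ?_⟩
  have h4 := h3.resolve_left h0
  have hX : (Polynomial.X : Polynomial K) ^ p ≠ 0 := pow_ne_zero _ Polynomial.X_ne_zero
  have hX1 : (Polynomial.X + 1 : Polynomial K) ^ r ≠ 0 := pow_ne_zero _ X1_ne
  rw [Polynomial.natDegree_mul (mul_ne_zero hX hX1) hQ, Polynomial.natDegree_mul hX hX1,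
    Polynomial.natDegree_pow, Polynomial.natDegree_pow, Polynomial.natDegree_X] at h4
  have : (Polynomial.X + 1 : Polynomial K).natDegree = 1 := by
    simpa using Polynomial.natDegree_X_add_C (1 : K)
  rw [this] at h4
  omega

theorem Cs_of_param {j p q r : ℕ} {Q : Polynomial K} (h : Q.natDegree + (p + q + r) ≤ j) :
    Polynomial.X ^ p * (Polynomial.X + 1) ^ r * Q ∈ Cs K j p q r := by
  rw [mem_Cs]
  refine ⟨⟨_, mul_assoc _ _ _⟩, ⟨Polynomial.X ^ p * Q, by ring⟩, Or.inr ?_⟩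
  have h1 : (Polynomial.X ^ p * (Polynomial.X + 1 : Polynomial K) ^ r).natDegree ≤ p + r := by
    compute_degree
  have := Polynomial.natDegree_mul_le (p := (Polynomial.X ^ p * (Polynomial.X + 1 : Polynomial K) ^ r))
    (q := Q)
  omega

theorem Cs_le_of_ne {j p q r : ℕ} {P : Polynomial K} (hP : P ∈ Cs K j p q r) (h0 : P ≠ 0) :
    p + q + r ≤ j := by
  obtain ⟨Q, _, _, h⟩ := Cs_param hP h0
  omega

theorem Cs_equiv (j p q r : ℕ) :
    Nonempty (Polynomial.degreeLT K (j + 1 - (p + q + r)) ≃ₗ[K] Cs K j p q r) := by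
  have hne : (Polynomial.X ^ p * (Polynomial.X + 1 : Polynomial K) ^ r) ≠ 0 :=
    mul_ne_zero (pow_ne_zero _ Polynomial.X_ne_zero) (pow_ne_zero _ X1_ne)
  let f : Polynomial.degreeLT K (j + 1 - (p + q + r)) →ₗ[K] Cs K j p q r :=
    LinearMap.restrict (LinearMap.mulLeft K (Polynomial.X ^ p * (Polynomial.X + 1 : Polynomial K) ^ r))
      (by
        intro Q hQ
        by_cases h0 : Q = 0
        · simp [h0]
        rw [Polynomial.mem_degreeLT, Polynomial.degree_eq_natDegree h0, Nat.cast_lt] at hQ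
        exact Cs_of_param (by omega))
  refine ⟨LinearEquiv.ofBijective f ⟨?_, ?_⟩⟩
  · intro x y h
    have := congrArg Subtype.val h
    exact Subtype.ext (mul_left_cancel₀ hne this)
  · rintro ⟨P, hP⟩
    by_cases h0 : P = 0
    · exact ⟨0, by ext1; simp [h0]⟩
    obtain ⟨Q, hQ, hQ0, hd⟩ := Cs_param hP h0
    refine ⟨⟨Q, ?_⟩, Subtype.ext hQ.symm⟩
    rw [Polynomial.mem_degreeLT, Polynomial.degree_eq_natDegree hQ0, Nat.cast_lt]
    omega

instance Cs_fin (j p q r : ℕ) : FiniteDimensional K (Cs K j p q r) := by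
  obtain ⟨e⟩ := Cs_equiv (K := K) j p q r
  have := (Polynomial.degreeLTEquiv K (j + 1 - (p + q + r))).symm.finiteDimensional
  exact e.finiteDimensional

theorem Cs_finrank (j p q r : ℕ) : Module.finrank K (Cs K j p q r) = j + 1 - (p + q + r) := by
  obtain ⟨e⟩ := Cs_equiv (K := K) j p q r
  rw [← e.finrank_eq, (Polynomial.degreeLTEquiv K (j + 1 - (p + q + r))).finrank_eq]
  simp

theorem Cs_div {j p q r n : ℕ} {τ : K} (h0 : τ ≠ 0) (h1 : τ + 1 ≠ 0) {Q : Polynomial K}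
    (hne : Q ≠ 0)
    (h : (Polynomial.X - Polynomial.C τ) ^ n * Q ∈ Cs K j p q r) :
    n ≤ j ∧ Q ∈ Cs K (j - n) p q r := by
  rw [mem_Cs] at *
  have hX : (Polynomial.X - Polynomial.C τ) ^ n ≠ 0 := pow_ne_zero _ (Polynomial.X_sub_C_ne_zero τ)
  obtain ⟨h2, h3, h4⟩ := h
  have h4 := h4.resolve_left (mul_ne_zero hX hne)
  rw [Polynomial.natDegree_mul hX hne, Polynomial.natDegree_pow, Polynomial.natDegree_X_sub_C] at h4
  refine ⟨by omega, ?_, ?_, Or.inr (by omega)⟩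
  · refine IsCoprime.dvd_of_dvd_mul_left (IsCoprime.pow ?_) h2
    refine ⟨Polynomial.C τ⁻¹, -Polynomial.C τ⁻¹, ?_⟩
    have : Polynomial.C τ⁻¹ * Polynomial.C τ = (1 : Polynomial K) := by
      rw [← Polynomial.C_mul, inv_mul_cancel₀ h0, Polynomial.C_1]
    linear_combination this
  · refine IsCoprime.dvd_of_dvd_mul_left (IsCoprime.pow ?_) h3
    refine ⟨Polynomial.C (τ + 1)⁻¹, -Polynomial.C (τ + 1)⁻¹, ?_⟩
    have : Polynomial.C (τ + 1)⁻¹ * (Polynomial.C τ + 1) = (1 : Polynomial K) := by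
      rw [← Polynomial.C_1, ← Polynomial.C_add, ← Polynomial.C_mul, inv_mul_cancel₀ h1]
    linear_combination this

theorem exists_tau [CharZero K] {P : Polynomial K} (hP : P ≠ 0) :
    ∃ τ : K, τ ≠ 0 ∧ τ + 1 ≠ 0 ∧ P.eval τ ≠ 0 := by
  have h : Polynomial.X * (Polynomial.X + 1) * P ≠ 0 :=
    mul_ne_zero (mul_ne_zero Polynomial.X_ne_zero X1_ne) hP
  by_contra hc
  push Not at hc
  apply h
  apply Polynomial.zero_of_eval_zero
  intro x
  simp only [Polynomial.eval_mul, Polynomial.eval_X, Polynomial.eval_add, Polynomial.eval_one]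
  by_cases h0 : x = 0
  · simp [h0]
  by_cases h1 : x + 1 = 0
  · simp [h1]
  simp [hc x h0 h1]

/-- Wronskian criterion for two polynomials. -/
theorem wr2 [CharZero K] {P Q : Polynomial K} (hQ : Q ≠ 0)
    (h : P * D Q - Q * D P = 0) : ∃ w : K, P = Polynomial.C w * Q := by
  classical
  have hX : (Polynomial.X * (Polynomial.X + 1) : Polynomial K) ≠ 0 :=
    mul_ne_zero Polynomial.X_ne_zero X1_ne
  obtain ⟨g, P', Q', hg, hc, hP', hQ'⟩ : ∃ g P' Q' : Polynomial K, g ≠ 0 ∧ IsCoprime P' Q' ∧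
      P = g * P' ∧ Q = g * Q' := by
    have hg : EuclideanDomain.gcd P Q ≠ 0 := fun h => hQ (EuclideanDomain.gcd_eq_zero_iff.1 h).2
    obtain ⟨P', hP'⟩ := EuclideanDomain.gcd_dvd_left P Q
    obtain ⟨Q', hQ'⟩ := EuclideanDomain.gcd_dvd_right P Q
    refine ⟨_, P', Q', hg, ?_, hP', hQ'⟩
    have := EuclideanDomain.gcd_eq_gcd_ab P Q
    refine ⟨EuclideanDomain.gcdA P Q, EuclideanDomain.gcdB P Q, ?_⟩
    apply mul_left_cancel₀ hg
    linear_combination -this + EuclideanDomain.gcdA P Q * (-hP') + EuclideanDomain.gcdB P Q * (-hQ')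
  have hw : Polynomial.wronskian P' Q' = 0 := by
    have h1 : (Polynomial.X * (Polynomial.X + 1)) * g ^ 2 * Polynomial.wronskian P' Q' = 0 := by
      rw [← h, hP', hQ']
      simp only [D, Polynomial.wronskian, Polynomial.derivative_mul]
      ring
    exact (mul_eq_zero.1 h1).resolve_left (mul_ne_zero hX (pow_ne_zero _ hg))
  obtain ⟨h1, h2⟩ := hc.wronskian_eq_zero_iff.1 hw
  have e1 := Polynomial.eq_C_of_derivative_eq_zero h1
  have e2 := Polynomial.eq_C_of_derivative_eq_zero h2
  set x := P'.coeff 0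
  set y := Q'.coeff 0
  have hy : y ≠ 0 := by
    intro hy
    apply hQ
    rw [hQ', e2, hy]; simp
  refine ⟨x / y, ?_⟩
  rw [hP', hQ', e1, e2]
  have : Polynomial.C (x / y) * Polynomial.C y = Polynomial.C x := by
    rw [← Polynomial.C_mul, div_mul_cancel₀ _ hy]
  linear_combination -g * this

/-- determinant of three vectors -/
def det3 {R : Type*} [CommRing R] (u v w : Fin 3 → R) : R :=
  u 0 * (v 1 * w 2 - v 2 * w 1) - u 1 * (v 0 * w 2 - v 2 * w 0) + u 2 * (v 0 * w 1 - v 1 * w 0)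

/-- componentwise derivation -/
noncomputable def DD (u : Fin 3 → Polynomial K) : Fin 3 → Polynomial K := fun i => D (u i)

theorem wr3 [CharZero K] (u : Fin 3 → Polynomial K) (h : det3 u (DD u) (DD (DD u)) = 0) :
    ∃ l : Fin 3 → K, l ≠ 0 ∧
      Polynomial.C (l 0) * u 0 + Polynomial.C (l 1) * u 1 + Polynomial.C (l 2) * u 2 = 0 := by
  by_cases h0 : u 0 = 0
  · refine ⟨![1, 0, 0], fun h => by simpa using congrFun h 0, by simp [h0]⟩
  set A := u 0 * D (u 1) - u 1 * D (u 0) with hA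
  set B := u 0 * D (u 2) - u 2 * D (u 0) with hB
  have key : A * D B - B * D A = 0 := by
    have : A * D B - B * D A = u 0 * det3 u (DD u) (DD (DD u)) := by
      rw [hA, hB]
      simp only [D_sub, D_mul, det3, DD]
      ring
    rw [this, h, mul_zero]
  by_cases hB0 : B = 0
  · obtain ⟨w, hw⟩ := wr2 (P := u 2) h0 (by rw [← neg_eq_zero, ← hB0, hB]; ring)
    refine ⟨![w, 0, -1], fun h => by simpa using congrFun h 2, ?_⟩
    simp [hw]
  · obtain ⟨w, hw⟩ := wr2 hB0 key
    obtain ⟨w', hw'⟩ := wr2 (P := u 1 - Polynomial.C w * u 2) h0 (by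
      rw [D_sub, D_mul, D_C]
      rw [hA, hB] at hw
      linear_combination -hw)
    refine ⟨![w', -1, w], fun h => by simpa using congrFun h 1, ?_⟩
    simp
    linear_combination -hw'

/-- Dehomogenised syzygies of degree `j` (the fourth entry is minus the sum of the others). -/
noncomputable def M (K : Type*) [Field K] (a b c α β γ j : ℕ) :
    Submodule K (Fin 3 → Polynomial K) where
  carrier := {v | v 0 ∈ Cs K j a 0 0 ∧ v 1 ∈ Cs K j 0 b 0 ∧ v 2 ∈ Cs K j 0 0 c ∧
    v 0 + v 1 + v 2 ∈ Cs K j α β γ}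
  add_mem' := by
    intro v w hv hw
    refine ⟨add_mem hv.1 hw.1, add_mem hv.2.1 hw.2.1, add_mem hv.2.2.1 hw.2.2.1, ?_⟩
    have := add_mem hv.2.2.2 hw.2.2.2
    simp only [Pi.add_apply]
    convert! this using 1
    ring
  zero_mem' := by
    refine ⟨zero_mem _, zero_mem _, zero_mem _, ?_⟩
    simp
  smul_mem' := by
    intro k v hv
    refine ⟨Submodule.smul_mem _ k hv.1, Submodule.smul_mem _ k hv.2.1,
      Submodule.smul_mem _ k hv.2.2.1, ?_⟩
    have := Submodule.smul_mem _ k hv.2.2.2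
    simpa only [Pi.smul_apply, smul_add] using this

/-- Dehomogenised degree `j` part of the restricted ideal. -/
noncomputable def J (K : Type*) [Field K] (a b c α β γ j : ℕ) : Submodule K (Polynomial K) :=
  Cs K j a 0 0 ⊔ Cs K j 0 b 0 ⊔ Cs K j 0 0 c ⊔ Cs K j α β γ



theorem mem_J {j : ℕ} {P : Polynomial K} : P ∈ J K a b c α β γ j ↔
    ∃ P1 ∈ Cs K j a 0 0, ∃ P2 ∈ Cs K j 0 b 0, ∃ P3 ∈ Cs K j 0 0 c, ∃ P4 ∈ Cs K j α β γ,
      P1 + P2 + P3 + P4 = P := by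
  unfold J
  simp only [Submodule.mem_sup]
  constructor
  · rintro ⟨y, ⟨y', ⟨P1, h1, P2, h2, rfl⟩, P3, h3, rfl⟩, P4, h4, rfl⟩
    exact ⟨P1, h1, P2, h2, P3, h3, P4, h4, rfl⟩
  · rintro ⟨P1, h1, P2, h2, P3, h3, P4, h4, rfl⟩
    exact ⟨_, ⟨_, ⟨P1, h1, P2, h2, rfl⟩, P3, h3, rfl⟩, P4, h4, rfl⟩

theorem J_le (j : ℕ) : J K a b c α β γ j ≤ Cs K j 0 0 0 := by
  intro P hP
  obtain ⟨P1, h1, P2, h2, P3, h3, P4, h4, rfl⟩ := mem_J.1 hP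
  exact add_mem (add_mem (add_mem (Cs_mono h1 le_rfl (Nat.zero_le _) (Nat.zero_le _) (Nat.zero_le _))
    (Cs_mono h2 le_rfl (Nat.zero_le _) (Nat.zero_le _) (Nat.zero_le _)))
    (Cs_mono h3 le_rfl (Nat.zero_le _) (Nat.zero_le _) (Nat.zero_le _)))
    (Cs_mono h4 le_rfl (Nat.zero_le _) (Nat.zero_le _) (Nat.zero_le _))

theorem J_large {j : ℕ} (h : a + b ≤ j) : Cs K j 0 0 0 ≤ J K a b c α β γ j := by
  intro P hP
  rw [mem_J]
  have hm : (Polynomial.X ^ a : Polynomial K).Monic := Polynomial.monic_X_pow a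
  have hPd : P.natDegree ≤ j := by
    rcases (mem_Cs.1 hP).2.2 with h | h
    · simp [h]
    · omega
  refine ⟨P - P %ₘ Polynomial.X ^ a, ?_, P %ₘ Polynomial.X ^ a, ?_, 0, zero_mem _, 0, zero_mem _,
    by ring⟩
  · refine mem_Cs.2 ⟨?_, by simp, Or.inr ?_⟩
    · have := Polynomial.modByMonic_add_div P (Polynomial.X ^ a)
      exact ⟨P /ₘ Polynomial.X ^ a, by linear_combination -this⟩
    · refine (Polynomial.natDegree_sub_le _ _).trans (max_le hPd ?_)
      exact (Polynomial.natDegree_modByMonic_le_left).trans hPd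
  · refine mem_Cs.2 ⟨by simp, by simp, Or.inr ?_⟩
    have := Polynomial.natDegree_modByMonic_le P hm
    rw [Polynomial.natDegree_X_pow] at this
    omega

theorem M_mono {i j : ℕ} (h : i ≤ j) {v : Fin 3 → Polynomial K} (hv : v ∈ M K a b c α β γ i) :
    v ∈ M K a b c α β γ j :=
  ⟨Cs_mono hv.1 h le_rfl le_rfl le_rfl, Cs_mono hv.2.1 h le_rfl le_rfl le_rfl,
    Cs_mono hv.2.2.1 h le_rfl le_rfl le_rfl, Cs_mono hv.2.2.2 h le_rfl le_rfl le_rfl⟩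

theorem M_D {j : ℕ} {v : Fin 3 → Polynomial K} (hv : v ∈ M K a b c α β γ j) :
    DD v ∈ M K a b c α β γ (j + 1) := by
  refine ⟨Cs_D hv.1, Cs_D hv.2.1, Cs_D hv.2.2.1, ?_⟩
  have := Cs_D hv.2.2.2
  rwa [D_add, D_add] at this

theorem M_div {j n : ℕ} {τ : K} (h0 : τ ≠ 0) (h1 : τ + 1 ≠ 0) {v w : Fin 3 → Polynomial K}
    (hne : v ≠ 0) (hv : v ∈ M K a b c α β γ j)
    (hw : ∀ i, v i = (Polynomial.X - Polynomial.C τ) ^ n * w i) :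
    n ≤ j ∧ w ∈ M K a b c α β γ (j - n) := by
  have key : ∀ {p q r : ℕ} (Q : Polynomial K),
      (Polynomial.X - Polynomial.C τ) ^ n * Q ∈ Cs K j p q r → Q ∈ Cs K (j - n) p q r := by
    intro p q r Q hQ
    by_cases hq : Q = 0
    · rw [hq]; exact zero_mem _
    · exact (Cs_div h0 h1 hq hQ).2
  constructor
  · have : ∃ i, v i ≠ 0 := Function.ne_iff.1 hne
    obtain ⟨i, hi⟩ := this
    have hvi : v i ∈ Cs K j 0 0 0 := by
      fin_cases i
      · exact Cs_mono hv.1 le_rfl (Nat.zero_le _) (Nat.zero_le _) (Nat.zero_le _)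
      · exact Cs_mono hv.2.1 le_rfl (Nat.zero_le _) (Nat.zero_le _) (Nat.zero_le _)
      · exact Cs_mono hv.2.2.1 le_rfl (Nat.zero_le _) (Nat.zero_le _) (Nat.zero_le _)
    rw [hw i] at hvi hi
    exact (Cs_div h0 h1 (right_ne_zero_of_mul hi) hvi).1
  · refine ⟨key _ (hw 0 ▸ hv.1), key _ (hw 1 ▸ hv.2.1), key _ (hw 2 ▸ hv.2.2.1), key _ ?_⟩
    have := hv.2.2.2
    rw [hw 0, hw 1, hw 2] at this
    convert! this using 1
    ring

theorem X_sub_dvd {τ : K} {P : Polynomial K} (h : P.eval τ = 0) :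
    ∃ Q, P = (Polynomial.X - Polynomial.C τ) * Q :=
  Polynomial.dvd_iff_isRoot.2 h

theorem rank_step {i : ℕ} {τ : K} (h0 : τ ≠ 0) (h1 : τ + 1 ≠ 0) {p q r : Fin 3 → Polynomial K}
    (hp : p ∈ M K a b c α β γ (i + 1)) (hq : q ∈ M K a b c α β γ (i + 1))
    (hr : r ∈ M K a b c α β γ (i + 1)) (hdet : (det3 p q r).eval τ ≠ 0)
    {g : Polynomial K}
    (hgJ : (Polynomial.X - Polynomial.C τ) * g ∈ J K a b c α β γ (i + 1)) :
    g ∈ J K a b c α β γ i := by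
  obtain ⟨P1, hP1, P2, hP2, P3, hP3, P4, hP4, hs⟩ := mem_J.1 hgJ
  set Δ := (det3 p q r).eval τ with hΔ
  set E : Polynomial K → K := Polynomial.eval τ with hE
  set V : Fin 3 → K := ![E P1, E P2, E P3] with hV
  set x := det3 V (fun i => E (q i)) (fun i => E (r i)) / Δ with hx
  set y := det3 (fun i => E (p i)) V (fun i => E (r i)) / Δ with hy
  set z := det3 (fun i => E (p i)) (fun i => E (q i)) V / Δ with hz
  have hΔ' : Δ = det3 (fun i => E (p i)) (fun i => E (q i)) (fun i => E (r i)) := by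
    rw [hΔ]
    simp only [det3, hE, Polynomial.eval_add, Polynomial.eval_sub, Polynomial.eval_mul]
  have hxyz : ∀ i, x * E (p i) + y * E (q i) + z * E (r i) = V i := by
    intro i
    rw [hx, hy, hz]
    field_simp
    rw [hΔ']
    simp only [det3]
    fin_cases i <;> simp only [Fin.zero_eta, Fin.mk_one, Fin.reduceFinMk] <;> ring
  set m : Fin 3 → Polynomial K := x • p + y • q + z • r with hm
  have hmM : m ∈ M K a b c α β γ (i + 1) :=
    add_mem (add_mem (Submodule.smul_mem _ _ hp) (Submodule.smul_mem _ _ hq))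
      (Submodule.smul_mem _ _ hr)
  have hmE : ∀ i, E (m i) = V i := by
    intro i
    rw [← hxyz i, hm]
    simp [hE]
  have key : ∀ {p q r : ℕ} (Q : Polynomial K), Q ∈ Cs K (i + 1) p q r → E Q = 0 →
      ∃ Q' ∈ Cs K i p q r, Q = (Polynomial.X - Polynomial.C τ) * Q' := by
    intro p q r Q hQ hQE
    obtain ⟨Q', hQ'⟩ := X_sub_dvd hQE
    refine ⟨Q', ?_, hQ'⟩
    by_cases hq : Q' = 0
    · rw [hq]; exact zero_mem _
    · exact (Cs_div (n := 1) (j := i + 1) h0 h1 hq (by rwa [pow_one, ← hQ'])).2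
  have hsE : E P1 + E P2 + E P3 + E P4 = 0 := by
    have := congrArg E hs
    simpa [hE] using this
  have hm0 := hmE 0
  have hm1 := hmE 1
  have hm2 := hmE 2
  simp only [hV, Matrix.cons_val] at hm0 hm1 hm2
  obtain ⟨Q1, hQ1, e1⟩ := key (P1 - m 0) (sub_mem hP1 hmM.1) (by
    simp only [hE, Polynomial.eval_sub] at *; rw [hm0, sub_self])
  obtain ⟨Q2, hQ2, e2⟩ := key (P2 - m 1) (sub_mem hP2 hmM.2.1) (by
    simp only [hE, Polynomial.eval_sub] at *; rw [hm1, sub_self])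
  obtain ⟨Q3, hQ3, e3⟩ := key (P3 - m 2) (sub_mem hP3 hmM.2.2.1) (by
    simp only [hE, Polynomial.eval_sub] at *; rw [hm2, sub_self])
  obtain ⟨Q4, hQ4, e4⟩ := key (P4 + (m 0 + m 1 + m 2)) (add_mem hP4 hmM.2.2.2) (by
    simp only [hE, Polynomial.eval_add] at *
    rw [hm0, hm1, hm2]; linear_combination hsE)
  refine mem_J.2 ⟨Q1, hQ1, Q2, hQ2, Q3, hQ3, Q4, hQ4, ?_⟩
  apply mul_left_cancel₀ (Polynomial.X_sub_C_ne_zero τ)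
  linear_combination hs - e1 - e2 - e3 - e4

theorem rank_le [CharZero K] {j : ℕ} (hJ : ¬ Cs K j 0 0 0 ≤ J K a b c α β γ j)
    {p q r : Fin 3 → Polynomial K}
    (hp : p ∈ M K a b c α β γ (j + 1)) (hq : q ∈ M K a b c α β γ (j + 1))
    (hr : r ∈ M K a b c α β γ (j + 1)) : det3 p q r = 0 := by
  by_contra hd
  obtain ⟨τ, h0, h1, h2⟩ := exists_tau hd
  have main : ∀ n i, j ≤ i → a + b ≤ i + n → Cs K i 0 0 0 ≤ J K a b c α β γ i := by
    intro n
    induction n with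
    | zero => intro i _ hi; exact J_large hi
    | succ n ih =>
      intro i hji hi g hg
      have hij : j + 1 ≤ i + 1 := by omega
      refine rank_step h0 h1 (M_mono hij hp) (M_mono hij hq) (M_mono hij hr) h2 ?_
      apply ih (i + 1) (by omega) (by omega)
      have hX : (Polynomial.X - Polynomial.C τ) ∈ Cs K 1 0 0 0 :=
        mem_Cs.2 ⟨by simp, by simp, Or.inr (by simp)⟩
      have := Cs_mul hX hg
      rwa [add_comm 1 i] at this
  exact hJ (main (a + b) j le_rfl (by omega))

theorem M_fin_rank {j : ℕ} :
    FiniteDimensional K (M K a b c α β γ j) ∧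
    (¬ Cs K j 0 0 0 ≤ J K a b c α β γ j →
    (j + 1 - a) + (j + 1 - b) + (j + 1 - c) + (j + 1 - (α + β + γ)) ≤
      Module.finrank K (M K a b c α β γ j) + j) := by
  let ι : M K a b c α β γ j →ₗ[K] (Cs K j a 0 0 × Cs K j 0 b 0) × (Cs K j 0 0 c × Cs K j α β γ) :=
    { toFun := fun v => ((⟨v.1 0, v.2.1⟩, ⟨v.1 1, v.2.2.1⟩), (⟨v.1 2, v.2.2.2.1⟩, ⟨_, v.2.2.2.2⟩))
      map_add' := by
        intro v w
        ext1 <;> ext1 <;> ext1 <;> simp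
        ring
      map_smul' := by
        intro k v
        ext1 <;> ext1 <;> ext1 <;> simp [smul_add] }
  have hι : Function.Injective ι := by
    intro v w h
    have h1 := congrArg (fun t => (t.1.1 : Polynomial K)) h
    have h2 := congrArg (fun t => (t.1.2 : Polynomial K)) h
    have h3 := congrArg (fun t => (t.2.1 : Polynomial K)) h
    ext1
    funext i
    fin_cases i
    exacts [h1, h2, h3]
  have hfin : FiniteDimensional K (M K a b c α β γ j) := FiniteDimensional.of_injective ι hι
  refine ⟨hfin, fun hJ => ?_⟩
  let φ : (Cs K j a 0 0 × Cs K j 0 b 0) × (Cs K j 0 0 c × Cs K j α β γ) →ₗ[K] Polynomial K :=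
    { toFun := fun t => (t.1.1 : Polynomial K) + t.1.2 + t.2.1 - t.2.2
      map_add' := by
        intro v w
        simp
        ring
      map_smul' := by
        intro k v
        simp [smul_add, smul_sub] }
  have h1 : LinearMap.ker φ ≤ LinearMap.range ι := by
    rintro ⟨⟨P1, P2⟩, ⟨P3, P4⟩⟩ h
    have h : (P1 : Polynomial K) + P2 + P3 - P4 = 0 := h
    have h' : (P1 : Polynomial K) + P2 + P3 = P4 := sub_eq_zero.1 h
    refine ⟨⟨![P1, P2, P3], P1.2, P2.2, P3.2, ?_⟩, ?_⟩
    · simp [h']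
    · ext1 <;> ext1 <;> ext1 <;> simp [ι, h']
  have h2 : LinearMap.range φ ≤ J K a b c α β γ j := by
    rintro _ ⟨⟨⟨P1, P2⟩, ⟨P3, P4⟩⟩, rfl⟩
    exact mem_J.2 ⟨P1, P1.2, P2, P2.2, P3, P3.2, -P4, neg_mem P4.2, by simp [φ]; ring⟩
  have h3 : J K a b c α β γ j < Cs K j 0 0 0 := lt_of_le_not_ge (J_le j) hJ
  have h4 := Submodule.finrank_lt_finrank_of_lt (lt_of_le_of_lt h2 h3)
  have h5 := LinearMap.finrank_range_add_finrank_ker φ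
  have h6 := Submodule.finrank_mono h1
  have h7 := LinearMap.finrank_range_le ι
  rw [Cs_finrank] at h4
  rw [Module.finrank_prod, Module.finrank_prod, Module.finrank_prod, Cs_finrank, Cs_finrank,
    Cs_finrank, Cs_finrank] at h5
  omega

theorem dep3 {R : Type*} [CommRing R] [IsDomain R] {u v w : Fin 3 → R} (h : det3 u v w = 0) :
    ∃ A B C : R, ¬ (A = 0 ∧ B = 0 ∧ C = 0) ∧ ∀ i, A * u i + B * v i + C * w i = 0 := by
  have h' : (Matrix.of ![u, v, w]).det = 0 := by
    rw [Matrix.det_fin_three, ← h]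
    simp [det3]
    ring
  obtain ⟨x, hx, hx'⟩ := Matrix.exists_vecMul_eq_zero_iff.2 h'
  refine ⟨x 0, x 1, x 2, ?_, ?_⟩
  · rintro ⟨h0, h1, h2⟩
    apply hx
    funext i
    fin_cases i
    exacts [h0, h1, h2]
  · intro i
    have := congrFun hx' i
    simpa [Matrix.vecMul, dotProduct, Fin.sum_univ_three] using this

theorem case3 [CharZero K] {j : ℕ}
    (hrank : ∀ p q r : Fin 3 → Polynomial K, p ∈ M K a b c α β γ (j + 1) →
      q ∈ M K a b c α β γ (j + 1) → r ∈ M K a b c α β γ (j + 1) → det3 p q r = 0)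
    {u v : Fin 3 → Polynomial K} (hu : u ∈ M K a b c α β γ j) (hv : v ∈ M K a b c α β γ j)
    (hW : det3 u (DD u) (DD (DD u)) ≠ 0) (huv : ∀ k : K, v ≠ k • u) : False := by
  have hu1 := M_mono (Nat.le_succ j) hu
  have hv1 := M_mono (Nat.le_succ j) hv
  have hDu := M_D hu
  have hDv := M_D hv
  obtain ⟨A, B, C, hne, hrel⟩ := dep3 (hrank u v (DD u) hu1 hv1 hDu)
  by_cases hC : C = 0
  · subst hC
    have hu0 : ∃ s, u s ≠ 0 := by
      by_contra hc
      push Not at hc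
      apply hW
      simp [det3, hc]
    obtain ⟨s, hs⟩ := hu0
    have hB : B ≠ 0 := by
      intro hB
      apply hne
      refine ⟨?_, hB, rfl⟩
      have := hrel s
      rw [hB] at this
      simpa [hs] using this
    obtain ⟨τ, h0, h1, hτ⟩ := exists_tau hB
    set k : K := A.eval τ / B.eval τ with hk
    set w : Fin 3 → Polynomial K := v + k • u with hw
    have hwM : w ∈ M K a b c α β γ j := add_mem hv (Submodule.smul_mem _ _ hu)
    have hw0 : w ≠ 0 := by
      intro h
      apply huv (-k)
      rw [neg_smul]
      exact eq_neg_of_add_eq_zero_left h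
    have hwE : ∀ i, (w i).eval τ = 0 := by
      intro i
      have := congrArg (Polynomial.eval τ) (hrel i)
      simp at this
      simp [hw, hk]
      field_simp
      linear_combination this
    choose w' hw' using fun i => X_sub_dvd (hwE i)
    obtain ⟨hj, hw'M⟩ := M_div (n := 1) (w := w') h0 h1 hw0 hwM (by simpa using hw')
    set f : Polynomial K := Polynomial.X - Polynomial.C τ with hf
    set E : Polynomial K := -A + Polynomial.C k * B with hE
    have hBw : ∀ i, (B * f) * w' i = E * u i := by
      intro i
      have h1 : w i = v i + Polynomial.C k * u i := by simp [hw, Polynomial.smul_eq_C_mul]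
      linear_combination B * h1 - B * hw' i + hrel i
    have hE0 : E ≠ 0 := by
      intro hE0
      apply hw0
      funext i
      have h2 := hBw i
      rw [hE0, zero_mul, mul_assoc, ← hw' i] at h2
      exact (mul_eq_zero.1 h2).resolve_left hB
    have hscale : ∀ (g : Polynomial K) (t : Fin 3 → Polynomial K),
        det3 (fun i => g * t i) (DD (fun i => g * t i)) (DD (DD (fun i => g * t i)))
          = g ^ 3 * det3 t (DD t) (DD (DD t)) := by
      intro g t
      simp only [det3, DD, D_mul, D_add]
      ring
    have h3 : det3 w' (DD w') (DD (DD w')) = 0 := by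
      apply hrank
      · exact M_mono (by omega) hw'M
      · exact M_mono (by omega) (M_D hw'M)
      · exact M_mono (by omega) (M_D (M_D hw'M))
    have h4 := hscale (B * f) w'
    rw [h3, mul_zero, funext hBw, hscale] at h4
    exact mul_ne_zero (pow_ne_zero _ hE0) hW h4
  · apply hW
    have hd : ∀ i, D A * u i + A * D (u i) + (D B * v i + B * D (v i)) +
        (D C * D (u i) + C * D (D (u i))) = 0 := by
      intro i
      have := congrArg D (hrel i)
      simpa only [D_add, D_mul, D_zero, DD] using this
    have g1 := hrank u (DD u) v hu1 hDu hv1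
    have g2 := hrank u (DD u) (DD v) hu1 hDu hDv
    apply (mul_eq_zero.1 _).resolve_left hC
    simp only [det3, DD] at g1 g2 ⊢
    linear_combination (u 1 * D (u 2) - u 2 * D (u 1)) * hd 0
      + (u 2 * D (u 0) - u 0 * D (u 2)) * hd 1 + (u 0 * D (u 1) - u 1 * D (u 0)) * hd 2
      - D B * g1 - B * g2

/-- cross product -/
def cr {R : Type*} [CommRing R] (v w : Fin 3 → R) : Fin 3 → R :=
  ![v 1 * w 2 - v 2 * w 1, v 2 * w 0 - v 0 * w 2, v 0 * w 1 - v 1 * w 0]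

/-- `v` is orthogonal to the constant vector `l`. -/
def Perp (l : Fin 3 → K) (v : Fin 3 → Polynomial K) : Prop :=
  Polynomial.C (l 0) * v 0 + Polynomial.C (l 1) * v 1 + Polynomial.C (l 2) * v 2 = 0

/-- normalised cross product -/
noncomputable def Om (l : Fin 3 → K) (s : Fin 3) (v w : Fin 3 → Polynomial K) : Polynomial K :=
  Polynomial.C (l s)⁻¹ * cr v w s

theorem Perp_D {l : Fin 3 → K} {v : Fin 3 → Polynomial K} (h : Perp l v) : Perp l (DD v) := by
  have := congrArg D h
  show Polynomial.C (l 0) * D (v 0) + Polynomial.C (l 1) * D (v 1)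
    + Polynomial.C (l 2) * D (v 2) = 0
  simpa only [D_add, D_mul, D_zero, D_C, zero_mul, zero_add] using this

theorem cr_eq_Om {l : Fin 3 → K} {s : Fin 3} (hs : l s ≠ 0) {v w : Fin 3 → Polynomial K}
    (hv : Perp l v) (hw : Perp l w) (q : Fin 3) :
    cr v w q = Polynomial.C (l q) * Om l s v w := by
  have h1 : Polynomial.C (l s) * cr v w q = Polynomial.C (l q) * cr v w s := by
    unfold Perp at hv hw
    fin_cases s <;> fin_cases q <;> simp [cr]
    · linear_combination v 2 * hw - w 2 * hv
    · linear_combination w 1 * hv - v 1 * hw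
    · linear_combination w 2 * hv - v 2 * hw
    · linear_combination v 0 * hw - w 0 * hv
    · linear_combination v 1 * hw - w 1 * hv
    · linear_combination w 0 * hv - v 0 * hw
  have h2 : Polynomial.C (l s)⁻¹ * Polynomial.C (l s) = 1 := by
    rw [← Polynomial.C_mul, inv_mul_cancel₀ hs, Polynomial.C_1]
  unfold Om
  linear_combination Polynomial.C (l s)⁻¹ * h1 - cr v w q * h2

theorem Cs_of_C_mul {j p q r : ℕ} {k : K} (hk : k ≠ 0) {P : Polynomial K}
    (h : Polynomial.C k * P ∈ Cs K j p q r) : P ∈ Cs K j p q r := by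
  rw [← Polynomial.smul_eq_C_mul] at h
  exact (Submodule.smul_mem_iff _ hk).1 h

theorem Om_mem {l : Fin 3 → K} {s : Fin 3} (hs : l s ≠ 0) {v w : Fin 3 → Polynomial K} {i k : ℕ}
    (hv : Perp l v) (hw : Perp l w) (hvM : v ∈ M K a b c α β γ i) (hwM : w ∈ M K a b c α β γ k) :
    (l 0 ≠ 0 → Om l s v w ∈ Cs K (i + k) 0 b c) ∧
    (l 1 ≠ 0 → Om l s v w ∈ Cs K (i + k) a 0 c) ∧
    (l 2 ≠ 0 → Om l s v w ∈ Cs K (i + k) a b 0) ∧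
    (l 1 ≠ l 2 → Om l s v w ∈ Cs K (i + k) (a + α) β γ) ∧
    (l 0 ≠ l 2 → Om l s v w ∈ Cs K (i + k) α (b + β) γ) ∧
    (l 0 ≠ l 1 → Om l s v w ∈ Cs K (i + k) α β (c + γ)) := by
  have e0 := cr_eq_Om hs hv hw 0
  have e1 := cr_eq_Om hs hv hw 1
  have e2 := cr_eq_Om hs hv hw 2
  simp only [cr, Matrix.cons_val] at e0 e1 e2
  obtain ⟨v0, v1, v2, v3⟩ := hvM
  obtain ⟨w0, w1, w2, w3⟩ := hwM
  have mulsub : ∀ {p q r p' q' r' : ℕ} {x y z t : Polynomial K}, x ∈ Cs K i p q r →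
      t ∈ Cs K k p q r → y ∈ Cs K i p' q' r' → z ∈ Cs K k p' q' r' →
      x * z - y * t ∈ Cs K (i + k) (p + p') (q + q') (r + r') := by
    intro p q r p' q' r' x y z t hx ht hy hz
    refine sub_mem (Cs_mul hx hz) ?_
    have := Cs_mul hy ht
    rwa [add_comm p', add_comm q', add_comm r'] at this
  refine ⟨fun h => ?_, fun h => ?_, fun h => ?_, fun h => ?_, fun h => ?_, fun h => ?_⟩
  · apply Cs_of_C_mul h
    rw [← e0]
    simpa using mulsub v1 w1 v2 w2
  · apply Cs_of_C_mul h
    rw [← e1]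
    simpa using mulsub v2 w2 v0 w0
  · apply Cs_of_C_mul h
    rw [← e2]
    simpa using mulsub v0 w0 v1 w1
  · apply Cs_of_C_mul (sub_ne_zero.2 h.symm)
    have := mulsub v0 w0 v3 w3
    rw [Polynomial.C_sub]
    simp only [zero_add] at this
    convert! this using 1
    linear_combination e1 - e2
  · apply Cs_of_C_mul (sub_ne_zero.2 h)
    have := mulsub v1 w1 v3 w3
    rw [Polynomial.C_sub]
    simp only [zero_add] at this
    convert! this using 1
    linear_combination e2 - e0
  · apply Cs_of_C_mul (sub_ne_zero.2 h.symm)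
    have := mulsub v2 w2 v3 w3
    rw [Polynomial.C_sub]
    simp only [zero_add] at this
    convert! this using 1
    linear_combination e0 - e1

theorem case2 [CharZero K] {j : ℕ} {l : Fin 3 → K} {s : Fin 3} (hs : l s ≠ 0)
    (hl : ∀ v ∈ M K a b c α β γ j, Perp l v) {p q r : ℕ}
    (hG : ∀ (i k : ℕ) (v w : Fin 3 → Polynomial K), v ∈ M K a b c α β γ i →
      w ∈ M K a b c α β γ k → Perp l v → Perp l w → Om l s v w ∈ Cs K (i + k) p q r)
    {u : Fin 3 → Polynomial K} (hu : u ∈ M K a b c α β γ j) (hcr : cr u (DD u) ≠ 0)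
    (hrk : 2 * j + 3 ≤ Module.finrank K (M K a b c α β γ j) + (p + q + r)) : False := by
  classical
  have hex : ∃ i, ∃ u ∈ M K a b c α β γ i, cr u (DD u) ≠ 0 := ⟨j, u, hu, hcr⟩
  obtain ⟨u0, hu0, hcr0⟩ := Nat.find_spec hex
  have hmin := fun m => Nat.find_min (H := hex) (m := m)
  have hij : Nat.find hex ≤ j := Nat.find_min' hex ⟨u, hu, hcr⟩
  generalize Nat.find hex = i at *
  have hP0 : Perp l u0 := hl _ (M_mono hij hu0)
  have hOm : ∀ v w : Fin 3 → Polynomial K, Perp l v → Perp l w → Om l s v w = 0 → cr v w = 0 := by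
    intro v w hv hw h
    funext x
    rw [cr_eq_Om hs hv hw x, h, mul_zero]; rfl
  have hg : p + q + r ≤ i + (i + 1) :=
    Cs_le_of_ne (hG i (i + 1) u0 (DD u0) hu0 (M_D hu0) hP0 (Perp_D hP0))
      (fun h => hcr0 (hOm _ _ hP0 (Perp_D hP0) h))
  have hne : ∃ x, u0 x ≠ 0 := by
    by_contra hc
    push Not at hc
    apply hcr0
    funext x
    fin_cases x <;> simp [cr, hc]
  obtain ⟨x, hx⟩ := hne
  obtain ⟨τ, h0, h1, hτ⟩ := exists_tau hx
  set n := j - i + 1 with hn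
  have hfin := (M_fin_rank (K := K) (a := a) (b := b) (c := c) (α := α) (β := β) (γ := γ) (j := j)).1
  let ψ : M K a b c α β γ j →ₗ[K] Cs K (j + i) p q r × (Fin n → K) :=
    { toFun := fun v => (⟨Om l s v.1 u0, hG j i _ _ v.2 hu0 (hl _ v.2) hP0⟩,
        fun y => ((v.1 x).comp (Polynomial.X + Polynomial.C τ)).coeff y)
      map_add' := by
        intro v w
        ext1
        · ext1
          simp only [Submodule.coe_add, Om]
          fin_cases s <;> simp [cr] <;> ring
        · funext y
          simp
      map_smul' := by
        intro k v
        ext1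
        · ext1
          simp only [Submodule.coe_smul, Om]
          fin_cases s <;> simp [cr, Polynomial.smul_eq_C_mul] <;> ring
        · funext y
          simp }
  have hker : LinearMap.ker ψ ≠ ⊥ := by
    apply LinearMap.ker_ne_bot_of_finrank_lt
    rw [Module.finrank_prod, Cs_finrank, Module.finrank_fin_fun]
    omega
  obtain ⟨⟨v, hvM⟩, hvker, hv0⟩ := Submodule.exists_mem_ne_zero_of_ne_bot hker
  have hv0 : v ≠ 0 := fun h => hv0 (Subtype.ext h)
  have hk := LinearMap.mem_ker.1 hvker
  have hk1 : Om l s v u0 = 0 := congrArg (fun t => (t.1 : Polynomial K)) hk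
  have hk2 : ∀ y : Fin n, ((v x).comp (Polynomial.X + Polynomial.C τ)).coeff y = 0 :=
    fun y => congrFun (congrArg Prod.snd hk) y
  have hcrv := hOm _ _ (hl _ hvM) hP0 hk1
  have hpar : ∀ y, u0 x * v y = v x * u0 y := by
    have c0 := congrFun hcrv 0
    have c1 := congrFun hcrv 1
    have c2 := congrFun hcrv 2
    simp [cr] at c0 c1 c2
    intro y
    fin_cases x <;> fin_cases y <;> simp only [Fin.zero_eta, Fin.mk_one, Fin.reduceFinMk]
    · ring
    · linear_combination -c2
    · linear_combination c1
    · linear_combination c2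
    · ring
    · linear_combination -c0
    · linear_combination -c1
    · linear_combination c0
    · ring
  have hdx : (Polynomial.X - Polynomial.C τ) ^ n ∣ v x := by
    rw [Polynomial.X_sub_C_pow_dvd_iff, Polynomial.X_pow_dvd_iff]
    exact fun d hd => hk2 ⟨d, hd⟩
  have hdall : ∀ y, (Polynomial.X - Polynomial.C τ) ^ n ∣ v y := by
    intro y
    refine (Polynomial.prime_X_sub_C τ).pow_dvd_of_dvd_mul_left n (a := u0 x) ?_ ?_
    · rw [Polynomial.dvd_iff_isRoot]; exact hτ
    · rw [hpar y]; exact hdx.mul_right _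
  choose w hw using hdall
  obtain ⟨hnj, hwM⟩ := M_div h0 h1 hv0 hvM hw
  have hvx : v x ≠ 0 := by
    intro h
    apply hv0
    funext y
    have := hpar y
    rw [h, zero_mul] at this
    exact (mul_eq_zero.1 this).resolve_left hx
  refine hmin (j - n) (by omega) ⟨w, hwM, ?_⟩
  intro hcw
  have hscale : ∀ (g : Polynomial K) (t : Fin 3 → Polynomial K) (y : Fin 3),
      cr (fun i => g * t i) (DD (fun i => g * t i)) y = g ^ 2 * cr t (DD t) y := by
    intro g t y
    fin_cases y <;> simp [cr, DD, D_mul] <;> ring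
  apply hcr0
  funext y
  have e1 := hscale (u0 x * (Polynomial.X - Polynomial.C τ) ^ n) w y
  have e2 := hscale (v x) u0 y
  have e3 : (fun i => u0 x * (Polynomial.X - Polynomial.C τ) ^ n * w i) = fun i => v x * u0 i := by
    funext i
    rw [← hpar i, mul_assoc, ← hw i]
  rw [e3, hcw, e2] at e1
  simp only [Pi.zero_apply, mul_zero] at e1
  exact (mul_eq_zero.1 e1).resolve_left (pow_ne_zero _ hvx)

theorem main_uni [CharZero K] {j : ℕ} (hα : α ≤ a) (hβ : β ≤ b) (hγ : γ ≤ c)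
    (h3 : (a + b + c + α + β + γ) % 3 ≠ 0)
    (hJ : ¬ Cs K j 0 0 0 ≤ J K a b c α β γ j)
    {u : Fin 3 → Polynomial K} (hu : u ∈ M K a b c α β γ j) :
    ∃ (w : Fin 3 → K) (P : Polynomial K), ∀ i, u i = Polynomial.C (w i) * P := by
  have hrank : ∀ p q r : Fin 3 → Polynomial K, p ∈ M K a b c α β γ (j + 1) →
      q ∈ M K a b c α β γ (j + 1) → r ∈ M K a b c α β γ (j + 1) → det3 p q r = 0 :=
    fun p q r hp hq hr => rank_le hJ hp hq hr
  obtain ⟨hfin, hk⟩ :=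
    M_fin_rank (K := K) (a := a) (b := b) (c := c) (α := α) (β := β) (γ := γ) (j := j)
  have hk := hk hJ
  by_cases hW : det3 u (DD u) (DD (DD u)) = 0
  swap
  · exfalso
    -- the Wronskian is divisible by the product of the four generators
    have m1 := M_D hu
    have m2 := M_D m1
    have hmem : ∀ {p q r p' q' r' p'' q'' r'' : ℕ} {x y z : Polynomial K}, x ∈ Cs K j p q r →
        y ∈ Cs K j p' q' r' → z ∈ Cs K j p'' q'' r'' →
        det3 ![x, y, z] (DD ![x, y, z]) (DD (DD ![x, y, z])) ∈
          Cs K (3 * j + 3) (p + p' + p'') (q + q' + q'') (r + r' + r'') := by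
      intro p q r p' q' r' p'' q'' r'' x y z hx hy hz
      have hx1 := Cs_D hx
      have hx2 := Cs_D hx1
      have hy1 := Cs_D hy
      have hy2 := Cs_D hy1
      have hz1 := Cs_D hz
      have hz2 := Cs_D hz1
      have a1 := Cs_mul (Cs_mul hx hy1) hz2
      have a2 := Cs_mul (Cs_mul hx hy2) hz1
      have a3 := Cs_mul (Cs_mul hx1 hy) hz2
      have a4 := Cs_mul (Cs_mul hx2 hy) hz1
      have a5 := Cs_mul (Cs_mul hx1 hy2) hz
      have a6 := Cs_mul (Cs_mul hx2 hy1) hz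
      rw [show j + (j + 1) + (j + 1 + 1) = 3 * j + 3 by ring] at a1
      rw [show j + (j + 1 + 1) + (j + 1) = 3 * j + 3 by ring] at a2
      rw [show j + 1 + j + (j + 1 + 1) = 3 * j + 3 by ring] at a3
      rw [show j + 1 + 1 + j + (j + 1) = 3 * j + 3 by ring] at a4
      rw [show j + 1 + (j + 1 + 1) + j = 3 * j + 3 by ring] at a5
      rw [show j + 1 + 1 + (j + 1) + j = 3 * j + 3 by ring] at a6
      have := add_mem (sub_mem (sub_mem a1 a2) a3) (add_mem (sub_mem a4 a6) a5)
      convert! this using 1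
      simp [det3, DD]
      ring
    have b1 := hmem hu.1 hu.2.1 hu.2.2.2
    have b2 := hmem hu.1 hu.2.2.2 hu.2.2.1
    have f1 : det3 ![u 0, u 1, u 0 + u 1 + u 2] (DD ![u 0, u 1, u 0 + u 1 + u 2])
        (DD (DD ![u 0, u 1, u 0 + u 1 + u 2])) = det3 u (DD u) (DD (DD u)) := by
      simp [det3, DD, D_add]; ring
    have f2 : det3 ![u 0, u 0 + u 1 + u 2, u 2] (DD ![u 0, u 0 + u 1 + u 2, u 2])
        (DD (DD ![u 0, u 0 + u 1 + u 2, u 2])) = det3 u (DD u) (DD (DD u)) := by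
      simp [det3, DD, D_add]; ring
    rw [f1] at b1
    rw [f2] at b2
    have hle := Cs_le_of_ne (Cs_sup b1 b2) hW
    have hk2 : 2 ≤ Module.finrank K (M K a b c α β γ j) := by omega
    have hne : ∃ x, u x ≠ 0 := by
      by_contra hc
      push Not at hc
      apply hW
      simp [det3, hc]
    obtain ⟨x, hx⟩ := hne
    let ψ : M K a b c α β γ j →ₗ[K] K :=
      { toFun := fun v => (v.1 x).coeff (u x).natDegree
        map_add' := by intro v w; simp
        map_smul' := by intro k v; simp }
    have hker : LinearMap.ker ψ ≠ ⊥ := by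
      apply LinearMap.ker_ne_bot_of_finrank_lt
      rw [Module.finrank_self]
      omega
    obtain ⟨⟨v, hvM⟩, hvker, hv0⟩ := Submodule.exists_mem_ne_zero_of_ne_bot hker
    have hv0 : v ≠ 0 := fun h => hv0 (Subtype.ext h)
    have hkv : (v x).coeff (u x).natDegree = 0 := LinearMap.mem_ker.1 hvker
    refine case3 hrank hu hvM hW ?_
    rintro k rfl
    simp only [Pi.smul_apply, Polynomial.coeff_smul, smul_eq_mul, mul_eq_zero] at hkv
    rcases hkv with h | h
    · apply hv0; rw [h, zero_smul]
    · exact hx (Polynomial.leadingCoeff_eq_zero.1 h)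
  obtain ⟨l, hl0, hlu⟩ := wr3 u hW
  have hlu : Perp l u := hlu
  by_cases hcr : cr u (DD u) = 0
  · by_cases hu0 : u = 0
    · exact ⟨0, 0, by simp [hu0]⟩
    obtain ⟨x, hx⟩ := Function.ne_iff.1 hu0
    have c0 := congrFun hcr 0
    have c1 := congrFun hcr 1
    have c2 := congrFun hcr 2
    simp [cr, DD] at c0 c1 c2
    have : ∀ y, ∃ w : K, u y = Polynomial.C w * u x := by
      intro y
      apply wr2 hx
      fin_cases x <;> fin_cases y <;> simp only [Fin.zero_eta, Fin.mk_one, Fin.reduceFinMk]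
      · ring
      · linear_combination -c2
      · linear_combination c1
      · linear_combination c2
      · ring
      · linear_combination -c0
      · linear_combination -c1
      · linear_combination c0
      · ring
    choose w hw using this
    exact ⟨w, u x, hw⟩
  exfalso
  obtain ⟨s, hs⟩ : ∃ s, l s ≠ 0 := Function.ne_iff.1 hl0
  -- all of `M j` is orthogonal to `l`
  have hl : ∀ v ∈ M K a b c α β γ j, Perp l v := by
    intro v hv
    obtain ⟨A, B, C, hne, hrel⟩ := dep3 (hrank u (DD u) v (M_mono (Nat.le_succ j) hu) (M_D hu)
      (M_mono (Nat.le_succ j) hv))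
    have hD := Perp_D hlu
    unfold Perp at *
    have hC : C ≠ 0 := by
      intro hC
      subst hC
      have hA : ∀ y, A * cr u (DD u) y = 0 := by
        intro y
        fin_cases y
        · show A * (u 1 * DD u 2 - u 2 * DD u 1) = 0
          linear_combination DD u 2 * hrel 1 - DD u 1 * hrel 2
        · show A * (u 2 * DD u 0 - u 0 * DD u 2) = 0
          linear_combination DD u 0 * hrel 2 - DD u 2 * hrel 0
        · show A * (u 0 * DD u 1 - u 1 * DD u 0) = 0
          linear_combination DD u 1 * hrel 0 - DD u 0 * hrel 1
      have hB : ∀ y, B * cr u (DD u) y = 0 := by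
        intro y
        fin_cases y
        · show B * (u 1 * DD u 2 - u 2 * DD u 1) = 0
          linear_combination u 1 * hrel 2 - u 2 * hrel 1
        · show B * (u 2 * DD u 0 - u 0 * DD u 2) = 0
          linear_combination u 2 * hrel 0 - u 0 * hrel 2
        · show B * (u 0 * DD u 1 - u 1 * DD u 0) = 0
          linear_combination u 0 * hrel 1 - u 1 * hrel 0
      obtain ⟨y, hy⟩ := Function.ne_iff.1 hcr
      exact hne ⟨(mul_eq_zero.1 (hA y)).resolve_right hy, (mul_eq_zero.1 (hB y)).resolve_right hy,
        rfl⟩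
    apply (mul_eq_zero.1 _).resolve_left hC
    linear_combination Polynomial.C (l 0) * hrel 0 + Polynomial.C (l 1) * hrel 1
      + Polynomial.C (l 2) * hrel 2 - A * hlu - B * hD
  have hz : ∀ {x y t : Fin 3}, l x ≠ 0 → Polynomial.C (l x) * (u x + u y) = 0 → u t = 0 →
      (t = 0 ∧ x = 1 ∧ y = 2 ∨ t = 1 ∧ x = 0 ∧ y = 2 ∨ t = 2 ∧ x = 0 ∧ y = 1) → False := by
    intro x y t hx hxy ht hc
    have hy : u y = - u x := by
      have := (mul_eq_zero.1 hxy).resolve_left (by simpa using hx)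
      linear_combination this
    apply hcr
    rcases hc with ⟨rfl, rfl, rfl⟩ | ⟨rfl, rfl, rfl⟩ | ⟨rfl, rfl, rfl⟩ <;>
    · funext z
      fin_cases z <;> simp [cr, DD, hy, ht, D_neg, D_zero]
  by_cases h01 : l 0 = l 1
  · by_cases h12 : l 1 = l 2
    · have hl0 : l 0 ≠ 0 := by
        fin_cases s
        · exact hs
        · rw [h01]; exact hs
        · rw [h01, h12]; exact hs
      refine case2 hs hl (p := max 0 a) (q := max b 0) (r := max c c) ?_ hu hcr ?_
      · intro i k v w hv hw pv pw
        obtain ⟨o0, o1, o2, o3, o4, o5⟩ := Om_mem hs pv pw hv hw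
        exact Cs_sup (o0 hl0) (o1 (h01 ▸ hl0))
      · omega
    · have h02 : l 0 ≠ l 2 := by rw [h01]; exact h12
      by_cases hl0 : l 0 = 0
      · refine case2 hs hl (p := max (a + α) α) (q := max β (b + β)) (r := max γ γ) ?_ hu hcr ?_
        · intro i k v w hv hw pv pw
          obtain ⟨o0, o1, o2, o3, o4, o5⟩ := Om_mem hs pv pw hv hw
          exact Cs_sup (o3 h12) (o4 h02)
        · omega
      · have haj : c ≤ j := by
          have hne : u 2 ≠ 0 := by
            intro h
            refine hz (x := 0) (y := 1) (t := 2) hl0 ?_ h (by simp)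
            unfold Perp at hlu
            rw [h, ← h01] at hlu
            linear_combination hlu
          simpa using Cs_le_of_ne hu.2.2.1 hne
        refine case2 hs hl (p := max (max (a + α) α) 0) (q := max (max β (b + β)) b)
          (r := max (max γ γ) c) ?_ hu hcr ?_
        · intro i k v w hv hw pv pw
          obtain ⟨o0, o1, o2, o3, o4, o5⟩ := Om_mem hs pv pw hv hw
          exact Cs_sup (Cs_sup (o3 h12) (o4 h02)) (o0 hl0)
        · omega
  · by_cases h12 : l 1 = l 2
    · have h02 : l 0 ≠ l 2 := by rw [← h12]; exact h01
      by_cases hl1 : l 1 = 0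
      · refine case2 hs hl (p := max α α) (q := max (b + β) β) (r := max γ (c + γ)) ?_ hu hcr ?_
        · intro i k v w hv hw pv pw
          obtain ⟨o0, o1, o2, o3, o4, o5⟩ := Om_mem hs pv pw hv hw
          exact Cs_sup (o4 h02) (o5 h01)
        · omega
      · have haj : a ≤ j := by
          have hne : u 0 ≠ 0 := by
            intro h
            refine hz (x := 1) (y := 2) (t := 0) hl1 ?_ h (by simp)
            unfold Perp at hlu
            rw [h, ← h12] at hlu
            linear_combination hlu
          simpa using Cs_le_of_ne hu.1 hne
        refine case2 hs hl (p := max (max α α) a) (q := max (max (b + β) β) 0)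
          (r := max (max γ (c + γ)) c) ?_ hu hcr ?_
        · intro i k v w hv hw pv pw
          obtain ⟨o0, o1, o2, o3, o4, o5⟩ := Om_mem hs pv pw hv hw
          exact Cs_sup (Cs_sup (o4 h02) (o5 h01)) (o1 hl1)
        · omega
    · by_cases h02 : l 0 = l 2
      · by_cases hl0 : l 0 = 0
        · refine case2 hs hl (p := max (a + α) α) (q := max β β) (r := max γ (c + γ)) ?_ hu hcr ?_
          · intro i k v w hv hw pv pw
            obtain ⟨o0, o1, o2, o3, o4, o5⟩ := Om_mem hs pv pw hv hw
            exact Cs_sup (o3 h12) (o5 h01)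
          · omega
        · have haj : b ≤ j := by
            have hne : u 1 ≠ 0 := by
              intro h
              refine hz (x := 0) (y := 2) (t := 1) hl0 ?_ h (by simp)
              unfold Perp at hlu
              rw [h, ← h02] at hlu
              linear_combination hlu
            simpa using Cs_le_of_ne hu.2.1 hne
          refine case2 hs hl (p := max (max (a + α) α) 0) (q := max (max β β) b)
            (r := max (max γ (c + γ)) c) ?_ hu hcr ?_
          · intro i k v w hv hw pv pw
            obtain ⟨o0, o1, o2, o3, o4, o5⟩ := Om_mem hs pv pw hv hw
            exact Cs_sup (Cs_sup (o3 h12) (o5 h01)) (o0 hl0)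
          · omega
      · refine case2 hs hl (p := max (max (a + α) α) α) (q := max (max β (b + β)) β)
          (r := max (max γ γ) (c + γ)) ?_ hu hcr ?_
        · intro i k v w hv hw pv pw
          obtain ⟨o0, o1, o2, o3, o4, o5⟩ := Om_mem hs pv pw hv hw
          exact Cs_sup (Cs_sup (o3 h12) (o4 h02)) (o5 h01)
        · omega

/-- Restriction to the line `L = 0`, dehomogenised. -/
noncomputable def rho (K : Type*) [Field K] : MvPolynomial (Fin 3) K →ₐ[K] Polynomial K :=
  aeval ![Polynomial.X, 1, Polynomial.X + 1]

/-- monomials -/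
noncomputable def mono (K : Type*) [Field K] (p q r : ℕ) : MvPolynomial (Fin 3) K :=
  X 0 ^ p * X 1 ^ q * X 2 ^ r

/-- the linear form -/
noncomputable def Lf (K : Type*) [Field K] : MvPolynomial (Fin 3) K := X 0 + X 1 - X 2

theorem rho_X0 : rho K (X 0) = Polynomial.X := by simp [rho]
theorem rho_X1 : rho K (X 1) = 1 := by simp [rho]
theorem rho_X2 : rho K (X 2) = Polynomial.X + 1 := by simp [rho]
theorem rho_C (w : K) : rho K (C w) = Polynomial.C w := by simp [rho]

theorem rho_Lf : rho K (Lf K) = 0 := by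
  simp [Lf, rho_X0, rho_X1, rho_X2]

theorem rho_mono (p q r : ℕ) :
    rho K (mono K p q r) = Polynomial.X ^ p * (Polynomial.X + 1) ^ r := by
  simp [mono, rho_X0, rho_X1, rho_X2]

theorem rho_mono_ne (p q r : ℕ) : rho K (mono K p q r) ≠ 0 := by
  rw [rho_mono]
  exact mul_ne_zero (pow_ne_zero _ Polynomial.X_ne_zero) (pow_ne_zero _ X1_ne)

theorem mono_hom (p q r : ℕ) : (mono K p q r).IsHomogeneous (p + q + r) :=
  ((isHomogeneous_X_pow _ _).mul (isHomogeneous_X_pow _ _)).mul (isHomogeneous_X_pow _ _)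

theorem mono_mul (p q r p' q' r' : ℕ) :
    mono K (p + p') (q + q') (r + r') = mono K p q r * mono K p' q' r' := by
  unfold mono; ring

theorem Lf_hom : (Lf K).IsHomogeneous 1 :=
  ((isHomogeneous_X _ _).add (isHomogeneous_X _ _)).sub (isHomogeneous_X _ _)

theorem Lf_ne : Lf K ≠ 0 := by
  intro h
  have := congrArg (eval ![(1 : K), 0, 0]) h
  simp [Lf] at this

theorem rho_deg {F : MvPolynomial (Fin 3) K} {n : ℕ} (hF : F.IsHomogeneous n) :
    (rho K F).natDegree ≤ n := by
  unfold rho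
  rw [aeval_def, eval₂_eq']
  apply Polynomial.natDegree_sum_le_of_forall_le
  intro d hd
  have hdeg : d 0 + d 1 + d 2 = n := by
    have := hF.degree_eq_sum_deg_support hd
    rw [this, ← Finsupp.degree_apply, Finsupp.degree_eq_sum, Fin.sum_univ_three]
  rw [Fin.prod_univ_three]
  simp only [Matrix.cons_val, one_pow, mul_one, Polynomial.algebraMap_eq]
  refine (Polynomial.natDegree_C_mul_le _ _).trans ?_
  have : (Polynomial.X ^ d 0 * (Polynomial.X + 1 : Polynomial K) ^ d 2).natDegree ≤ d 0 + d 2 := by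
    compute_degree
  omega

theorem rho_mem {G : MvPolynomial (Fin 3) K} {j p q r : ℕ} (hG : G.IsHomogeneous (j - (p + q + r)))
    (h : p + q + r ≤ j ∨ G = 0) : rho K (mono K p q r * G) ∈ Cs K j p q r := by
  rcases h with h | h
  · rw [map_mul, rho_mono]
    apply Cs_of_param
    have := rho_deg hG
    omega
  · simp [h]

theorem eval_hom {F : MvPolynomial (Fin 3) K} {n : ℕ} (hF : F.IsHomogeneous n) (k : K)
    (v : Fin 3 → K) : eval (fun i => k * v i) F = k ^ n * eval v F := by
  rw [eval_eq', eval_eq', Finset.mul_sum]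
  refine Finset.sum_congr rfl fun d hd => ?_
  have hdeg : d 0 + d 1 + d 2 = n := by
    have := hF.degree_eq_sum_deg_support hd
    rw [this, ← Finsupp.degree_apply, Finsupp.degree_eq_sum, Fin.sum_univ_three]
  rw [Fin.prod_univ_three, Fin.prod_univ_three, ← hdeg]
  ring

theorem eval_rho (F : MvPolynomial (Fin 3) K) (t : K) :
    (rho K F).eval t = eval ![t, 1, t + 1] F := by
  have : (Polynomial.aeval t).comp (rho K) = aeval (R := K) ![t, 1, t + 1] := by
    apply algHom_ext
    intro i
    fin_cases i <;> simp [rho]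
  have := congrArg (fun f => f F) this
  simpa [Polynomial.coe_aeval_eq_eval, aeval_eq_eval] using this

theorem Lf_dvd [Infinite K] {F : MvPolynomial (Fin 3) K} {n : ℕ} (hF : F.IsHomogeneous n)
    (h : rho K F = 0) : Lf K ∣ F := by
  let σ : MvPolynomial (Fin 3) K →ₐ[K] MvPolynomial (Fin 3) K := aeval ![X 0, X 1, X 0 + X 1]
  have h1 : ((Ideal.Quotient.mkₐ K (Ideal.span {Lf K})).comp σ) =
      Ideal.Quotient.mkₐ K (Ideal.span {Lf K}) := by
    apply algHom_ext
    intro i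
    have : (Ideal.Quotient.mk (Ideal.span {Lf K})) (X 0 + X 1) =
        (Ideal.Quotient.mk (Ideal.span {Lf K})) (X 2) := by
      rw [Ideal.Quotient.eq]
      exact Ideal.mem_span_singleton_self _
    fin_cases i
    · simp [σ]
    · simp [σ]
    · simpa [σ] using this
  have h2 := congrArg (fun f => f F) h1
  simp only [AlgHom.comp_apply, Ideal.Quotient.mkₐ_eq_mk] at h2
  have h3 : X 1 * σ F = 0 := by
    apply MvPolynomial.funext
    intro x
    rw [map_mul, eval_X, map_zero]
    by_cases hx : x 1 = 0
    · rw [hx, zero_mul]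
    have e : eval x (σ F) = eval (fun i => x 1 * (![x 0 / x 1, 1, x 0 / x 1 + 1] : Fin 3 → K) i) F := by
      have : (aeval (R := K) x).comp σ =
          aeval (fun i => x 1 * (![x 0 / x 1, 1, x 0 / x 1 + 1] : Fin 3 → K) i) := by
        apply algHom_ext
        intro i
        fin_cases i <;> simp [σ] <;> field_simp
      have := congrArg (fun f => f F) this
      simpa [aeval_eq_eval] using this
    rw [e, eval_hom hF, ← eval_rho, h]
    simp
  have h4 : σ F = 0 := (mul_eq_zero.1 h3).resolve_left (X_ne_zero _)
  rw [h4, map_zero, eq_comm, Ideal.Quotient.eq_zero_iff_mem, Ideal.mem_span_singleton] at h2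
  exact h2

theorem lift_deg {Q : Polynomial K} {n : ℕ} (h : Q.natDegree ≤ n) :
    ∃ F : MvPolynomial (Fin 3) K, F.IsHomogeneous n ∧ rho K F = Q := by
  refine ⟨∑ i ∈ Finset.range (n + 1), C (Q.coeff i) * (X 0 ^ i * X 1 ^ (n - i)), ?_, ?_⟩
  · apply IsHomogeneous.sum
    intro i hi
    rw [Finset.mem_range] at hi
    apply IsHomogeneous.C_mul
    have := (isHomogeneous_X_pow (R := K) (0 : Fin 3) i).mul
      (isHomogeneous_X_pow (R := K) (1 : Fin 3) (n - i))
    rwa [show i + (n - i) = n by omega] at this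
  · simp only [map_sum, map_mul, map_pow, rho_C, rho_X0, rho_X1, one_pow, mul_one]
    exact (Q.as_sum_range_C_mul_X_pow' (by omega)).symm

theorem lift_Cs {P : Polynomial K} {j p q r : ℕ} (h : P ∈ Cs K j p q r) :
    ∃ G : MvPolynomial (Fin 3) K, G.IsHomogeneous (j - (p + q + r)) ∧
      (p + q + r ≤ j ∨ G = 0) ∧ rho K (mono K p q r * G) = P := by
  by_cases h0 : P = 0
  · exact ⟨0, isHomogeneous_zero _ _ _, Or.inr rfl, by simp [h0]⟩
  obtain ⟨Q, hQ, _, hd⟩ := Cs_param h h0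
  obtain ⟨G, hG, hr⟩ := lift_deg (Q := Q) (n := j - (p + q + r)) (by omega)
  exact ⟨G, hG, Or.inl (by omega), by rw [map_mul, rho_mono, hr, hQ]⟩

theorem mono_mul_hom {G : MvPolynomial (Fin 3) K} {j p q r : ℕ}
    (hG : G.IsHomogeneous (j - (p + q + r)))
    (h : p + q + r ≤ j ∨ G = 0) : (mono K p q r * G).IsHomogeneous j := by
  rcases h with h | h
  · have := (mono_hom (K := K) p q r).mul hG
    rwa [show p + q + r + (j - (p + q + r)) = j by omega] at this
  · rw [h, mul_zero]; exact isHomogeneous_zero _ _ _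

theorem hc_mul_le (s : MvPolynomial (Fin 3) K) {f : MvPolynomial (Fin 3) K} {m n : ℕ}
    (hf : f.IsHomogeneous m) (h : m ≤ n) :
    homogeneousComponent n (s * f) = homogeneousComponent (n - m) s * f := by
  classical
  let _ := MvPolynomial.gradedAlgebra (σ := Fin 3) (R := K)
  have hd : ∀ (φ : MvPolynomial (Fin 3) K) (i : ℕ),
      (DirectSum.decompose (homogeneousSubmodule (Fin 3) K) φ i : MvPolynomial (Fin 3) K) =
        homogeneousComponent i φ := fun φ i => decomposition.decompose'_apply φ i
  have hm : f ∈ homogeneousSubmodule (Fin 3) K m := hf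
  have := DirectSum.coe_decompose_mul_of_right_mem_of_le (homogeneousSubmodule (Fin 3) K)
    (a := s) hm h
  simpa only [hd] using this

theorem hc_mul_not_le (s : MvPolynomial (Fin 3) K) {f : MvPolynomial (Fin 3) K} {m n : ℕ}
    (hf : f.IsHomogeneous m) (h : ¬ m ≤ n) :
    homogeneousComponent n (s * f) = 0 := by
  classical
  let _ := MvPolynomial.gradedAlgebra (σ := Fin 3) (R := K)
  have hd : ∀ (φ : MvPolynomial (Fin 3) K) (i : ℕ),
      (DirectSum.decompose (homogeneousSubmodule (Fin 3) K) φ i : MvPolynomial (Fin 3) K) =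
        homogeneousComponent i φ := fun φ i => decomposition.decompose'_apply φ i
  have hm : f ∈ homogeneousSubmodule (Fin 3) K m := hf
  have := DirectSum.coe_decompose_mul_of_right_mem_of_not_le (homogeneousSubmodule (Fin 3) K)
    (a := s) hm h
  simpa only [hd] using this

theorem comp_mul (s : MvPolynomial (Fin 3) K) (j p q r : ℕ) :
    ∃ G : MvPolynomial (Fin 3) K, G.IsHomogeneous (j - (p + q + r)) ∧
      (p + q + r ≤ j ∨ G = 0) ∧ homogeneousComponent j (s * mono K p q r) = mono K p q r * G := by
  by_cases h : p + q + r ≤ j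
  · refine ⟨homogeneousComponent (j - (p + q + r)) s, homogeneousComponent_isHomogeneous _ _,
      Or.inl h, ?_⟩
    rw [hc_mul_le _ (mono_hom p q r) h, mul_comm]
  · refine ⟨0, isHomogeneous_zero _ _ _, Or.inr rfl, ?_⟩
    rw [mul_zero, hc_mul_not_le _ (mono_hom p q r) h]

/-- the ideal -/
noncomputable def Id (K : Type*) [Field K] (a b c α β γ : ℕ) : Ideal (MvPolynomial (Fin 3) K) :=
  Ideal.span {mono K a 0 0, mono K 0 b 0, mono K 0 0 c, mono K α β γ}

theorem mem_Id_hom {h : MvPolynomial (Fin 3) K} {j : ℕ} (hh : h.IsHomogeneous j)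
    (hI : h ∈ Id K a b c α β γ) : ∃ s1 s2 s3 s4 : MvPolynomial (Fin 3) K,
      (s1.IsHomogeneous (j - (a + 0 + 0)) ∧ (a + 0 + 0 ≤ j ∨ s1 = 0)) ∧
      (s2.IsHomogeneous (j - (0 + b + 0)) ∧ (0 + b + 0 ≤ j ∨ s2 = 0)) ∧
      (s3.IsHomogeneous (j - (0 + 0 + c)) ∧ (0 + 0 + c ≤ j ∨ s3 = 0)) ∧
      (s4.IsHomogeneous (j - (α + β + γ)) ∧ (α + β + γ ≤ j ∨ s4 = 0)) ∧
      h = mono K a 0 0 * s1 + mono K 0 b 0 * s2 + mono K 0 0 c * s3 + mono K α β γ * s4 := by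
  unfold Id at hI
  obtain ⟨t1, z1, hz1, rfl⟩ := Ideal.mem_span_insert.1 hI
  obtain ⟨t2, z2, hz2, rfl⟩ := Ideal.mem_span_insert.1 hz1
  obtain ⟨t3, z3, hz3, rfl⟩ := Ideal.mem_span_insert.1 hz2
  obtain ⟨t4, rfl⟩ := Ideal.mem_span_singleton'.1 hz3
  obtain ⟨s1, a1, b1, c1⟩ := comp_mul t1 j a 0 0
  obtain ⟨s2, a2, b2, c2⟩ := comp_mul t2 j 0 b 0
  obtain ⟨s3, a3, b3, c3⟩ := comp_mul t3 j 0 0 c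
  obtain ⟨s4, a4, b4, c4⟩ := comp_mul t4 j α β γ
  refine ⟨s1, s2, s3, s4, ⟨a1, b1⟩, ⟨a2, b2⟩, ⟨a3, b3⟩, ⟨a4, b4⟩, ?_⟩
  rw [← homogeneousComponent_eq_self hh, map_add, map_add, map_add, c1, c2, c3, c4]
  ring

theorem key_div [Infinite K] {s G : MvPolynomial (Fin 3) K} {P : Polynomial K} {w : K}
    {j p q r p' q' r' : ℕ}
    (hs : s.IsHomogeneous (j - (p + q + r)))
    (hG : G.IsHomogeneous (j - (p' + q' + r'))) (hG0 : p' + q' + r' ≤ j ∨ G = 0)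
    (hP : rho K (mono K p' q' r' * G) = P)
    (hsP : rho K (mono K p q r * s) = Polynomial.C w * P)
    (hw : w ≠ 0 → p ≤ p' ∧ q ≤ q' ∧ r ≤ r') :
    ∃ t, mono K p q r * s = C w * (mono K p' q' r' * G) + Lf K * (mono K p q r * t) := by
  have : ∃ H : MvPolynomial (Fin 3) K, H.IsHomogeneous (j - (p + q + r)) ∧
      C w * (mono K p' q' r' * G) = mono K p q r * H := by
    by_cases hw0 : w = 0
    · exact ⟨0, isHomogeneous_zero _ _ _, by simp [hw0]⟩
    rcases hG0 with hG0 | rfl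
    swap
    · exact ⟨0, isHomogeneous_zero _ _ _, by simp⟩
    obtain ⟨h1, h2, h3⟩ := hw hw0
    refine ⟨C w * (mono K (p' - p) (q' - q) (r' - r) * G), ?_, ?_⟩
    · apply IsHomogeneous.C_mul
      have := (mono_hom (K := K) (p' - p) (q' - q) (r' - r)).mul hG
      rwa [show p' - p + (q' - q) + (r' - r) + (j - (p' + q' + r')) = j - (p + q + r) by omega]
        at this
    · have := mono_mul (K := K) p q r (p' - p) (q' - q) (r' - r)
      rw [show p + (p' - p) = p' by omega, show q + (q' - q) = q' by omega,
        show r + (r' - r) = r' by omega] at this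
      rw [this]; ring
  obtain ⟨H, hH, hHe⟩ := this
  have hr : rho K (s - H) = 0 := by
    apply (mul_eq_zero.1 _).resolve_left (rho_mono_ne (K := K) p q r)
    rw [← map_mul, mul_sub, ← hHe, map_sub, hsP, map_mul, hP, rho_C, sub_self]
  obtain ⟨t, ht⟩ := Lf_dvd (hs.sub hH) hr
  refine ⟨t, ?_⟩
  rw [hHe]
  linear_combination mono K p q r * ht

theorem mono_mem_Id : mono K a 0 0 ∈ Id K a b c α β γ ∧ mono K 0 b 0 ∈ Id K a b c α β γ ∧
    mono K 0 0 c ∈ Id K a b c α β γ ∧ mono K α β γ ∈ Id K a b c α β γ := by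
  refine ⟨?_, ?_, ?_, ?_⟩ <;> exact Ideal.subset_span (by simp)

theorem surj_of [Infinite K] {d : ℕ} (hJ : Cs K (d + 1) 0 0 0 ≤ J K a b c α β γ (d + 1))
    {F : MvPolynomial (Fin 3) K} (hF : F.IsHomogeneous (d + 1)) :
    ∃ G : MvPolynomial (Fin 3) K, G.IsHomogeneous d ∧ Lf K * G - F ∈ Id K a b c α β γ := by
  have hm : rho K F ∈ Cs K (d + 1) 0 0 0 := by
    have := rho_mem (j := d + 1) (p := 0) (q := 0) (r := 0) (by simpa using hF)
      (Or.inl (Nat.zero_le _))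
    simpa [mono] using this
  obtain ⟨P1, h1, P2, h2, P3, h3, P4, h4, he⟩ := mem_J.1 (hJ hm)
  obtain ⟨G1, a1, b1, c1⟩ := lift_Cs h1
  obtain ⟨G2, a2, b2, c2⟩ := lift_Cs h2
  obtain ⟨G3, a3, b3, c3⟩ := lift_Cs h3
  obtain ⟨G4, a4, b4, c4⟩ := lift_Cs h4
  have hh := (((hF.sub (mono_mul_hom a1 b1)).sub (mono_mul_hom a2 b2)).sub
    (mono_mul_hom a3 b3)).sub (mono_mul_hom a4 b4)
  obtain ⟨G, hG⟩ := Lf_dvd hh (by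
    simp only [map_sub, c1, c2, c3, c4, ← he]; ring)
  refine ⟨homogeneousComponent d G, homogeneousComponent_isHomogeneous _ _, ?_⟩
  have hc : homogeneousComponent (d + 1) (Lf K * G) = Lf K * homogeneousComponent d G := by
    rw [mul_comm, hc_mul_le _ Lf_hom (by omega), mul_comm, Nat.add_sub_cancel]
  rw [← hc, ← hG, homogeneousComponent_eq_self hh]
  obtain ⟨m1, m2, m3, m4⟩ :=
    mono_mem_Id (K := K) (a := a) (b := b) (c := c) (α := α) (β := β) (γ := γ)
  have := Ideal.add_mem _ (Ideal.add_mem _ (Ideal.mul_mem_right G1 _ m1)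
    (Ideal.mul_mem_right G2 _ m2)) (Ideal.add_mem _ (Ideal.mul_mem_right G3 _ m3)
    (Ideal.mul_mem_right G4 _ m4))
  have := (Id K a b c α β γ).neg_mem this
  convert! this using 1
  ring

theorem inj_of [CharZero K] {d : ℕ} (hα : α ≤ a) (hβ : β ≤ b) (hγ : γ ≤ c)
    (h3 : (a + b + c + α + β + γ) % 3 ≠ 0)
    (hJ : ¬ Cs K (d + 1) 0 0 0 ≤ J K a b c α β γ (d + 1))
    {g : MvPolynomial (Fin 3) K} (hg : g.IsHomogeneous d) (hI : Lf K * g ∈ Id K a b c α β γ) :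
    g ∈ Id K a b c α β γ := by
  have hLg : (Lf K * g).IsHomogeneous (d + 1) := by
    have := (Lf_hom (K := K)).mul hg
    rwa [add_comm 1] at this
  obtain ⟨s1, s2, s3, s4, ⟨a1, b1⟩, ⟨a2, b2⟩, ⟨a3, b3⟩, ⟨a4, b4⟩, hs⟩ := mem_Id_hom hLg hI
  have m1 := rho_mem a1 b1
  have m2 := rho_mem a2 b2
  have m3 := rho_mem a3 b3
  have m4 := rho_mem a4 b4
  have hsum := congrArg (rho K) hs
  rw [map_mul, rho_Lf, zero_mul, map_add, map_add, map_add] at hsum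
  set u : Fin 3 → Polynomial K := ![rho K (mono K a 0 0 * s1), rho K (mono K 0 b 0 * s2),
    rho K (mono K 0 0 c * s3)] with hu
  have huM : u ∈ M K a b c α β γ (d + 1) := by
    refine ⟨m1, m2, m3, ?_⟩
    have := neg_mem m4
    convert! this using 1
    show rho K (mono K a 0 0 * s1) + rho K (mono K 0 b 0 * s2) + rho K (mono K 0 0 c * s3) = _
    linear_combination -hsum
  obtain ⟨w, P, hw, hP0⟩ : ∃ (w : Fin 3 → K) (P : Polynomial K),
      (∀ i, u i = Polynomial.C (w i) * P) ∧ P ∈ Cs K (d + 1) 0 0 0 := by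
    obtain ⟨w, P, hw⟩ := main_uni hα hβ hγ h3 hJ huM
    by_cases hall : ∀ i, w i = 0
    · exact ⟨w, 0, fun i => by rw [hw i, hall i]; simp, zero_mem _⟩
    push Not at hall
    obtain ⟨i, hi⟩ := hall
    refine ⟨w, P, hw, Cs_of_C_mul hi ?_⟩
    rw [← hw i]
    fin_cases i
    · exact Cs_mono m1 le_rfl (Nat.zero_le _) le_rfl le_rfl
    · exact Cs_mono m2 le_rfl le_rfl (Nat.zero_le _) le_rfl
    · exact Cs_mono m3 le_rfl le_rfl le_rfl (Nat.zero_le _)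
  have w1 : rho K (mono K a 0 0 * s1) = Polynomial.C (w 0) * P := hw 0
  have w2 : rho K (mono K 0 b 0 * s2) = Polynomial.C (w 1) * P := hw 1
  have w3 : rho K (mono K 0 0 c * s3) = Polynomial.C (w 2) * P := hw 2
  have w4 : rho K (mono K α β γ * s4) = Polynomial.C (-(w 0 + w 1 + w 2)) * P := by
    rw [w1, w2, w3] at hsum
    simp only [Polynomial.C_neg, Polynomial.C_add]
    linear_combination -hsum
  set w' := -(w 0 + w 1 + w 2) with hw'
  classical
  have hdeg : ∀ {v : K} {p q r : ℕ}, Polynomial.C v * P ∈ Cs K (d + 1) p q r →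
      P ∈ Cs K (d + 1) 0 0 0 → P ∈ Cs K (d + 1) (if v = 0 then 0 else p) (if v = 0 then 0 else q)
        (if v = 0 then 0 else r) := by
    intro v p q r h h'
    by_cases hv : v = 0
    · simpa [hv] using h'
    · simpa [hv] using Cs_of_C_mul hv h
  rw [w1] at m1
  rw [w2] at m2
  rw [w3] at m3
  rw [w4] at m4
  have hmax := Cs_sup (Cs_sup (hdeg m1 hP0) (hdeg m2 hP0)) (Cs_sup (hdeg m3 hP0) (hdeg m4 hP0))
  obtain ⟨G, hG, hG0, hGP⟩ := lift_Cs hmax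
  obtain ⟨t1, ht1⟩ := key_div a1 hG hG0 hGP w1 (by intro h; simp [h])
  obtain ⟨t2, ht2⟩ := key_div a2 hG hG0 hGP w2 (by intro h; simp [h])
  obtain ⟨t3, ht3⟩ := key_div a3 hG hG0 hGP w3 (by intro h; simp [h])
  obtain ⟨t4, ht4⟩ := key_div a4 hG hG0 hGP w4 (by intro h; simp [h])
  obtain ⟨m1, m2, m3, m4⟩ :=
    mono_mem_Id (K := K) (a := a) (b := b) (c := c) (α := α) (β := β) (γ := γ)
  have := Ideal.add_mem _ (Ideal.add_mem _ (Ideal.mul_mem_right t1 _ m1)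
    (Ideal.mul_mem_right t2 _ m2)) (Ideal.add_mem _ (Ideal.mul_mem_right t3 _ m3)
    (Ideal.mul_mem_right t4 _ m4))
  convert! this using 1
  apply mul_left_cancel₀ (Lf_ne (K := K))
  rw [hs, ht1, ht2, ht3, ht4, hw']
  simp only [C_neg, C_add]
  ring

theorem wlp_of [CharZero K] (hα : α ≤ a) (hβ : β ≤ b) (hγ : γ ≤ c)
    (h3 : (a + b + c + α + β + γ) % 3 ≠ 0) : hasWLP 3 K (Id K a b c α β γ) := by
  refine ⟨Lf K, Lf_hom, fun d => ?_⟩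
  by_cases hJ : Cs K (d + 1) 0 0 0 ≤ J K a b c α β γ (d + 1)
  · right
    rintro _ ⟨F, hF, rfl⟩
    obtain ⟨G, hG, hm⟩ := surj_of hJ hF
    refine ⟨_, ⟨G, hG, rfl⟩, ?_⟩
    show Ideal.Quotient.mk _ (Lf K) * Ideal.Quotient.mk _ G = Ideal.Quotient.mk _ F
    rw [← map_mul, Ideal.Quotient.eq]
    exact hm
  · left
    rintro _ ⟨g, hg, rfl⟩ h
    change Ideal.Quotient.mk _ (Lf K) * Ideal.Quotient.mk _ g = 0 at h
    show Ideal.Quotient.mk _ g = 0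
    rw [← map_mul, Ideal.Quotient.eq_zero_iff_mem] at h
    rw [Ideal.Quotient.eq_zero_iff_mem]
    exact inj_of hα hβ hγ h3 hJ hg h

end WLPaux

/-- Over an algebraically closed field of characteristic zero, if
`I = (x^a, y^b, z^c, x^α y^β z^γ)` with `α, β, γ > 0` defines a level algebra
(`a-α = b-β = c-γ`) failing the WLP, then `a+b+c ≡ 0` and `α+β+γ ≡ 0 (mod 3)`. -/
theorem stmt_14 {K : Type*} [Field K] [IsAlgClosed K] [CharZero K]
    (a b c α β γ : ℕ) (hα0 : 0 < α) (hβ0 : 0 < β) (hγ0 : 0 < γ)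
    (hα : α < a) (hβ : β < b) (hγ : γ < c)
    (hlevel1 : a - α = b - β) (hlevel2 : b - β = c - γ) :
    ¬ hasWLP 3 K (Ideal.span {(X 0 : MvPolynomial (Fin 3) K) ^ a, X 1 ^ b, X 2 ^ c,
      X 0 ^ α * X 1 ^ β * X 2 ^ γ}) →
    (a + b + c) % 3 = 0 ∧ (α + β + γ) % 3 = 0 := by
  intro hW
  by_contra hc
  apply hW
  have h3 : (a + b + c + α + β + γ) % 3 ≠ 0 := by omega
  have := WLPaux.wlp_of (K := K) hα.le hβ.le hγ.le h3
  simpa [WLPaux.Id, WLPaux.mono] using this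
end

section
/- Let K be a field of characteristic zero and R = K[x,y,z]. Let I = (x^a, y^b, z^c, y^β z^γ) with a, b, c ≥ 1, 0 ≤ β < b, 0 ≤ γ < c (i.e., the non-pure monomial generator does not involve x). Then R/I has the WLP. -/
open MvPolynomial

namespace Stmt15

/-- A polynomial supported on at most `m` exponents with a root of multiplicity `m` at `1` is zero. -/
theorem sparse_eq_zero {K : Type*} [Field K] [CharZero K] (E : Finset ℕ) :
    ∀ (m : ℕ) (f : Polynomial K), E.card ≤ m → (∀ n, f.coeff n ≠ 0 → n ∈ E) →
      (Polynomial.X - 1) ^ m ∣ f → f = 0 := by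
  induction E using Finset.induction_on with
  | empty =>
    intro m f _ h _
    ext n
    by_contra hn
    simpa using h n hn
  | insert e E he ih =>
    intro m f hm hf hd
    rw [Finset.card_insert_of_notMem he] at hm
    obtain ⟨m, rfl⟩ : ∃ k, m = k + 1 := ⟨m - 1, by omega⟩
    have hcoeff : ∀ n : ℕ, (Polynomial.X * Polynomial.derivative f - Polynomial.C (e : K) * f).coeff n
        = ((n : K) - e) * f.coeff n := by
      intro n
      rw [Polynomial.coeff_sub, Polynomial.coeff_C_mul]
      cases n with
      | zero => simp
      | succ n => rw [Polynomial.coeff_X_mul, Polynomial.coeff_derivative]; push_cast; ring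
    have hD : Polynomial.X * Polynomial.derivative f - Polynomial.C (e : K) * f = 0 := by
      apply ih m _ (by omega)
      · intro n hn
        rw [hcoeff] at hn
        have h1 := hf n (right_ne_zero_of_mul hn)
        rcases Finset.mem_insert.1 h1 with rfl | h
        · simp at hn
        · exact h
      · apply dvd_sub
        · exact Dvd.dvd.mul_left (Polynomial.pow_sub_one_dvd_derivative_of_pow_dvd hd) _
        · exact Dvd.dvd.mul_left ((pow_dvd_pow _ (by omega)).trans hd) _
    have hz : ∀ n, n ≠ e → f.coeff n = 0 := by
      intro n hn
      have := hcoeff n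
      rw [hD, Polynomial.coeff_zero] at this
      rcases mul_eq_zero.1 this.symm with h | h
      · exact absurd (by exact_mod_cast sub_eq_zero.1 h) hn
      · exact h
    have hfe : f = Polynomial.monomial e (f.coeff e) := by
      ext n
      rw [Polynomial.coeff_monomial]
      split_ifs with h
      · rw [h]
      · exact hz n (Ne.symm h)
    obtain ⟨q, hq⟩ := hd
    have h1 : f.eval 1 = 0 := by rw [hq]; simp
    rw [hfe, Polynomial.eval_monomial] at h1
    simp at h1
    rw [hfe, h1]; simp

theorem dvd_iff_taylor {K : Type*} [Field K] (a : ℕ) (f : Polynomial K) :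
    (Polynomial.X - 1) ^ a ∣ f ↔ ∀ i < a, (Polynomial.taylor 1 f).coeff i = 0 := by
  have := Polynomial.X_sub_C_pow_dvd_iff (p := f) (t := (1 : K)) (n := a)
  rw [Polynomial.C_1] at this
  rw [this, Polynomial.X_pow_dvd_iff]
  simp [Polynomial.taylor_apply]

theorem sparse_surj {K : Type*} [Field K] [CharZero K] (E : Finset ℕ) (a : ℕ) (ha : a ≤ E.card)
    (g : Polynomial K) : ∃ p : Polynomial K, (∀ n, p.coeff n ≠ 0 → n ∈ E) ∧
      (Polynomial.X - 1) ^ a ∣ g - p := by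
  obtain ⟨F, hFE, hF⟩ := Finset.exists_subset_card_eq ha
  let S : (F → K) →ₗ[K] Polynomial K :=
    ∑ e : F, (Polynomial.monomial (e : ℕ)).comp (LinearMap.proj e)
  have hS : ∀ v n, (S v).coeff n = if h : n ∈ F then v ⟨n, h⟩ else 0 := by
    intro v n
    simp only [S, LinearMap.sum_apply, LinearMap.comp_apply, LinearMap.proj_apply,
      Polynomial.finsetSum_coeff, Polynomial.coeff_monomial]
    split_ifs with h
    · rw [Finset.sum_eq_single ⟨n, h⟩]
      · simp
      · intro b _ hb
        rw [if_neg]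
        intro h'
        exact hb (Subtype.ext h')
      · simp
    · apply Finset.sum_eq_zero
      intro b _
      rw [if_neg]
      rintro rfl
      exact h b.2
  have hSF : ∀ v n, (S v).coeff n ≠ 0 → n ∈ F := by
    intro v n h
    rw [hS] at h
    by_contra h'
    simp [h'] at h
  let T : Polynomial K →ₗ[K] (Fin a → K) :=
    LinearMap.pi fun i => (Polynomial.lcoeff K (i : ℕ)).comp (Polynomial.taylor 1)
  have hT : ∀ f, T f = 0 ↔ (Polynomial.X - 1) ^ a ∣ f := by
    intro f
    rw [dvd_iff_taylor]
    constructor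
    · intro h i hi
      exact congrFun h ⟨i, hi⟩
    · intro h
      funext i
      exact h i i.2
  have hinj : Function.Injective (T.comp S) := by
    rw [← LinearMap.ker_eq_bot, LinearMap.ker_eq_bot']
    intro v hv
    have := sparse_eq_zero F a (S v) hF.le (hSF v) ((hT _).1 hv)
    funext e
    have h2 := hS v e
    rw [this] at h2
    simpa using h2.symm
  have hsurj : Function.Surjective (T.comp S) := by
    rw [← LinearMap.injective_iff_surjective_of_finrank_eq_finrank]
    · exact hinj
    · simp [hF]
  obtain ⟨v, hv⟩ := hsurj (T g)
  refine ⟨S v, fun n hn => hFE (hSF v n hn), (hT _).1 ?_⟩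
  rw [map_sub, ← hv]
  simp

section

variable {K : Type*} [Field K]

/-- The exponent condition for the ideal `(y^b, z^c, y^β z^γ)`. -/
def InJ (b c β γ j k : ℕ) : Prop := b ≤ j ∨ c ≤ k ∨ (β ≤ j ∧ γ ≤ k)

theorem InJ.mono {b c β γ j k j' k' : ℕ} (h : InJ b c β γ j k) (hj : j ≤ j') (hk : k ≤ k') :
    InJ b c β γ j' k' := by
  unfold InJ at *; omega

theorem mem_J (b c β γ : ℕ) (f : MvPolynomial (Fin 3) K) :
    f ∈ Ideal.span {(X 1 : MvPolynomial (Fin 3) K) ^ b, X 2 ^ c, X 1 ^ β * X 2 ^ γ} ↔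
      ∀ m ∈ f.support, InJ b c β γ (m 1) (m 2) := by
  have : ({(X 1 : MvPolynomial (Fin 3) K) ^ b, X 2 ^ c, X 1 ^ β * X 2 ^ γ} : Set _) =
      (fun s => monomial s (1 : K)) '' {Finsupp.single 1 b, Finsupp.single 2 c,
        Finsupp.single 1 β + Finsupp.single 2 γ} := by
    simp only [Set.image_insert_eq, Set.image_singleton, X_pow_eq_monomial, monomial_mul, one_mul]
  rw [this, mem_ideal_span_monomial_image]
  refine forall₂_congr fun m _ => ?_
  simp [InJ, Finsupp.le_def, Fin.forall_fin_succ]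

theorem mem_I (a b c β γ : ℕ) (f : MvPolynomial (Fin 3) K) :
    f ∈ Ideal.span {(X 0 : MvPolynomial (Fin 3) K) ^ a, X 1 ^ b, X 2 ^ c, X 1 ^ β * X 2 ^ γ} ↔
      ∀ m ∈ f.support, a ≤ m 0 ∨ InJ b c β γ (m 1) (m 2) := by
  have : ({(X 0 : MvPolynomial (Fin 3) K) ^ a, X 1 ^ b, X 2 ^ c, X 1 ^ β * X 2 ^ γ} : Set _) =
      (fun s => monomial s (1 : K)) '' {Finsupp.single 0 a, Finsupp.single 1 b, Finsupp.single 2 c,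
        Finsupp.single 1 β + Finsupp.single 2 γ} := by
    simp only [Set.image_insert_eq, Set.image_singleton, X_pow_eq_monomial, monomial_mul, one_mul]
  rw [this, mem_ideal_span_monomial_image]
  refine forall₂_congr fun m _ => ?_
  simp [InJ, Finsupp.le_def, Fin.forall_fin_succ]

/-- The linear form `x - y + z`. -/
noncomputable def Lf (K : Type*) [Field K] : MvPolynomial (Fin 3) K := X 0 - (X 1 - X 2)

theorem Lf_hom : (Lf K).IsHomogeneous 1 :=
  (isHomogeneous_X K 0).sub ((isHomogeneous_X K 1).sub (isHomogeneous_X K 2))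

/-- Dehomogenization `x ↦ t - 1`, `y ↦ t`, `z ↦ 1`. -/
noncomputable def psi (K : Type*) [Field K] : MvPolynomial (Fin 3) K →ₐ[K] Polynomial K :=
  aeval ![Polynomial.X - 1, Polynomial.X, 1]

/-- Substitution `x ↦ y - z`. -/
noncomputable def rho (K : Type*) [Field K] : MvPolynomial (Fin 3) K →ₐ[K] MvPolynomial (Fin 2) K :=
  aeval ![X 0 - X 1, X 0, X 1]

theorem dvd_sub_rho (f : MvPolynomial (Fin 3) K) : Lf K ∣ f - rename Fin.succ (rho K f) := by
  rw [← Ideal.mem_span_singleton, ← Ideal.Quotient.mk_eq_mk_iff_sub_mem]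
  have : (Ideal.Quotient.mkₐ K (Ideal.span {Lf K})) =
      (Ideal.Quotient.mkₐ K (Ideal.span {Lf K})).comp ((rename Fin.succ).comp (rho K)) := by
    apply MvPolynomial.algHom_ext
    intro i
    fin_cases i
    · simp only [rho, AlgHom.comp_apply, aeval_X, Ideal.Quotient.mkₐ_eq_mk]
      rw [Ideal.Quotient.mk_eq_mk_iff_sub_mem, Ideal.mem_span_singleton]
      simp [Lf]
    · simp [rho]
    · simp [rho]
  exact DFunLike.congr_fun this f

theorem psi_eq (f : MvPolynomial (Fin 3) K) :
    aeval ![Polynomial.X, 1] (rho K f) = psi K f := by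
  have : (aeval ![Polynomial.X, (1 : Polynomial K)]).comp (rho K) = psi K := by
    apply MvPolynomial.algHom_ext
    intro i
    fin_cases i <;> simp [rho, psi]
  exact DFunLike.congr_fun this f

theorem rho_hom {f : MvPolynomial (Fin 3) K} {n : ℕ} (hf : f.IsHomogeneous n) :
    (rho K f).IsHomogeneous n := by
  have := hf.aeval (n := 1) ![(X 0 - X 1 : MvPolynomial (Fin 2) K), X 0, X 1] (by
    intro i
    fin_cases i
    · exact (isHomogeneous_X K 0).sub (isHomogeneous_X K 1)
    · exact isHomogeneous_X K 0
    · exact isHomogeneous_X K 1)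
  rwa [one_mul] at this

theorem dvd_of_psi {f : MvPolynomial (Fin 3) K} {n : ℕ} (hf : f.IsHomogeneous n)
    (h : psi K f = 0) : Lf K ∣ f := by
  have h1 := Polynomial.homogenize_eq_of_isHomogeneous (rho_hom hf) (psi_eq f)
  rw [h, Polynomial.homogenize_zero] at h1
  have := dvd_sub_rho f
  rwa [← h1, map_zero, sub_zero] at this

theorem psi_natDegree {f : MvPolynomial (Fin 3) K} {n : ℕ} (hf : f.IsHomogeneous n) :
    (psi K f).natDegree ≤ n := by
  have := aeval_natDegree_le (m := n) (n := 1) f hf.totalDegree_le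
    ![(Polynomial.X - 1 : Polynomial K), Polynomial.X, 1] (by
    intro i
    fin_cases i
    · exact (Polynomial.natDegree_X_sub_C (1 : K)).le
    · simp
    · simp)
  rwa [mul_one] at this

/-- Homogenization in the variables `y, z`. -/
noncomputable def hg (p : Polynomial K) (n : ℕ) : MvPolynomial (Fin 3) K :=
  rename Fin.succ (p.homogenize n)

theorem hg_hom (p : Polynomial K) (n : ℕ) : (hg p n).IsHomogeneous n :=
  IsHomogeneous.rename_isHomogeneous (Polynomial.isHomogeneous_homogenize p)

theorem psi_hg {p : Polynomial K} {n : ℕ} (hp : p.natDegree ≤ n) : psi K (hg p n) = p := by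
  rw [hg, psi, aeval_rename]
  exact Polynomial.aeval_homogenize_X_one p hp

theorem hg_mem_J {b c β γ : ℕ} (p : Polynomial K) (n : ℕ)
    (hp : ∀ e, p.coeff e ≠ 0 → e ≤ n → InJ b c β γ e (n - e)) :
    hg p n ∈ Ideal.span {(X 1 : MvPolynomial (Fin 3) K) ^ b, X 2 ^ c, X 1 ^ β * X 2 ^ γ} := by
  rw [mem_J]
  intro m hm
  rw [mem_support_iff, hg] at hm
  obtain ⟨u, rfl, hu⟩ := coeff_rename_ne_zero _ _ _ hm
  rw [Polynomial.coeff_homogenize] at hu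
  have e1 : (Finsupp.mapDomain Fin.succ u) 1 = u 0 :=
    Finsupp.mapDomain_apply (Fin.succ_injective 2) u 0
  have e2 : (Finsupp.mapDomain Fin.succ u) 2 = u 1 :=
    Finsupp.mapDomain_apply (Fin.succ_injective 2) u 1
  rw [e1, e2]
  split_ifs at hu with h
  · have := hp _ hu (by omega)
    rwa [← h, Nat.add_sub_cancel_left] at this
  · exact absurd rfl hu

theorem psi_J {b c β γ n : ℕ} {f : MvPolynomial (Fin 3) K} (hf : f.IsHomogeneous n)
    (hJ : ∀ m ∈ f.support, InJ b c β γ (m 1) (m 2)) (e : ℕ) (he : (psi K f).coeff e ≠ 0) :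
    e ≤ n ∧ InJ b c β γ e (n - e) := by
  rw [f.as_sum, map_sum, Polynomial.finsetSum_coeff] at he
  obtain ⟨m, hm, hme⟩ := Finset.exists_ne_zero_of_sum_ne_zero he
  have hdeg : m 0 + m 1 + m 2 = n := by
    have := hf (mem_support_iff.1 hm)
    rw [← this]
    simp [Finsupp.weight_apply, Finsupp.sum_fintype, Fin.sum_univ_succ, add_assoc]
  have h1 : psi K (monomial m (coeff m f)) =
      Polynomial.C (coeff m f) * ((Polynomial.X - 1) ^ (m 0) * Polynomial.X ^ (m 1)) := by
    rw [psi, aeval_monomial, Finsupp.prod_fintype _ _ (by simp)]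
    simp [Fin.prod_univ_succ]
  rw [h1, Polynomial.coeff_C_mul, Polynomial.coeff_mul_X_pow'] at hme
  have h2 := right_ne_zero_of_mul hme
  split_ifs at h2 with h3
  · have h4 : e - m 1 ≤ m 0 := by
      by_contra h5
      apply h2
      apply Polynomial.coeff_eq_zero_of_natDegree_lt
      have : ((Polynomial.X - 1 : Polynomial K) ^ (m 0)).natDegree ≤ m 0 := by
        refine Polynomial.natDegree_pow_le.trans ?_
        have := Polynomial.natDegree_X_sub_C (1 : K)
        rw [Polynomial.C_1] at this
        rw [this, mul_one]
      omega
    exact ⟨by omega, (hJ m hm).mono h3 (by omega)⟩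
  · exact absurd rfl h2

theorem X_pow_mul_mem_J {b c β γ n : ℕ} {f : MvPolynomial (Fin 3) K}
    (h : X 0 ^ n * f ∈
      Ideal.span {(X 1 : MvPolynomial (Fin 3) K) ^ b, X 2 ^ c, X 1 ^ β * X 2 ^ γ}) :
    f ∈ Ideal.span {(X 1 : MvPolynomial (Fin 3) K) ^ b, X 2 ^ c, X 1 ^ β * X 2 ^ γ} := by
  rw [mem_J] at *
  intro m hm
  have := h (Finsupp.single 0 n + m) (by
    rw [mem_support_iff, X_pow_eq_monomial, coeff_monomial_mul, one_mul]
    exact mem_support_iff.1 hm)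
  simpa using this

theorem Lf_mul_mem_J {b c β γ : ℕ} {f : MvPolynomial (Fin 3) K}
    (h : Lf K * f ∈
      Ideal.span {(X 1 : MvPolynomial (Fin 3) K) ^ b, X 2 ^ c, X 1 ^ β * X 2 ^ γ}) :
    f ∈ Ideal.span {(X 1 : MvPolynomial (Fin 3) K) ^ b, X 2 ^ c, X 1 ^ β * X 2 ^ γ} := by
  set J := Ideal.span {(X 1 : MvPolynomial (Fin 3) K) ^ b, X 2 ^ c, X 1 ^ β * X 2 ^ γ} with hJ
  have h1 : (X 1 - X 2 : MvPolynomial (Fin 3) K) ^ (b + c) ∈ J := by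
    rw [sub_eq_add_neg]
    apply Ideal.add_pow_mem_of_pow_mem_of_le (m := b) (n := c)
    · exact Ideal.subset_span (by simp)
    · rw [neg_pow]
      exact Ideal.mul_mem_left _ _ (Ideal.subset_span (by simp))
    · omega
  apply X_pow_mul_mem_J (n := b + c)
  obtain ⟨q, hq⟩ := sub_dvd_pow_sub_pow (X 0 : MvPolynomial (Fin 3) K) (X 1 - X 2) (b + c)
  have : (X 0 : MvPolynomial (Fin 3) K) ^ (b + c) * f =
      q * (Lf K * f) + f * (X 1 - X 2) ^ (b + c) := by
    rw [Lf]
    linear_combination f * hq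
  rw [this]
  exact J.add_mem (J.mul_mem_left _ h) (J.mul_mem_left _ h1)

theorem exists_hom_quot {f : MvPolynomial (Fin 3) K} {d : ℕ} (hf : f.IsHomogeneous (d + 1))
    (h : Lf K ∣ f) : ∃ q : MvPolynomial (Fin 3) K, q.IsHomogeneous d ∧ f = Lf K * q := by
  obtain ⟨q, rfl⟩ := h
  refine ⟨homogeneousComponent d q, homogeneousComponent_isHomogeneous d q, ?_⟩
  rw [← homogeneousComponent_eq_self hf]
  conv_lhs => rw [← sum_homogeneousComponent q, Finset.mul_sum, map_sum]
  have : ∀ i, homogeneousComponent (d + 1) (Lf K * homogeneousComponent i q) =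
      if d = i then Lf K * homogeneousComponent i q else 0 := by
    intro i
    have := Lf_hom.mul (homogeneousComponent_isHomogeneous i q)
    rw [homogeneousComponent_of_mem this]
    congr 1
    simp only [eq_iff_iff]
    omega
  simp only [this, Finset.sum_ite_eq]
  split_ifs with h
  · rfl
  · rw [homogeneousComponent_eq_zero, mul_zero]
    simp at h
    omega

end

end Stmt15

open Stmt15 in
/-- In characteristic zero, `R/(x^a, y^b, z^c, y^β z^γ)` has the WLP. -/
theorem stmt_15 {K : Type*} [Field K] [CharZero K]
    (a b c β γ : ℕ) (ha : 1 ≤ a) (hb : 1 ≤ b) (hc : 1 ≤ c) (hβ : β < b) (hγ : γ < c) :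
    hasWLP 3 K (Ideal.span {(X 0 : MvPolynomial (Fin 3) K) ^ a, X 1 ^ b, X 2 ^ c,
      X 1 ^ β * X 2 ^ γ}) := by
  classical
  set I := Ideal.span {(X 0 : MvPolynomial (Fin 3) K) ^ a, X 1 ^ b, X 2 ^ c,
      X 1 ^ β * X 2 ^ γ} with hI
  have hJI : Ideal.span {(X 1 : MvPolynomial (Fin 3) K) ^ b, X 2 ^ c, X 1 ^ β * X 2 ^ γ} ≤ I :=
    Ideal.span_mono (Set.subset_insert _ _)
  have hxI : (X 0 : MvPolynomial (Fin 3) K) ^ a ∈ I := Ideal.subset_span (by simp)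
  refine ⟨Lf K, Lf_hom, fun d => ?_⟩
  let E : Finset ℕ := {e ∈ Finset.range (d + 2) | InJ b c β γ e (d + 1 - e)}
  have hE : ∀ e, e ∈ E ↔ e ≤ d + 1 ∧ InJ b c β γ e (d + 1 - e) := by
    intro e
    simp only [E, Finset.mem_filter, Finset.mem_range]
    constructor <;> rintro ⟨h1, h2⟩ <;> exact ⟨by omega, h2⟩
  rcases le_total E.card a with hcard | hcard
  · left
    rintro _ ⟨f, hf, rfl⟩ hLf
    have hf : f.IsHomogeneous d := hf
    change Ideal.Quotient.mk I (Lf K) * Ideal.Quotient.mk I f = 0 at hLf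
    change Ideal.Quotient.mk I f = 0
    rw [← map_mul, Ideal.Quotient.eq_zero_iff_mem] at hLf
    rw [Ideal.Quotient.eq_zero_iff_mem]
    have hP : (Lf K * f).IsHomogeneous (d + 1) := by
      rw [add_comm]; exact Lf_hom.mul hf
    set P := Lf K * f with hPdef
    let s : Fin 3 →₀ ℕ := Finsupp.single 0 a
    have hdecomp := divMonomial_add_modMonomial P s
    set g := divMonomial P s with hgdef
    set j := modMonomial P s with hjdef
    have hjcoeff : ∀ m, coeff m j ≠ 0 → ¬ s ≤ m ∧ coeff m P ≠ 0 := by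
      intro m hm
      have h1 : ¬ s ≤ m := fun h => hm (coeff_modMonomial_of_le P h)
      refine ⟨h1, ?_⟩
      rwa [hjdef, coeff_modMonomial_of_not_le P h1] at hm
    have hjJ : ∀ m ∈ j.support, InJ b c β γ (m 1) (m 2) := by
      intro m hm
      obtain ⟨h1, h2⟩ := hjcoeff m (mem_support_iff.1 hm)
      rcases (mem_I a b c β γ P).1 hLf m (mem_support_iff.2 h2) with h | h
      · exact absurd (Finsupp.single_le_iff.2 h) h1
      · exact h
    have hjhom : j.IsHomogeneous (d + 1) := fun m hm => hP (hjcoeff m hm).2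
    have hghom : g.IsHomogeneous (d + 1 - a) := by
      intro m hm
      rw [hgdef, coeff_divMonomial] at hm
      have := hP hm
      rw [map_add] at this
      simp [s, Finsupp.weight_single] at this
      omega
    have hpsiL : psi K P = 0 := by
      rw [hPdef, map_mul]
      simp [psi, Lf]
    have hpsi : (Polynomial.X - 1) ^ a * psi K g + psi K j = 0 := by
      rw [← hpsiL, ← hdecomp, map_add, map_mul]
      congr 2
      rw [← X_pow_eq_monomial, map_pow]
      simp [psi]
    have hpj : psi K j = 0 := by
      apply sparse_eq_zero E a _ hcard
      · intro n hn
        exact (hE n).2 (psi_J hjhom hjJ n hn)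
      · exact ⟨- psi K g, by linear_combination hpsi⟩
    have hpg : psi K g = 0 := by
      rw [hpj, add_zero] at hpsi
      refine (mul_eq_zero.1 hpsi).resolve_left (pow_ne_zero _ ?_)
      exact Polynomial.X_sub_C_ne_zero (1 : K)
    obtain ⟨g', hg'⟩ := dvd_of_psi hghom hpg
    have hfin : f - X 0 ^ a * g' ∈
        Ideal.span {(X 1 : MvPolynomial (Fin 3) K) ^ b, X 2 ^ c, X 1 ^ β * X 2 ^ γ} := by
      apply Lf_mul_mem_J
      have : Lf K * (f - X 0 ^ a * g') = j := by
        rw [X_pow_eq_monomial]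
        have h3 : monomial s 1 * (Lf K * g') + j = Lf K * f := by
          rw [← hg', hdecomp]
        linear_combination -h3
      rw [this, mem_J]
      exact hjJ
    have : f = (f - X 0 ^ a * g') + g' * X 0 ^ a := by ring
    rw [this]
    exact I.add_mem (hJI hfin) (I.mul_mem_left _ hxI)
  · right
    rintro _ ⟨f, hf, rfl⟩
    have hf : f.IsHomogeneous (d + 1) := hf
    obtain ⟨p, hpE, q, hq⟩ := sparse_surj E a hcard (psi K f)
    have hpdeg : p.natDegree ≤ d + 1 := by
      rw [Polynomial.natDegree_le_iff_coeff_eq_zero]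
      intro n hn
      by_contra h
      have := ((hE n).1 (hpE n h)).1
      omega
    have hmonic : ((Polynomial.X - 1 : Polynomial K) ^ a).Monic :=
      (Polynomial.monic_X_sub_C (1 : K)).pow a
    have hmdeg : ((Polynomial.X - 1 : Polynomial K) ^ a).natDegree = a := by
      rw [Polynomial.natDegree_pow]
      have := Polynomial.natDegree_X_sub_C (1 : K)
      rw [Polynomial.C_1] at this
      rw [this, mul_one]
    obtain ⟨G, hG, hGpsi⟩ : ∃ G : MvPolynomial (Fin 3) K,
        (X 0 ^ a * G).IsHomogeneous (d + 1) ∧ psi K G = q := by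
      by_cases hq0 : q = 0
      · exact ⟨0, by simpa using isHomogeneous_zero _ _ _, by simp [hq0]⟩
      · have hdq : a + q.natDegree ≤ d + 1 := by
          have h1 : ((Polynomial.X - 1 : Polynomial K) ^ a * q).natDegree = a + q.natDegree := by
            rw [hmonic.natDegree_mul' hq0, hmdeg]
          rw [← h1, ← hq]
          exact (Polynomial.natDegree_sub_le _ _).trans (max_le (psi_natDegree hf) hpdeg)
        refine ⟨hg q (d + 1 - a), ?_, psi_hg (by omega)⟩
        have := (isHomogeneous_X_pow (R := K) (0 : Fin 3) a).mul (hg_hom q (d + 1 - a))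
        rwa [Nat.add_sub_cancel' (by omega)] at this
    have hdvd : Lf K ∣ f - hg p (d + 1) - X 0 ^ a * G := by
      apply dvd_of_psi ((hf.sub (hg_hom p (d + 1))).sub hG)
      rw [map_sub, map_sub, map_mul, map_pow, psi_hg hpdeg, hGpsi, hq]
      simp [psi]
    obtain ⟨Q, hQ, hQe⟩ := exists_hom_quot ((hf.sub (hg_hom p (d + 1))).sub hG) hdvd
    refine ⟨Ideal.Quotient.mk I Q, ⟨Q, hQ, rfl⟩, ?_⟩
    change _ = Ideal.Quotient.mk I f
    rw [← map_mul, ← hQe, Ideal.Quotient.mk_eq_mk_iff_sub_mem]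
    have : f - hg p (d + 1) - X 0 ^ a * G - f = -(hg p (d + 1) + G * X 0 ^ a) := by ring
    rw [this]
    refine I.neg_mem (I.add_mem (hJI (hg_mem_J p (d + 1) ?_)) (I.mul_mem_left _ hxI))
    intro e he _
    exact ((hE e).1 (hpE e he)).2
end
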